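/- Suppose ω(2δ) < 2ω(δ) for all sufficiently small δ > 0. Then there exists a real-valued, 2π-periodic function φ of class C^{1,ω}(𝕋) that is nowhere linear (not linear on any interval) and satisfies: (i) ‖e^{iλφ}‖_{A_1(𝕋)} ≤ c · (|λ|/log|λ|) · χ^{-1}((log|λ|)²/|λ|) for all real λ with |λ| ≥ 2; and (ii) for every p with 1 < p < 2, ‖e^{iλφ}‖_{A_p(𝕋)} ≤ c_p · (∫₁^{|λ|} (χ^{-1}(1/τ))^p dτ)^{1/p} for all real λ with |λ| ≥ 2. The positive constants c, c_p are independent of λ. -/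

import Mathlib

open MeasureTheory Real Set
open scoped ENNReal

/-- The k-th Fourier coefficient of a (2π-periodic) function on the circle,
identified with a function on [0, 2π]. -/
noncomputable def fourierCoef (f : ℝ → ℂ) (k : ℤ) : ℂ :=
  (1 / (2 * (Real.pi : ℂ))) *
    ∫ t in (0:ℝ)..(2 * Real.pi), f t * Complex.exp (-Complex.I * (k : ℂ) * (t : ℂ))

/-- The A_p(𝕋) norm: ℓ^p norm of the sequence of Fourier coefficients
(valued in ℝ≥0∞ so that divergence gives ∞). -/
noncomputable def ApNorm (p : ℝ) (f : ℝ → ℂ) : ℝ≥0∞ :=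
  (∑' k : ℤ, ((‖fourierCoef f k‖₊ : ℝ≥0∞) ^ p)) ^ (1 / p)

/-!
`φ'` is an infinite sum of small mean-zero waves, one inside each interval with rational endpoints.
Each wave is a localized copy of the staircase of a symmetric Cantor set whose `m`-th generation
intervals have length `l m` with `ω (l m) = θ / 2 ^ m`, so that the staircase has modulus of
continuity `O(ω)`; the doubling hypothesis is what gives `2 * l (m + 1) < l m`, i.e. that such a
Cantor set exists.

For the oscillatory integral at frequency `λ`, stop at the first generation `N` with
`λ * χ (l N) ≤ 1`. On a gap of length `g` of an earlier generation the phase is linear with slope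
`λ j / 2 ^ N`, and the integral is at most a multiple of `g / (1 + g |ξ - λ j / 2 ^ N|)`; the
Cantor intervals left over at generation `N` are short. Summing over gaps and over integer `ξ` gives
the `ℓ^p` bound for one wave, and the explicit form of `l N` and `2 ^ N` turns it into one in terms
of `χ⁻¹`.

Waves do not interact: each is placed where the sum of the previous ones is constant (the partial
sums are locally constant on a dense set), so there the earlier phase is affine and multiplying by
it merely shifts the Fourier transform of the new contribution. The contributions of the waves are
therefore bounded one at a time, uniformly in the shift, and the bounds decrease fast enough along
the sequence of waves to be summed.
-/

open Filter Topology

/-! ### Functions that are locally constant on a dense set -/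

/-- The points near which `g` is constant form a dense set. The corrections that make `φ` nonlinear
are placed at such points of the derivative built so far. -/
def DenselyConst {X Y : Type*} [TopologicalSpace X] (g : X → Y) : Prop :=
  Dense {x | EventuallyConst g (𝓝 x)}

namespace DenselyConst

section

variable {X Y Z W : Type*} [TopologicalSpace X] {g : X → Y} {f : X → Z}

lemma isOpen_setOf_eventuallyConst (g : X → Y) : IsOpen {x | EventuallyConst g (𝓝 x)} := by
  refine isOpen_iff_mem_nhds.2 fun x hx ↦ ?_
  have : Nonempty Y := ⟨g x⟩
  obtain ⟨c, hc⟩ := eventuallyConst_iff_exists_eventuallyEq.1 hx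
  exact (eventually_eventually_nhds.2 hc).mono fun y hy ↦
    eventuallyConst_iff_exists_eventuallyEq.2 ⟨c, hy⟩

lemma const (y : Y) : DenselyConst fun _ : X ↦ y :=
  dense_univ.mono fun _ _ ↦ EventuallyConst.const y

lemma comp (hg : DenselyConst g) (F : Y → W) : DenselyConst fun x ↦ F (g x) :=
  Dense.mono (fun _ hx ↦ EventuallyConst.comp hx F) hg

lemma comp₂ (hg : DenselyConst g) (F : Y → Z → W) (hf : DenselyConst f) :
    DenselyConst fun x ↦ F (g x) (f x) :=
  (Dense.inter_of_isOpen_left hg hf (isOpen_setOf_eventuallyConst g)).mono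
    fun _ hx ↦ hx.1.comp₂ F hx.2

lemma comp_homeomorph (hg : DenselyConst g) (e : X ≃ₜ X) : DenselyConst fun x ↦ g (e x) :=
  (Dense.preimage hg e.isOpenMap).mono fun x hx ↦
    EventuallyConst.comp_tendsto hx (e.continuous.tendsto x)

end

variable {Y : Type*} {g g₁ g₂ : ℝ → Y}

lemma of_eqOn_Iic_Ici (hg₁ : DenselyConst g₁) (hg₂ : DenselyConst g₂) {x : ℝ}
    (h₁ : EqOn g g₁ (Iic x)) (h₂ : EqOn g g₂ (Ici x)) : DenselyConst g := by
  have hdense :=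
    (Dense.inter_of_isOpen_left hg₁ hg₂ (isOpen_setOf_eventuallyConst g₁)).sdiff_singleton x
  refine hdense.mono fun t ht ↦ ?_
  rcases lt_or_gt_of_ne ht.2 with htx | htx
  · exact ht.1.1.congr (h₁.eventuallyEq_of_mem (Iic_mem_nhds htx)).symm
  · exact ht.1.2.congr (h₂.eventuallyEq_of_mem (Ici_mem_nhds htx)).symm

lemma exists_eqOn_Ioo (hg : DenselyConst g) {u v : ℝ} (huv : u < v) :
    ∃ t ∈ Ioo u v, ∃ r > 0, Ioo (t - r) (t + r) ⊆ Ioo u v ∧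
      ∃ c, ∀ s ∈ Ioo (t - r) (t + r), g s = c := by
  obtain ⟨t, ht, hconst⟩ := hg.exists_between huv
  have : Nonempty Y := ⟨g t⟩
  obtain ⟨c, hc⟩ := eventuallyConst_iff_exists_eventuallyEq.1 ht
  obtain ⟨r, hr, hball⟩ := Metric.eventually_nhds_iff_ball.1
    (hc.and (Ioo_mem_nhds hconst.1 hconst.2))
  rw [Real.ball_eq_Ioo] at hball
  exact ⟨t, hconst, r, hr, fun s hs ↦ (hball s hs).2, c, fun s hs ↦ (hball s hs).1⟩

end DenselyConst

/-! ### Dyadic Cantor sets and their staircase functions -/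

lemma exists_odd_div_two_pow_between {x y : ℝ} (hxy : x < y) :
    ∃ (n : ℕ) (k : ℤ), x < ((2 * k : ℤ) + 1) / 2 ^ (n + 1) ∧
      ((2 * k : ℤ) + 1) / 2 ^ (n + 1) < y := by
  obtain ⟨n, hn⟩ := pow_unbounded_of_one_lt (2 / (y - x)) (one_lt_two (α := ℝ))
  rw [div_lt_iff₀ (sub_pos.2 hxy)] at hn
  have hfloor_le := Int.floor_le (x * 2 ^ n)
  have hlt_floor := Int.lt_floor_add_one (x * 2 ^ n)
  refine ⟨n, ⌊x * 2 ^ n⌋ + 1, ?_, ?_⟩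
  · rw [lt_div_iff₀ (by positivity), pow_succ]
    push_cast
    linarith
  · rw [div_lt_iff₀ (by positivity), pow_succ]
    push_cast
    linarith

/-- The side lengths of a dyadic Cantor set: each interval of length `len n` is replaced by two
subintervals of length `len (n + 1)` at its ends. -/
structure CantorScale where
  /-- The length of the intervals of generation `n`. -/
  len : ℕ → ℝ
  len_pos : ∀ n, 0 < len n
  two_mul_len_succ_lt : ∀ n, 2 * len (n + 1) < len n
  len_zero_le_one : len 0 ≤ 1

namespace CantorScale

variable (S : CantorScale)

lemma len_antitone : Antitone S.len :=
  antitone_nat_of_succ_le fun n ↦ by linarith [S.two_mul_len_succ_lt n, S.len_pos (n + 1)]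

lemma len_le_one (n : ℕ) : S.len n ≤ 1 :=
  (S.len_antitone n.zero_le).trans S.len_zero_le_one

lemma len_add_le (n i : ℕ) : S.len (n + i) ≤ S.len n / 2 ^ i := by
  induction i with
  | zero => simp
  | succ i ih =>
    rw [← add_assoc, pow_succ, ← div_div]
    linarith [S.two_mul_len_succ_lt (n + i)]

lemma tendsto_len : Tendsto S.len atTop (𝓝 0) := by
  refine squeeze_zero (fun n ↦ (S.len_pos n).le) (fun n ↦ ?_)
    (tendsto_pow_atTop_nhds_zero_of_lt_one one_half_pos.le one_half_lt_one)
  have hle := S.len_add_le 0 n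
  rw [zero_add] at hle
  rw [one_div_pow]
  exact hle.trans (by gcongr; exact S.len_zero_le_one)

/-- The left endpoint of the `k`-th interval of generation `N`, for the Cantor set in `[0, len 0]`
repeated along the line with period `len 0`; the intervals inside `[0, len 0]` are those with
`0 ≤ k < 2 ^ N`. -/
noncomputable def leftEnd : ℕ → ℤ → ℝ
  | 0, k => k * S.len 0
  | N + 1, k => leftEnd N (k / 2) + ((k % 2 : ℤ) : ℝ) * (S.len N - S.len (N + 1))

lemma leftEnd_two_mul (N : ℕ) (k : ℤ) : S.leftEnd (N + 1) (2 * k) = S.leftEnd N k := by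
  simp [leftEnd]

lemma leftEnd_two_mul_add_one (N : ℕ) (k : ℤ) :
    S.leftEnd (N + 1) (2 * k + 1) = S.leftEnd N k + (S.len N - S.len (N + 1)) := by
  have hdiv : (2 * k + 1) / 2 = k := by omega
  have hmod : (2 * k + 1) % 2 = 1 := by omega
  simp [leftEnd, hdiv, hmod]

lemma leftEnd_add_len_le (N : ℕ) (k : ℤ) : S.leftEnd N k + S.len N ≤ S.leftEnd N (k + 1) := by
  induction N generalizing k with
  | zero => simp only [leftEnd]; push_cast; linarith
  | succ N ih =>
    rcases Int.even_or_odd' k with ⟨j, rfl | rfl⟩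
    · rw [leftEnd_two_mul, leftEnd_two_mul_add_one]
      linarith [S.two_mul_len_succ_lt N]
    · rw [leftEnd_two_mul_add_one, show 2 * j + 1 + 1 = 2 * (j + 1) by ring, leftEnd_two_mul]
      linarith [ih j]

lemma leftEnd_strictMono (N : ℕ) : StrictMono (S.leftEnd N) :=
  strictMono_int_of_lt_succ fun k ↦ by linarith [S.leftEnd_add_len_le N k, S.len_pos N]

lemma leftEnd_zero (N : ℕ) : S.leftEnd N 0 = 0 := by
  induction N with
  | zero => simp [leftEnd]
  | succ N ih => simp [leftEnd, ih]

lemma leftEnd_two_pow_mul (N d : ℕ) (k : ℤ) : S.leftEnd (N + d) (2 ^ d * k) = S.leftEnd N k := by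
  induction d with
  | zero => simp
  | succ d ih => rw [← add_assoc, pow_succ', mul_assoc, leftEnd_two_mul, ih]

lemma leftEnd_last_add_len (N d : ℕ) (k : ℤ) :
    S.leftEnd (N + d) (2 ^ d * (k + 1) - 1) + S.len (N + d) = S.leftEnd N k + S.len N := by
  induction d with
  | zero => simp
  | succ d ih =>
    rw [← add_assoc, show (2 : ℤ) ^ (d + 1) * (k + 1) - 1 = 2 * (2 ^ d * (k + 1) - 1) + 1 by ring,
      leftEnd_two_mul_add_one]
    linarith

lemma leftEnd_two_pow_sub_one_add_len {q N : ℕ} (hqN : q ≤ N) :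
    S.leftEnd N (2 ^ (N - q) - 1) + S.len N = S.len q := by
  simpa [leftEnd_zero, hqN] using S.leftEnd_last_add_len q (N - q) 0

lemma div_two_pow_le_of_leftEnd_le {M N : ℕ} {j k : ℤ} (h : S.leftEnd M j ≤ S.leftEnd N k) :
    (j : ℝ) / 2 ^ M ≤ k / 2 ^ N := by
  rw [← S.leftEnd_two_pow_mul M N, ← S.leftEnd_two_pow_mul N M, add_comm N M,
    (S.leftEnd_strictMono _).le_iff_le] at h
  rw [div_le_div_iff₀ (by positivity) (by positivity)]
  have hcast : (2 : ℝ) ^ N * j ≤ 2 ^ M * k := mod_cast h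
  linarith

lemma leftEnd_two_pow_mul_eq (N : ℕ) (n : ℤ) : S.leftEnd N (2 ^ N * n) = n * S.len 0 := by
  simpa [leftEnd] using S.leftEnd_two_pow_mul 0 N n

lemma exists_lt_leftEnd (N : ℕ) (t : ℝ) : ∃ k, t < S.leftEnd N k := by
  obtain ⟨n, hn⟩ := exists_int_gt (t / S.len 0)
  exact ⟨2 ^ N * n, by rwa [leftEnd_two_pow_mul_eq, ← div_lt_iff₀ (S.len_pos 0)]⟩

lemma exists_leftEnd_lt (N : ℕ) (t : ℝ) : ∃ k, S.leftEnd N k < t := by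
  obtain ⟨n, hn⟩ := exists_int_lt (t / S.len 0)
  exact ⟨2 ^ N * n, by rwa [leftEnd_two_pow_mul_eq, ← lt_div_iff₀ (S.len_pos 0)]⟩

lemma exists_leftEnd_le_lt (N : ℕ) (t : ℝ) :
    ∃ k, S.leftEnd N k ≤ t ∧ t < S.leftEnd N (k + 1) := by
  obtain ⟨b, hb⟩ := S.exists_lt_leftEnd N t
  obtain ⟨a, ha⟩ := S.exists_leftEnd_lt N t
  obtain ⟨k, hk, hmax⟩ := Int.exists_greatest_of_bdd (P := fun k ↦ S.leftEnd N k ≤ t)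
    ⟨b, fun z hz ↦ ((S.leftEnd_strictMono N).lt_iff_lt.1 (hz.trans_lt hb)).le⟩ ⟨a, ha.le⟩
  exact ⟨k, hk, not_le.1 fun h ↦ by linarith [hmax _ h]⟩

/-- The Cantor function of `S`: it increases by `2⁻ᴺ` across each interval of generation `N` and is
constant on the gaps between them. -/
noncomputable def staircase (t : ℝ) : ℝ :=
  sSup {x : ℝ | ∃ (N : ℕ) (k : ℤ), S.leftEnd N k ≤ t ∧ x = k / 2 ^ N}

lemma staircase_le {t : ℝ} {N : ℕ} {k : ℤ} (ht : t ≤ S.leftEnd N k) :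
    S.staircase t ≤ k / 2 ^ N := by
  obtain ⟨j, hj⟩ := S.exists_leftEnd_lt 0 t
  refine csSup_le ⟨_, 0, j, hj.le, rfl⟩ ?_
  rintro x ⟨M, j, hj, rfl⟩
  exact S.div_two_pow_le_of_leftEnd_le (hj.trans ht)

lemma le_staircase {t : ℝ} {N : ℕ} {k : ℤ} (ht : S.leftEnd N k ≤ t) :
    (k : ℝ) / 2 ^ N ≤ S.staircase t := by
  obtain ⟨b, hb⟩ := S.exists_lt_leftEnd 0 t
  refine le_csSup ⟨b / 2 ^ 0, ?_⟩ ⟨N, k, ht, rfl⟩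
  rintro x ⟨M, j, hj, rfl⟩
  exact S.div_two_pow_le_of_leftEnd_le (hj.trans hb.le)

lemma staircase_le_of_le_rightEnd {t : ℝ} {N : ℕ} {k : ℤ} (ht : t ≤ S.leftEnd N k + S.len N) :
    S.staircase t ≤ (k + 1) / 2 ^ N := by
  simpa using S.staircase_le (ht.trans (S.leftEnd_add_len_le N k))

lemma le_staircase_of_rightEnd_le {t : ℝ} {N : ℕ} {k : ℤ} (ht : S.leftEnd N k + S.len N ≤ t) :
    ((k : ℝ) + 1) / 2 ^ N ≤ S.staircase t := by
  have hbound (d : ℕ) : ((k : ℝ) + 1) / 2 ^ N - 1 / 2 ^ N * (1 / 2) ^ d ≤ S.staircase t := by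
    have hle := S.le_staircase (t := t) (N := N + d) (k := 2 ^ d * (k + 1) - 1)
      (by linarith [S.leftEnd_last_add_len N d k, S.len_pos (N + d)])
    refine le_of_eq_of_le ?_ hle
    push_cast
    rw [pow_add, one_div_pow]
    field_simp
  have hpow := tendsto_pow_atTop_nhds_zero_of_lt_one one_half_pos.le (one_half_lt_one (α := ℝ))
  have hlim : Tendsto (fun d : ℕ ↦ ((k : ℝ) + 1) / 2 ^ N - 1 / 2 ^ N * (1 / 2) ^ d) atTop
      (𝓝 (((k : ℝ) + 1) / 2 ^ N - 1 / 2 ^ N * 0)) :=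
    (hpow.const_mul _).const_sub _
  rw [mul_zero, sub_zero] at hlim
  exact le_of_tendsto' hlim hbound

lemma staircase_monotone : Monotone S.staircase := by
  intro s t hst
  obtain ⟨j, hj⟩ := S.exists_leftEnd_lt 0 s
  refine csSup_le ⟨_, 0, j, hj.le, rfl⟩ ?_
  rintro x ⟨N, k, hk, rfl⟩
  exact S.le_staircase (hk.trans hst)

lemma staircase_zero : S.staircase 0 = 0 := by
  have hle := S.staircase_le (S.leftEnd_zero 0).ge
  have hge := S.le_staircase (S.leftEnd_zero 0).le
  simp only [Int.cast_zero, zero_div] at hle hge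
  exact hle.antisymm hge

lemma staircase_len (q : ℕ) : S.staircase (S.len q) = 1 / 2 ^ q := by
  have hle := S.staircase_le_of_le_rightEnd (t := S.len q) (N := q) (k := 0)
    (by simp [leftEnd_zero])
  have hge := S.le_staircase_of_rightEnd_le (t := S.len q) (N := q) (k := 0)
    (by simp [leftEnd_zero])
  simp only [Int.cast_zero, zero_add] at hle hge
  exact hle.antisymm hge

lemma staircase_nonneg {t : ℝ} (ht : 0 ≤ t) : 0 ≤ S.staircase t :=
  S.staircase_zero.ge.trans (S.staircase_monotone ht)

lemma staircase_nonpos {t : ℝ} (ht : t ≤ 0) : S.staircase t ≤ 0 :=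
  (S.staircase_monotone ht).trans S.staircase_zero.le

lemma staircase_le_add {s t : ℝ} {n : ℕ} (hst : t ≤ s + S.len n) :
    S.staircase t ≤ S.staircase s + 2 / 2 ^ n := by
  obtain ⟨k, hks, hsk⟩ := S.exists_leftEnd_le_lt n s
  have ht := S.staircase_le_of_le_rightEnd (t := t) (N := n) (k := k + 1) (by linarith)
  have hs := S.le_staircase hks
  calc S.staircase t ≤ ((k + 1 : ℤ) + 1) / 2 ^ n := ht
    _ = k / 2 ^ n + 2 / 2 ^ n := by push_cast; ring
    _ ≤ S.staircase s + 2 / 2 ^ n := by gcongr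

lemma staircase_continuous : Continuous S.staircase := by
  refine Metric.continuous_iff.2 fun t ε hε ↦ ?_
  obtain ⟨n, hn⟩ := exists_pow_lt_of_lt_one (half_pos hε) (one_half_lt_one (α := ℝ))
  refine ⟨S.len n, S.len_pos n, fun s hs ↦ ?_⟩
  rw [Real.dist_eq] at hs ⊢
  have hst := S.staircase_le_add (s := s) (t := t) (n := n) (by linarith [(abs_lt.1 hs).1])
  have hts := S.staircase_le_add (s := t) (t := s) (n := n) (by linarith [(abs_lt.1 hs).2])
  have hpow : (2 : ℝ) / 2 ^ n = 2 * (1 / 2) ^ n := by rw [one_div_pow]; ring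
  exact abs_lt.2 ⟨by linarith, by linarith⟩

lemma staircase_eq_of_mem_gap {N : ℕ} {k : ℤ} {t : ℝ}
    (ht : t ∈ Icc (S.leftEnd N k + S.len N) (S.leftEnd N (k + 1))) :
    S.staircase t = (k + 1) / 2 ^ N :=
  le_antisymm (by simpa using S.staircase_le ht.2) (S.le_staircase_of_rightEnd_le ht.1)

lemma staircase_denselyConst : DenselyConst S.staircase := by
  refine dense_of_exists_between fun u v huv ↦ ?_
  rcases (S.staircase_monotone huv.le).eq_or_lt with heq | hlt
  · obtain ⟨t, ht⟩ := exists_between huv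
    refine ⟨t, eventuallyConst_iff_exists_eventuallyEq.2 ⟨S.staircase u, ?_⟩, ht⟩
    filter_upwards [Ioo_mem_nhds ht.1 ht.2] with s hs
    exact le_antisymm (heq ▸ S.staircase_monotone hs.2.le) (S.staircase_monotone hs.1.le)
  · obtain ⟨n, k, hu, hv⟩ := exists_odd_div_two_pow_between hlt
    have hgap : S.leftEnd (n + 1) (2 * k) + S.len (n + 1) < S.leftEnd (n + 1) (2 * k + 1) := by
      rw [leftEnd_two_mul, leftEnd_two_mul_add_one]
      linarith [S.two_mul_len_succ_lt n]
    obtain ⟨t, ht⟩ := exists_between hgap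
    have hvalue := S.staircase_eq_of_mem_gap (Ioo_subset_Icc_self ht)
    refine ⟨t, eventuallyConst_iff_exists_eventuallyEq.2 ⟨((2 * k : ℤ) + 1) / 2 ^ (n + 1), ?_⟩,
      S.staircase_monotone.reflect_lt (hvalue ▸ hu), S.staircase_monotone.reflect_lt (hvalue ▸ hv)⟩
    filter_upwards [Ioo_mem_nhds ht.1 ht.2] with s hs
    exact S.staircase_eq_of_mem_gap (Ioo_subset_Icc_self hs)

end CantorScale

/-! ### Oscillatory integrals -/

section SecondMeanValue

variable {E : Type*} [NormedAddCommGroup E] [NormedSpace ℝ E] {a b : ℝ}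

lemma exists_mem_Icc_forall_lt_le_forall_gt_lt {w : ℝ → ℝ} (hab : a ≤ b)
    (hw : MonotoneOn w (Icc a b)) (x : ℝ) :
    ∃ c ∈ Icc a b, (∀ t ∈ Ico a c, w t ≤ x) ∧ ∀ t ∈ Ioc c b, x < w t := by
  set s : Set ℝ := insert a {t ∈ Icc a b | w t ≤ x}
  have hs : s ⊆ Icc a b := insert_subset (left_mem_Icc.2 hab) (sep_subset _ _)
  have hbdd : BddAbove s := bddAbove_Icc.mono hs
  have has : a ∈ s := mem_insert _ _
  refine ⟨sSup s, ⟨le_csSup hbdd has, csSup_le ⟨a, has⟩ fun t ht ↦ (hs ht).2⟩, ?_, ?_⟩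
  · intro t ht
    obtain ⟨u, rfl | ⟨hu, hux⟩, htu⟩ := exists_lt_of_lt_csSup ⟨a, has⟩ ht.2
    · exact absurd ht.1 htu.not_ge
    · exact (hw ⟨ht.1, htu.le.trans hu.2⟩ hu htu.le).trans hux
  · intro t ht
    have hat : a ≤ t := (le_csSup hbdd has).trans ht.1.le
    exact not_le.1 fun htx ↦
      ht.1.not_ge (le_csSup hbdd (mem_insert_of_mem _ ⟨⟨hat, ht.2⟩, htx⟩))

lemma integral_ite_lt_smul_eq {w : ℝ → ℝ} {f : ℝ → E} (hab : a ≤ b)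
    (hw : MonotoneOn w (Icc a b)) (hf : IntervalIntegrable f volume a b) (x : ℝ) :
    ∃ c ∈ Icc a b, ∫ t in a..b, (if x < w t then (1 : ℝ) else -1) • f t =
      (∫ t in c..b, f t) - ∫ t in a..c, f t := by
  obtain ⟨c, hc, hleft, hright⟩ := exists_mem_Icc_forall_lt_le_forall_gt_lt hab hw x
  refine ⟨c, hc, ?_⟩
  set g : ℝ → E := fun t ↦ (if x < w t then (1 : ℝ) else -1) • f t
  have hga : ∀ᵐ t, t ∈ uIoc a c → g t = -f t := by
    filter_upwards [Measure.ae_ne volume c] with t htc ht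
    rw [uIoc_of_le hc.1] at ht
    simp [g, hleft t ⟨ht.1.le, lt_of_le_of_ne ht.2 htc⟩]
  have hgb : ∀ t ∈ uIoc c b, g t = f t := fun t ht ↦ by
    rw [uIoc_of_le hc.2] at ht
    simp [g, hright t ht]
  have hfa : IntervalIntegrable f volume a c := hf.mono_set (by
    rw [uIcc_of_le hab, uIcc_of_le hc.1]; exact Icc_subset_Icc_right hc.2)
  have hfb : IntervalIntegrable f volume c b := hf.mono_set (by
    rw [uIcc_of_le hab, uIcc_of_le hc.2]; exact Icc_subset_Icc_left hc.1)
  have hgia : IntervalIntegrable g volume a c := hfa.neg.congr_ae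
    ((ae_restrict_iff' measurableSet_uIoc).2 (hga.mono fun t ht hmem ↦ (ht hmem).symm))
  have hgib : IntervalIntegrable g volume c b := hfb.congr fun t ht ↦ (hgb t ht).symm
  rw [← intervalIntegral.integral_add_adjacent_intervals hgia hgib,
    intervalIntegral.integral_congr_ae hga, intervalIntegral.integral_congr_ae (.of_forall hgb),
    intervalIntegral.integral_neg]
  abel

lemma integral_ite_lt {y M : ℝ} (hy : |y| ≤ M) :
    ∫ x in (-M)..M, (if x < y then (1 : ℝ) else -1) = 2 * y := by
  obtain ⟨hMy, hyM⟩ := abs_le.1 hy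
  have hleft : ∀ᵐ x, x ∈ uIoc (-M) y → (if x < y then (1 : ℝ) else -1) = 1 := by
    filter_upwards [Measure.ae_ne volume y] with x hxy hx
    rw [uIoc_of_le hMy] at hx
    exact if_pos (lt_of_le_of_ne hx.2 hxy)
  have hright : ∀ x ∈ uIoc y M, (if x < y then (1 : ℝ) else -1) = -1 := fun x hx ↦ by
    rw [uIoc_of_le hyM] at hx
    exact if_neg hx.1.not_gt
  have hanti : Antitone fun x ↦ if x < y then (1 : ℝ) else -1 := fun x₁ x₂ hx ↦ by
    dsimp only
    split_ifs <;> linarith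
  rw [← intervalIntegral.integral_add_adjacent_intervals (b := y)
    hanti.intervalIntegrable hanti.intervalIntegrable,
    intervalIntegral.integral_congr_ae hleft,
    intervalIntegral.integral_congr_ae (.of_forall hright),
    intervalIntegral.integral_const, intervalIntegral.integral_const, smul_eq_mul, smul_eq_mul]
  ring

/-- Layer cake: `w t = ½ ∫ x in -M..M, sign (w t - x)`, and each `sign (w t - x)` changes sign only
once. -/
theorem norm_integral_monotoneOn_smul_le [CompleteSpace E] {w : ℝ → ℝ} {f : ℝ → E} {M B : ℝ}
    (hab : a ≤ b) (hw : MonotoneOn w (Icc a b)) (hwM : ∀ t ∈ Icc a b, |w t| ≤ M)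
    (hf : IntervalIntegrable f volume a b)
    (hB : ∀ c ∈ Icc a b, ‖(∫ t in c..b, f t) - ∫ t in a..c, f t‖ ≤ B) :
    ‖∫ t in a..b, w t • f t‖ ≤ M * B := by
  have hM : 0 ≤ M := (abs_nonneg _).trans (hwM a (left_mem_Icc.2 hab))
  obtain ⟨g, hg, hwg⟩ := hw.exists_monotone_extension
    ⟨-M, forall_mem_image.2 fun t ht ↦ (abs_le.1 (hwM t ht)).1⟩
    ⟨M, forall_mem_image.2 fun t ht ↦ (abs_le.1 (hwM t ht)).2⟩
  set σ : ℝ → ℝ → ℝ := fun t x ↦ if x < g t then 1 else -1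
  have hlayer : ∀ t ∈ uIcc a b, w t • f t = (1 / 2 : ℝ) • ∫ x in (-M)..M, σ t x • f t := by
    intro t ht
    rw [uIcc_of_le hab] at ht
    rw [intervalIntegral.integral_smul_const, integral_ite_lt (hwg ht ▸ hwM t ht), hwg ht,
      smul_smul, one_div, inv_mul_cancel_left₀ two_ne_zero]
  have hσ : Measurable (Function.uncurry σ) :=
    .ite (measurableSet_lt measurable_snd (hg.measurable.comp measurable_fst))
      measurable_const measurable_const
  have hint : IntegrableOn (Function.uncurry fun t x ↦ σ t x • f t)
      (uIoc a b ×ˢ uIoc (-M) M) := by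
    rw [IntegrableOn, Measure.volume_eq_prod, ← Measure.prod_restrict]
    have hfinite : IsFiniteMeasure (volume.restrict (uIoc (-M) M)) := ⟨by simp [uIoc]⟩
    refine ((intervalIntegrable_iff.1 hf).comp_fst _).bdd_smul 1
      hσ.aestronglyMeasurable (.of_forall fun p ↦ ?_)
    change ‖(if p.2 < g p.1 then (1 : ℝ) else -1)‖ ≤ 1
    split_ifs <;> simp
  have hinner : ‖∫ x in (-M)..M, ∫ t in a..b, σ t x • f t‖ ≤ B * |M - -M| := by
    refine intervalIntegral.norm_integral_le_of_norm_le_const fun x _ ↦ ?_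
    obtain ⟨c, hc, heq⟩ := integral_ite_lt_smul_eq hab (hg.monotoneOn _) hf x
    exact heq ▸ hB c hc
  calc ‖∫ t in a..b, w t • f t‖ = 1 / 2 * ‖∫ x in (-M)..M, ∫ t in a..b, σ t x • f t‖ := by
        rw [intervalIntegral.integral_congr hlayer, intervalIntegral.integral_smul, norm_smul,
          intervalIntegral_intervalIntegral_swap hint, norm_div, norm_one, Real.norm_two]
    _ ≤ 1 / 2 * (B * |M - -M|) := by gcongr
    _ = M * B := by
        rw [sub_neg_eq_add, abs_of_nonneg (add_nonneg hM hM)]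
        ring

theorem norm_integral_antitoneOn_smul_le [CompleteSpace E] {w : ℝ → ℝ} {f : ℝ → E} {M B : ℝ}
    (hab : a ≤ b) (hw : AntitoneOn w (Icc a b)) (hwM : ∀ t ∈ Icc a b, |w t| ≤ M)
    (hf : IntervalIntegrable f volume a b)
    (hB : ∀ c ∈ Icc a b, ‖(∫ t in c..b, f t) - ∫ t in a..c, f t‖ ≤ B) :
    ‖∫ t in a..b, w t • f t‖ ≤ M * B := by
  simpa only [neg_smul, intervalIntegral.integral_neg, norm_neg] using
    norm_integral_monotoneOn_smul_le hab hw.neg (fun t ht ↦ (abs_neg (w t)).trans_le (hwM t ht))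
      hf hB

end SecondMeanValue

section FirstDerivativeTest

variable {a b : ℝ} {P θ : ℝ → ℝ}

lemma integral_deriv_mul_exp_I (hP : ∀ t, HasDerivAt P (θ t) t) (hθ : Continuous θ) (x y : ℝ) :
    ∫ t in x..y, (θ t : ℂ) * Complex.exp (Complex.I * (P t : ℂ)) =
      -Complex.I * (Complex.exp (Complex.I * (P y : ℂ)) - Complex.exp (Complex.I * (P x : ℂ))) := by
  have hPc : Continuous P := continuous_iff_continuousAt.2 fun t ↦ (hP t).continuousAt
  rw [intervalIntegral.integral_eq_sub_of_hasDerivAt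
    (f := fun t ↦ -Complex.I * Complex.exp (Complex.I * (P t : ℂ))), mul_sub]
  · intro t _
    refine (((hP t).ofReal_comp.const_mul Complex.I).cexp.const_mul (-Complex.I)).congr_deriv ?_
    linear_combination (-(θ t : ℂ) * Complex.exp (Complex.I * (P t : ℂ))) * Complex.I_mul_I
  · exact Continuous.intervalIntegrable (by fun_prop) _ _

lemma norm_integral_deriv_mul_exp_I_le (hP : ∀ t, HasDerivAt P (θ t) t) (hθ : Continuous θ)
    (x y : ℝ) : ‖∫ t in x..y, (θ t : ℂ) * Complex.exp (Complex.I * (P t : ℂ))‖ ≤ 2 := by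
  rw [integral_deriv_mul_exp_I hP hθ, norm_mul, norm_neg, Complex.norm_I, one_mul]
  refine (norm_sub_le _ _).trans_eq ?_
  rw [Complex.norm_exp_I_mul_ofReal, Complex.norm_exp_I_mul_ofReal]
  norm_num

theorem norm_integral_mul_deriv_mul_exp_I_le {w : ℝ → ℝ} {M : ℝ} (hab : a ≤ b)
    (hP : ∀ t, HasDerivAt P (θ t) t) (hθ : Continuous θ)
    (hw : MonotoneOn w (Icc a b) ∨ AntitoneOn w (Icc a b)) (hwM : ∀ t ∈ Icc a b, |w t| ≤ M) :
    ‖∫ t in a..b, (w t : ℂ) * ((θ t : ℂ) * Complex.exp (Complex.I * (P t : ℂ)))‖ ≤ 4 * M := by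
  have hPc : Continuous P := continuous_iff_continuousAt.2 fun t ↦ (hP t).continuousAt
  set f : ℝ → ℂ := fun t ↦ (θ t : ℂ) * Complex.exp (Complex.I * (P t : ℂ))
  have hf : IntervalIntegrable f volume a b := Continuous.intervalIntegrable (by fun_prop) _ _
  have hB : ∀ c ∈ Icc a b, ‖(∫ t in c..b, f t) - ∫ t in a..c, f t‖ ≤ 4 := fun c _ ↦
    (norm_sub_le _ _).trans (by
      linarith [norm_integral_deriv_mul_exp_I_le hP hθ c b,
        norm_integral_deriv_mul_exp_I_le hP hθ a c])
  simp only [← Complex.real_smul, mul_comm 4 M]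
  exact hw.elim (fun h ↦ norm_integral_monotoneOn_smul_le hab h hwM hf hB)
    fun h ↦ norm_integral_antitoneOn_smul_le hab h hwM hf hB

theorem norm_integral_exp_I_le_div {μ : ℝ} (hab : a ≤ b) (hP : ∀ t, HasDerivAt P (θ t) t)
    (hθ : Continuous θ) (hmono : MonotoneOn θ (Icc a b)) (hμ : 0 < μ)
    (hbound : (∀ t ∈ Icc a b, μ ≤ θ t) ∨ ∀ t ∈ Icc a b, θ t ≤ -μ) :
    ‖∫ t in a..b, Complex.exp (Complex.I * (P t : ℂ))‖ ≤ 4 / μ := by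
  have habs : ∀ t ∈ Icc a b, μ ≤ |θ t| := fun t ht ↦
    hbound.elim (fun h ↦ (h t ht).trans (le_abs_self _))
      fun h ↦ (le_neg.1 (h t ht)).trans (neg_le_abs _)
  have hanti : AntitoneOn (fun t ↦ (θ t)⁻¹) (Icc a b) := fun s hs t ht hst ↦
    hbound.elim (fun h ↦ inv_anti₀ (hμ.trans_le (h s hs)) (hmono hs ht hst)) fun h ↦
      (inv_le_inv_of_neg ((h t ht).trans_lt (neg_neg_of_pos hμ))
        ((h s hs).trans_lt (neg_neg_of_pos hμ))).2 (hmono hs ht hst)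
  have hinv : ∀ t ∈ Icc a b, |(θ t)⁻¹| ≤ μ⁻¹ := fun t ht ↦ by
    rw [abs_inv]
    exact inv_anti₀ hμ (habs t ht)
  have hfactor : ∀ t ∈ uIcc a b, Complex.exp (Complex.I * (P t : ℂ)) =
      (((θ t)⁻¹ : ℝ) : ℂ) * ((θ t : ℂ) * Complex.exp (Complex.I * (P t : ℂ))) := fun t ht ↦ by
    have hθt : (θ t : ℂ) ≠ 0 := Complex.ofReal_ne_zero.2
      (abs_pos.1 (hμ.trans_le (habs t (uIcc_of_le hab ▸ ht))))
    rw [Complex.ofReal_inv, inv_mul_cancel_left₀ hθt]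
  rw [intervalIntegral.integral_congr hfactor, div_eq_mul_inv]
  exact norm_integral_mul_deriv_mul_exp_I_le hab hP hθ (.inr hanti) hinv

end FirstDerivativeTest

/-- The bound `min (g, 1 / |x|)`, up to a constant factor, for the integral of an oscillation of
constant frequency `x` over an interval of length `g`. -/
noncomputable def oscWeight (g x : ℝ) : ℝ := g / (1 + g * |x|)

lemma oscWeight_nonneg {g : ℝ} (hg : 0 ≤ g) (x : ℝ) : 0 ≤ oscWeight g x := by
  unfold oscWeight
  positivity

lemma oscWeight_mono_left {g g' : ℝ} (hg : 0 ≤ g) (hgg' : g ≤ g') (x : ℝ) :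
    oscWeight g x ≤ oscWeight g' x := by
  unfold oscWeight
  rw [div_le_div_iff₀ (by positivity) (by have := hg.trans hgg'; positivity)]
  linarith

lemma le_oscWeight {g x y : ℝ} (hg : 0 ≤ g) (hyg : y ≤ g) (hyx : y * |x| ≤ 4) :
    y ≤ 5 * oscWeight g x := by
  unfold oscWeight
  rw [← mul_div_assoc, le_div_iff₀ (by positivity)]
  nlinarith

lemma norm_integral_exp_I_le (P : ℝ → ℝ) {a b : ℝ} (hab : a ≤ b) :
    ‖∫ t in a..b, Complex.exp (Complex.I * (P t : ℂ))‖ ≤ b - a := by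
  simpa only [one_mul, abs_of_nonneg (sub_nonneg.2 hab)] using
    intervalIntegral.norm_integral_le_of_norm_le_const (C := 1) (a := a) (b := b)
      fun t _ ↦ (Complex.norm_exp_I_mul_ofReal (P t)).le

lemma le_coe_projIcc {a b x : ℝ} {hab : a ≤ b} (h : (projIcc a b hab x : ℝ) < b) :
    x ≤ projIcc a b hab x := by
  rw [coe_projIcc] at h ⊢
  exact le_max_of_le_right (le_min (not_lt.1 fun hbx ↦
    h.not_ge ((min_eq_left hbx.le).ge.trans (le_max_right _ _))) le_rfl)

lemma coe_projIcc_le {a b x : ℝ} {hab : a ≤ b} (h : a < projIcc a b hab x) :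
    projIcc a b hab x ≤ x := by
  rw [coe_projIcc] at h ⊢
  rcases lt_max_iff.1 h with h | h
  · exact absurd h (lt_irrefl _)
  · exact max_le (h.le.trans (min_le_right _ _)) (min_le_right _ _)

namespace CantorScale

variable (S : CantorScale)

/-- The primitive of the staircase function vanishing at `0`. -/
noncomputable def staircasePrim (s : ℝ) : ℝ := ∫ t in (0 : ℝ)..s, S.staircase t

lemma hasDerivAt_staircasePrim (s : ℝ) : HasDerivAt S.staircasePrim (S.staircase s) s :=
  intervalIntegral.integral_hasDerivAt_right (S.staircase_continuous.intervalIntegrable _ _)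
    (S.staircase_continuous.stronglyMeasurableAtFilter _ _) S.staircase_continuous.continuousAt

/-- The phase of the oscillatory integral `osc`. -/
noncomputable def phase (lam ξ s : ℝ) : ℝ := lam * S.staircasePrim s - ξ * s

lemma hasDerivAt_phase (lam ξ s : ℝ) :
    HasDerivAt (S.phase lam ξ) (lam * S.staircase s - ξ) s := by
  have h := ((S.hasDerivAt_staircasePrim s).const_mul lam).fun_sub ((hasDerivAt_id' s).const_mul ξ)
  rwa [mul_one] at h

lemma continuous_phase (lam ξ : ℝ) : Continuous (S.phase lam ξ) :=
  continuous_iff_continuousAt.2 fun t ↦ (S.hasDerivAt_phase lam ξ t).continuousAt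

lemma monotone_phase_deriv {lam : ℝ} (hlam : 0 ≤ lam) (ξ : ℝ) :
    Monotone fun t ↦ lam * S.staircase t - ξ :=
  (S.staircase_monotone.const_mul hlam).add_const (-ξ)

lemma continuous_phase_deriv (lam ξ : ℝ) : Continuous fun t ↦ lam * S.staircase t - ξ :=
  (S.staircase_continuous.const_mul lam).sub continuous_const

/-- The Fourier transform, at the frequency `ξ`, of `exp (i lam staircasePrim)` restricted to the
Cantor interval `[0, len q]`. -/
noncomputable def osc (q : ℕ) (lam ξ : ℝ) : ℂ :=
  ∫ s in (0 : ℝ)..S.len q, Complex.exp (Complex.I * (S.phase lam ξ s : ℂ))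

/-- The length of the gap to the left of the `j`-th interval of generation `N`. -/
noncomputable def gap (N : ℕ) (j : ℤ) : ℝ := S.leftEnd N j - (S.leftEnd N (j - 1) + S.len N)

lemma gap_nonneg (N : ℕ) (j : ℤ) : 0 ≤ S.gap N j := by
  have hle := S.leftEnd_add_len_le N (j - 1)
  rw [sub_add_cancel] at hle
  exact sub_nonneg.2 hle

lemma norm_integral_gap_le {N : ℕ} {j : ℤ} (lam ξ : ℝ) {x y : ℝ} (hxy : x ≤ y)
    (hx : S.leftEnd N (j - 1) + S.len N ≤ x) (hy : y ≤ S.leftEnd N j) :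
    ‖∫ s in x..y, Complex.exp (Complex.I * (S.phase lam ξ s : ℂ))‖ ≤
      5 * oscWeight (S.gap N j) (ξ - lam * (j / 2 ^ N)) := by
  have hstair : ∀ t ∈ Icc x y, S.staircase t = j / 2 ^ N := fun t ht ↦ by
    have hmem : t ∈ Icc (S.leftEnd N (j - 1) + S.len N) (S.leftEnd N (j - 1 + 1)) := by
      rw [sub_add_cancel]
      exact ⟨hx.trans ht.1, ht.2.trans hy⟩
    simpa using S.staircase_eq_of_mem_gap hmem
  set ζ : ℝ := ξ - lam * (j / 2 ^ N) with hζ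
  have hderiv : ∀ t ∈ Icc x y, lam * S.staircase t - ξ = -ζ := fun t ht ↦ by
    rw [hstair t ht, hζ, neg_sub]
  refine le_oscWeight (S.gap_nonneg N j) ?_ ?_
  · refine (norm_integral_exp_I_le _ hxy).trans ?_
    unfold gap
    linarith
  · rcases eq_or_ne ζ 0 with hζ0 | hζ0
    · simp [hζ0]
    rw [← le_div_iff₀ (abs_pos.2 hζ0)]
    refine norm_integral_exp_I_le_div hxy (S.hasDerivAt_phase lam ξ)
      (S.continuous_phase_deriv lam ξ) ?_ (abs_pos.2 hζ0) ?_
    · exact fun s hs t ht _ ↦ ((hderiv s hs).trans (hderiv t ht).symm).le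
    · rcases abs_cases ζ with ⟨hζ, -⟩ | ⟨hζ, -⟩
      · exact .inr fun t ht ↦ by rw [hderiv t ht, hζ]
      · exact .inl fun t ht ↦ by rw [hderiv t ht, hζ]

/-- The contribution of the `j`-th gap of generation `N` to the bound for `osc q lam ξ`. Only the
gaps inside `[0, len q]`, those with `0 < j < 2 ^ (N - q)`, contribute. -/
noncomputable def gapWeight (q N : ℕ) (lam ξ : ℝ) (j : ℤ) : ℝ :=
  if j ∈ Ioo (0 : ℤ) (2 ^ (N - q)) then oscWeight (S.gap N j) (ξ - lam * (j / 2 ^ N)) else 0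

lemma gapWeight_nonneg (q N : ℕ) (lam ξ : ℝ) (j : ℤ) : 0 ≤ S.gapWeight q N lam ξ j := by
  unfold gapWeight
  split_ifs
  exacts [oscWeight_nonneg (S.gap_nonneg N j) _, le_rfl]

variable {q N : ℕ} {lam : ℝ}

lemma norm_integral_gap_projIcc_le (hqN : q ≤ N) (lam ξ : ℝ) (j : ℤ) :
    ‖∫ s in (projIcc 0 (S.len q) (S.len_pos q).le (S.leftEnd N (j - 1) + S.len N) : ℝ)..
        projIcc 0 (S.len q) (S.len_pos q).le (S.leftEnd N j),
      Complex.exp (Complex.I * (S.phase lam ξ s : ℂ))‖ ≤ 5 * S.gapWeight q N lam ξ j := by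
  set c : ℝ → Icc 0 (S.len q) := projIcc 0 (S.len q) (S.len_pos q).le
  set x := S.leftEnd N (j - 1) + S.len N
  set y := S.leftEnd N j
  have hcxy : (c x : ℝ) ≤ c y := monotone_projIcc _ (sub_nonneg.1 (S.gap_nonneg N j))
  rcases hcxy.eq_or_lt with heq | hlt
  · rw [heq, intervalIntegral.integral_same, norm_zero]
    exact mul_nonneg (by norm_num) (S.gapWeight_nonneg q N lam ξ j)
  have hxc : x ≤ c x := le_coe_projIcc (hlt.trans_le (c y).2.2)
  have hcy : c y ≤ y := coe_projIcc_le ((c x).2.1.trans_lt hlt)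
  have hj : j ∈ Ioo (0 : ℤ) (2 ^ (N - q)) := by
    refine ⟨(S.leftEnd_strictMono N).lt_iff_lt.1 ?_, ?_⟩
    · rw [S.leftEnd_zero]
      exact ((c x).2.1.trans_lt hlt).trans_le hcy
    · have hlast := S.leftEnd_two_pow_sub_one_add_len hqN
      have hltx : S.leftEnd N (j - 1) < S.leftEnd N (2 ^ (N - q) - 1) := by
        linarith [(hxc.trans_lt hlt).trans_le (c y).2.2]
      exact sub_lt_sub_iff_right 1 |>.1 ((S.leftEnd_strictMono N).lt_iff_lt.1 hltx)
  rw [gapWeight, if_pos hj]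
  exact S.norm_integral_gap_le lam ξ hcxy hxc hcy

lemma norm_integral_below_le (hlam : 0 < lam) {k : ℤ} {ξ x y : ℝ} (hxy : x ≤ y)
    (hy : y ≤ S.leftEnd N (k - 1)) (hξ : lam * (k / 2 ^ N) ≤ ξ) :
    ‖∫ s in x..y, Complex.exp (Complex.I * (S.phase lam ξ s : ℂ))‖ ≤ 4 / (lam / 2 ^ N) := by
  refine norm_integral_exp_I_le_div hxy (S.hasDerivAt_phase lam ξ) (S.continuous_phase_deriv lam ξ)
    ((S.monotone_phase_deriv hlam.le ξ).monotoneOn _) (by positivity) (.inr fun t ht ↦ ?_)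
  have hle := mul_le_mul_of_nonneg_left (S.staircase_le (ht.2.trans hy)) hlam.le
  push_cast at hle
  linarith [show lam * ((k - 1) / 2 ^ N) = lam * (k / 2 ^ N) - lam / 2 ^ N by ring]

lemma norm_integral_above_le (hlam : 0 < lam) {k : ℤ} {ξ x y : ℝ} (hxy : x ≤ y)
    (hx : S.leftEnd N k + S.len N ≤ x) (hξ : ξ ≤ lam * (k / 2 ^ N)) :
    ‖∫ s in x..y, Complex.exp (Complex.I * (S.phase lam ξ s : ℂ))‖ ≤ 4 / (lam / 2 ^ N) := by
  refine norm_integral_exp_I_le_div hxy (S.hasDerivAt_phase lam ξ) (S.continuous_phase_deriv lam ξ)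
    ((S.monotone_phase_deriv hlam.le ξ).monotoneOn _) (by positivity) (.inl fun t ht ↦ ?_)
  have hle := mul_le_mul_of_nonneg_left (S.le_staircase_of_rightEnd_le (hx.trans ht.1)) hlam.le
  linarith [show lam * ((k + 1) / 2 ^ N) = lam * (k / 2 ^ N) + lam / 2 ^ N by ring]

/-- Split `[0, len q]` at the levels `k / 2 ^ N ≤ ξ / lam ≤ (k + 1) / 2 ^ N` of the staircase:
outside two gaps and three Cantor intervals the phase has derivative at least `lam / 2 ^ N` in
modulus. -/
lemma norm_osc_le_of_le (hqN : q ≤ N) (hlam : 0 < lam) {k : ℤ} {ξ : ℝ}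
    (hkξ : lam * (k / 2 ^ N) ≤ ξ) (hξk : ξ ≤ lam * ((k + 1 : ℤ) / 2 ^ N)) :
    ‖S.osc q lam ξ‖ ≤ 8 * (2 ^ N / lam) + 3 * S.len N + 5 * S.gapWeight q N lam ξ k +
      5 * S.gapWeight q N lam ξ (k + 1) := by
  set F : ℝ → ℂ := fun s ↦ Complex.exp (Complex.I * (S.phase lam ξ s : ℂ))
  have hFc : Continuous F := by have := S.continuous_phase lam ξ; fun_prop
  have hFi (x y : ℝ) : IntervalIntegrable F volume x y := hFc.intervalIntegrable x y
  set c : ℝ → ℝ := fun x ↦ projIcc 0 (S.len q) (S.len_pos q).le x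
  have hc_mem (x : ℝ) : c x ∈ Icc 0 (S.len q) := (projIcc _ _ _ x).2
  set p : ℤ → ℝ := S.leftEnd N
  have hinterval (j : ℤ) : ‖∫ s in c (p j)..c (p j + S.len N), F s‖ ≤ S.len N := by
    have hle : p j ≤ p j + S.len N := le_add_of_nonneg_right (S.len_pos N).le
    refine (norm_integral_exp_I_le _ (monotone_projIcc _ hle)).trans ((le_abs_self _).trans ?_)
    refine (abs_projIcc_sub_projIcc _).trans_eq ?_
    rw [add_sub_cancel_left, abs_of_pos (S.len_pos N)]
  have hgap (j : ℤ) : ‖∫ s in c (p (j - 1) + S.len N)..c (p j), F s‖ ≤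
      5 * S.gapWeight q N lam ξ j := S.norm_integral_gap_projIcc_le hqN lam ξ j
  have hleft : ‖∫ s in (0 : ℝ)..c (p (k - 1)), F s‖ ≤ 4 / (lam / 2 ^ N) := by
    rcases (hc_mem (p (k - 1))).1.eq_or_lt with heq | hlt
    · rw [← heq, intervalIntegral.integral_same, norm_zero]
      positivity
    · exact S.norm_integral_below_le hlam hlt.le (coe_projIcc_le hlt) hkξ
  have hright : ‖∫ s in c (p (k + 1) + S.len N)..S.len q, F s‖ ≤ 4 / (lam / 2 ^ N) := by
    rcases (hc_mem (p (k + 1) + S.len N)).2.eq_or_lt with heq | hlt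
    · rw [heq, intervalIntegral.integral_same, norm_zero]
      positivity
    · exact S.norm_integral_above_le hlam hlt.le (le_coe_projIcc hlt) hξk
  have hsplit : S.osc q lam ξ = (∫ s in (0 : ℝ)..c (p (k - 1)), F s) +
      (∫ s in c (p (k - 1))..c (p (k - 1) + S.len N), F s) +
      (∫ s in c (p (k - 1) + S.len N)..c (p k), F s) + (∫ s in c (p k)..c (p k + S.len N), F s) +
      (∫ s in c (p k + S.len N)..c (p (k + 1)), F s) +
      (∫ s in c (p (k + 1))..c (p (k + 1) + S.len N), F s) +
      ∫ s in c (p (k + 1) + S.len N)..S.len q, F s := by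
    simp only [intervalIntegral.integral_add_adjacent_intervals, hFi]
    rfl
  have hgap_succ := hgap (k + 1)
  rw [add_sub_cancel_right] at hgap_succ
  rw [hsplit]
  refine (norm_add_le_of_le (norm_add_le_of_le (norm_add_le_of_le (norm_add_le_of_le
    (norm_add_le_of_le (norm_add_le_of_le hleft (hinterval _)) (hgap _)) (hinterval _)) hgap_succ)
    (hinterval _)) hright).trans (le_of_eq ?_)
  field_simp
  ring

lemma exists_norm_osc_le (hqN : q ≤ N) (hlam : 0 < lam) (ξ : ℝ) :
    ∃ k : ℤ, |ξ - lam * (k / 2 ^ N)| ≤ lam / 2 ^ N ∧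
      |ξ - lam * ((k + 1 : ℤ) / 2 ^ N)| ≤ lam / 2 ^ N ∧
      ‖S.osc q lam ξ‖ ≤ 8 * (2 ^ N / lam) + 3 * S.len N + 5 * S.gapWeight q N lam ξ k +
        5 * S.gapWeight q N lam ξ (k + 1) := by
  have hμ : 0 < lam / 2 ^ N := by positivity
  have hfloor_le := (le_div_iff₀ hμ).1 (Int.floor_le (ξ / (lam / 2 ^ N)))
  have hlt_floor := (div_lt_iff₀ hμ).1 (Int.lt_floor_add_one (ξ / (lam / 2 ^ N)))
  set k : ℤ := ⌊ξ / (lam / 2 ^ N)⌋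
  have hk : lam * (k / 2 ^ N) ≤ ξ := by
    linarith [show lam * (k / 2 ^ N) = k * (lam / 2 ^ N) by ring]
  have hstep : lam * ((k + 1 : ℤ) / 2 ^ N) = lam * (k / 2 ^ N) + lam / 2 ^ N := by push_cast; ring
  have hk_succ : ξ ≤ lam * ((k + 1 : ℤ) / 2 ^ N) := by
    linarith [show lam * (k / 2 ^ N) = k * (lam / 2 ^ N) by ring]
  refine ⟨k, ?_, ?_, S.norm_osc_le_of_le hqN hlam hk hk_succ⟩
  · rw [abs_of_nonneg (sub_nonneg.2 hk)]
    linarith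
  · rw [abs_of_nonpos (sub_nonpos.2 hk_succ)]
    linarith

end CantorScale

lemma tsum_sub_le_lintegral {f F : ℝ → ℝ≥0∞}
    (hfF : ∀ x u, x < u → u ≤ x + 1 → f x ≤ F u) (ξ : ℝ) :
    ∑' k : ℤ, f (k - ξ) ≤ ∫⁻ u, F u := by
  have hcell (k : ℤ) : f (k - ξ) ≤ ∫⁻ u in Ioc (-ξ + (k : ℝ)) (-ξ + k + 1), F u :=
    calc f (k - ξ) = ∫⁻ _u in Ioc (-ξ + (k : ℝ)) (-ξ + k + 1), f (k - ξ) := by simp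
      _ ≤ ∫⁻ u in Ioc (-ξ + (k : ℝ)) (-ξ + k + 1), F u :=
        setLIntegral_mono' measurableSet_Ioc fun u hu ↦
          hfF _ _ (by linarith [hu.1]) (by linarith [hu.2])
  calc ∑' k : ℤ, f (k - ξ) ≤ ∑' k : ℤ, ∫⁻ u in Ioc (-ξ + (k : ℝ)) (-ξ + k + 1), F u :=
        ENNReal.tsum_le_tsum hcell
    _ = ∫⁻ u in ⋃ k : ℤ, Ioc (-ξ + (k : ℝ)) (-ξ + k + 1), F u :=
        (lintegral_iUnion (fun _ ↦ measurableSet_Ioc)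
          (Set.pairwise_disjoint_Ioc_add_intCast (-ξ)) _).symm
    _ ≤ ∫⁻ u, F u := setLIntegral_le_lintegral _ _

lemma tsum_ite_abs_sub_le_one_le (r ξ : ℝ) :
    ∑' k : ℤ, (if |(k : ℝ) - ξ| ≤ r then (1 : ℝ≥0∞) else 0) ≤ ENNReal.ofReal (2 * r + 2) := by
  refine (tsum_sub_le_lintegral (f := fun x ↦ if |x| ≤ r then 1 else 0)
    (F := (Icc (-(r + 1)) (r + 1)).indicator 1) (fun x u hxu hux ↦ ?_) ξ).trans_eq ?_
  · split_ifs with hx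
    · have hu : u ∈ Icc (-(r + 1)) (r + 1) :=
        ⟨by linarith [(abs_le.1 hx).1], by linarith [(abs_le.1 hx).2]⟩
      rw [indicator_of_mem hu, Pi.one_apply]
    · exact zero_le
  · rw [lintegral_indicator_one measurableSet_Icc, Real.volume_Icc]
    congr 1
    ring

lemma oscWeight_le_two_mul {g : ℝ} (hg : 0 ≤ g) (hg1 : g ≤ 1) {x u : ℝ} (hxu : |u - x| ≤ 1) :
    oscWeight g x ≤ 2 * oscWeight g u := by
  unfold oscWeight
  have hu : |u| ≤ |x| + 1 := by linarith [abs_sub_abs_le_abs_sub u x]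
  have hgu : g * |u| ≤ g * |x| + 1 :=
    (mul_le_mul_of_nonneg_left hu hg).trans (by rw [mul_add, mul_one]; gcongr)
  rw [← mul_div_assoc, div_le_div_iff₀ (by positivity) (by positivity)]
  nlinarith [mul_nonneg hg (abs_nonneg x)]

lemma lintegral_one_add_norm_mul_rpow {g : ℝ} (hg : 0 < g) (s : ℝ) :
    ∫⁻ u : ℝ, ENNReal.ofReal ((1 + ‖g * u‖) ^ (-s)) =
      ENNReal.ofReal g⁻¹ * ∫⁻ x : ℝ, ENNReal.ofReal ((1 + ‖x‖) ^ (-s)) := by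
  rw [← lintegral_map (f := fun x : ℝ ↦ ENNReal.ofReal ((1 + ‖x‖) ^ (-s)))
    (g := fun u ↦ g * u) (by fun_prop) (by fun_prop), Real.map_volume_mul_left hg.ne',
    lintegral_smul_measure, abs_of_pos (inv_pos.2 hg), smul_eq_mul]

lemma oscWeight_rpow {g s : ℝ} (hg : 0 ≤ g) (u : ℝ) :
    oscWeight g u ^ s = g ^ s * (1 + ‖g * u‖) ^ (-s) := by
  rw [oscWeight, Real.div_rpow hg (by positivity), norm_mul, Real.norm_eq_abs, Real.norm_eq_abs,
    abs_of_nonneg hg, Real.rpow_neg (by positivity), div_eq_mul_inv]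

lemma exists_tsum_oscWeight_rpow_le {s : ℝ} (hs : 1 < s) :
    ∃ C : ℝ, 0 < C ∧ ∀ g : ℝ, 0 < g → g ≤ 1 → ∀ ξ : ℝ,
      ∑' k : ℤ, ENNReal.ofReal (oscWeight g (k - ξ)) ^ s ≤ ENNReal.ofReal (C * g ^ (s - 1)) := by
  set I := ∫⁻ x : ℝ, ENNReal.ofReal ((1 + ‖x‖) ^ (-s)) with hI
  have hI_lt_top : I < ∞ := finite_integral_one_add_norm (by simpa using hs)
  refine ⟨2 ^ s * I.toReal + 1, by positivity, fun g hg hg1 ξ ↦ ?_⟩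
  have hnear : ∀ x u : ℝ, x < u → u ≤ x + 1 → ENNReal.ofReal (oscWeight g x) ^ s ≤
      ENNReal.ofReal (2 ^ s * g ^ s) * ENNReal.ofReal ((1 + ‖g * u‖) ^ (-s)) := by
    intro x u hxu hux
    have hw := oscWeight_nonneg hg.le x
    rw [ENNReal.ofReal_rpow_of_nonneg hw (by linarith), ← ENNReal.ofReal_mul (by positivity),
      mul_assoc, ← oscWeight_rpow hg.le,
      ← Real.mul_rpow zero_le_two (oscWeight_nonneg hg.le u)]
    gcongr
    exact oscWeight_le_two_mul hg.le hg1 (abs_le.2 ⟨by linarith, by linarith⟩)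
  calc ∑' k : ℤ, ENNReal.ofReal (oscWeight g (k - ξ)) ^ s
      ≤ ∫⁻ u : ℝ, ENNReal.ofReal (2 ^ s * g ^ s) * ENNReal.ofReal ((1 + ‖g * u‖) ^ (-s)) :=
        tsum_sub_le_lintegral (f := fun x ↦ ENNReal.ofReal (oscWeight g x) ^ s) hnear ξ
    _ = ENNReal.ofReal (2 ^ s * I.toReal * g ^ (s - 1)) := by
        rw [lintegral_const_mul _ (by fun_prop), lintegral_one_add_norm_mul_rpow hg, ← hI,
          ← ENNReal.ofReal_toReal hI_lt_top.ne, ← ENNReal.ofReal_mul (by positivity),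
          ← ENNReal.ofReal_mul (by positivity), ENNReal.toReal_ofReal ENNReal.toReal_nonneg,
          Real.rpow_sub_one hg.ne']
        congr 1
        ring
    _ ≤ ENNReal.ofReal ((2 ^ s * I.toReal + 1) * g ^ (s - 1)) := by
        gcongr
        exact le_add_of_nonneg_right zero_le_one

lemma continuous_oscWeight {g : ℝ} (hg : 0 ≤ g) : Continuous (oscWeight g) :=
  continuous_const.div (by fun_prop) fun x ↦ by positivity

lemma integral_oscWeight_zero_right {g r : ℝ} (hg : 0 < g) (hr : 0 ≤ r) :
    ∫ u in (0 : ℝ)..r, oscWeight g u = log (1 + g * r) := by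
  rw [intervalIntegral.integral_eq_sub_of_hasDerivAt (f := fun u ↦ log (1 + g * u))]
  · simp
  · intro u hu
    rw [uIcc_of_le hr] at hu
    have hpos : 0 < 1 + g * u := by nlinarith [hu.1, mul_nonneg hg.le hu.1]
    simpa [oscWeight, abs_of_nonneg hu.1] using
      (((hasDerivAt_id' u).const_mul g).const_add 1).log hpos.ne'
  · exact (continuous_oscWeight hg.le).intervalIntegrable _ _

lemma integral_oscWeight {g r : ℝ} (hg : 0 < g) (hr : 0 ≤ r) :
    ∫ u in (-r)..r, oscWeight g u = 2 * log (1 + g * r) := by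
  have hneg : ∫ u in (-r)..0, oscWeight g u = ∫ u in (0 : ℝ)..r, oscWeight g u := by
    simpa [oscWeight] using
      (intervalIntegral.integral_comp_neg (a := 0) (b := r) (oscWeight g)).symm
  have hi (x y : ℝ) := (continuous_oscWeight hg.le).intervalIntegrable (μ := volume) x y
  rw [← intervalIntegral.integral_add_adjacent_intervals (hi (-r) 0) (hi 0 r), hneg,
    integral_oscWeight_zero_right hg hr]
  ring

lemma tsum_ite_oscWeight_le {g r : ℝ} (hg : 0 < g) (hg1 : g ≤ 1) (hr : 0 ≤ r) (ξ : ℝ) :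
    ∑' k : ℤ, (if |(k : ℝ) - ξ| ≤ r then ENNReal.ofReal (oscWeight g (k - ξ)) else 0) ≤
      ENNReal.ofReal (4 * log (1 + g * (r + 1))) := by
  refine (tsum_sub_le_lintegral
    (f := fun x ↦ if |x| ≤ r then ENNReal.ofReal (oscWeight g x) else 0)
    (F := (Ioc (-(r + 1)) (r + 1)).indicator fun u ↦ ENNReal.ofReal (2 * oscWeight g u))
    (fun x u hxu hux ↦ ?_) ξ).trans_eq ?_
  · split_ifs with hx
    · have hu : u ∈ Ioc (-(r + 1)) (r + 1) :=
        ⟨by linarith [(abs_le.1 hx).1], by linarith [(abs_le.1 hx).2]⟩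
      rw [indicator_of_mem hu]
      gcongr
      exact oscWeight_le_two_mul hg.le hg1 (abs_le.2 ⟨by linarith, by linarith⟩)
    · exact zero_le
  · have hc : Continuous fun u ↦ 2 * oscWeight g u := (continuous_oscWeight hg.le).const_mul 2
    rw [lintegral_indicator measurableSet_Ioc, ← ofReal_integral_eq_lintegral_ofReal
      hc.integrableOn_Ioc (.of_forall fun u ↦ mul_nonneg zero_le_two (oscWeight_nonneg hg.le u)),
      ← intervalIntegral.integral_of_le (by linarith), intervalIntegral.integral_const_mul,
      integral_oscWeight hg (by linarith)]
    congr 1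
    ring

namespace CantorScale

variable (S : CantorScale) (q : ℕ)

/-- The tent supported on `[0, 2 * len q]` whose two sides are the staircase function on
`[0, len q]` and its mirror image. -/
noncomputable def tent (s : ℝ) : ℝ := max 0 (S.staircase (S.len q - |s - S.len q|))

/-- A tent followed by its negative: a continuous function of mean zero, supported on
`[0, 4 * len q]`. -/
noncomputable def wave (s : ℝ) : ℝ := S.tent q s - S.tent q (s - 2 * S.len q)

/-- The primitive of `wave` vanishing at `0`, a `C¹` function supported on `[0, 4 * len q]`. -/
noncomputable def block (s : ℝ) : ℝ := ∫ t in (0 : ℝ)..s, S.wave q t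

lemma tent_two_mul_len_sub (s : ℝ) : S.tent q (2 * S.len q - s) = S.tent q s := by
  rw [tent, tent, abs_sub_comm s]
  ring_nf

lemma tent_nonneg (s : ℝ) : 0 ≤ S.tent q s := le_max_left _ _

lemma tent_le (s : ℝ) : S.tent q s ≤ 1 / 2 ^ q := by
  refine max_le (by positivity) ?_
  rw [← S.staircase_len q]
  exact S.staircase_monotone (sub_le_self _ (abs_nonneg _))

lemma continuous_tent : Continuous (S.tent q) := by
  have := S.staircase_continuous
  unfold tent
  fun_prop

lemma continuous_wave : Continuous (S.wave q) := by
  have := S.continuous_tent q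
  unfold wave
  fun_prop

lemma abs_wave_le (s : ℝ) : |S.wave q s| ≤ 1 / 2 ^ q :=
  abs_sub_le_of_nonneg_of_le (S.tent_nonneg q _) (S.tent_le q _) (S.tent_nonneg q _)
    (S.tent_le q _)

lemma wave_four_mul_len_sub (s : ℝ) : S.wave q (4 * S.len q - s) = -S.wave q s := by
  rw [wave, wave, ← S.tent_two_mul_len_sub q (4 * S.len q - s),
    ← S.tent_two_mul_len_sub q (4 * S.len q - s - 2 * S.len q)]
  ring_nf

lemma hasDerivAt_block (s : ℝ) : HasDerivAt (S.block q) (S.wave q s) s :=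
  intervalIntegral.integral_hasDerivAt_right ((S.continuous_wave q).intervalIntegrable _ _)
    ((S.continuous_wave q).stronglyMeasurableAtFilter _ _) (S.continuous_wave q).continuousAt

lemma continuous_block : Continuous (S.block q) :=
  continuous_iff_continuousAt.2 fun s ↦ (S.hasDerivAt_block q s).continuousAt

lemma block_zero : S.block q 0 = 0 := intervalIntegral.integral_same

lemma block_four_mul_len : S.block q (4 * S.len q) = 0 := by
  have h := intervalIntegral.integral_comp_sub_left (S.wave q) (4 * S.len q)
    (a := 0) (b := 4 * S.len q)
  simp only [wave_four_mul_len_sub, intervalIntegral.integral_neg, sub_self, sub_zero] at h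
  exact neg_eq_self.1 h

variable {q}

lemma tent_of_mem {s : ℝ} (hs : s ∈ Icc 0 (S.len q)) : S.tent q s = S.staircase s := by
  rw [tent, abs_of_nonpos (sub_nonpos.2 hs.2), neg_sub, sub_sub_cancel,
    max_eq_right (S.staircase_nonneg hs.1)]

lemma tent_eq_zero {s : ℝ} (hs : s ≤ 0 ∨ 2 * S.len q ≤ s) : S.tent q s = 0 := by
  refine max_eq_left (S.staircase_nonpos (sub_nonpos.2 ?_))
  rcases hs with hs | hs
  · linarith [neg_le_abs (s - S.len q)]
  · linarith [le_abs_self (s - S.len q)]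

lemma wave_eq_zero {s : ℝ} (hs : s ≤ 0 ∨ 4 * S.len q ≤ s) : S.wave q s = 0 := by
  have hlen := S.len_pos q
  rw [wave, S.tent_eq_zero (hs.imp_right fun _ ↦ by linarith),
    S.tent_eq_zero (hs.imp (fun _ ↦ by linarith) fun _ ↦ by linarith), sub_zero]

lemma wave_of_mem {u : ℝ} (hu : u ∈ Icc 0 (S.len q)) : S.wave q u = S.staircase u := by
  rw [wave, S.tent_of_mem hu, S.tent_eq_zero (.inl (by linarith [hu.1, hu.2])), sub_zero]

lemma wave_two_mul_len_sub {u : ℝ} (hu : u ∈ Icc 0 (S.len q)) :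
    S.wave q (2 * S.len q - u) = S.staircase u := by
  rw [wave, S.tent_two_mul_len_sub, S.tent_of_mem hu, S.tent_eq_zero (.inl (by linarith [hu.1])),
    sub_zero]

lemma wave_two_mul_len_add {u : ℝ} (hu : u ∈ Icc 0 (S.len q)) :
    S.wave q (2 * S.len q + u) = -S.staircase u := by
  rw [wave, add_sub_cancel_left, S.tent_of_mem hu, S.tent_eq_zero (.inr (by linarith [hu.1])),
    zero_sub]

lemma block_eq_zero {s : ℝ} (hs : s ≤ 0 ∨ 4 * S.len q ≤ s) : S.block q s = 0 := by
  have hi (x y : ℝ) := (S.continuous_wave q).intervalIntegrable (μ := volume) x y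
  rcases hs with hs | hs
  · refine intervalIntegral.integral_zero_ae (.of_forall fun x hx ↦ S.wave_eq_zero (.inl ?_))
    rw [uIoc_of_ge hs] at hx
    exact hx.2
  · have hsplit : S.block q s = S.block q (4 * S.len q) + ∫ t in (4 * S.len q)..s, S.wave q t :=
      (intervalIntegral.integral_add_adjacent_intervals (hi _ _) (hi _ _)).symm
    rw [hsplit, block_four_mul_len, zero_add]
    refine intervalIntegral.integral_zero_ae (.of_forall fun x hx ↦ S.wave_eq_zero (.inr ?_))
    rw [uIoc_of_le hs] at hx
    exact hx.1.le

variable (q) in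
lemma abs_block_le (s : ℝ) : |S.block q s| ≤ 4 * S.len q / 2 ^ q := by
  have hlen := (S.len_pos q).le
  by_cases hs : s ≤ 0 ∨ 4 * S.len q ≤ s
  · rw [S.block_eq_zero hs, abs_zero]
    positivity
  · push Not at hs
    have hle := intervalIntegral.norm_integral_le_of_norm_le_const (f := S.wave q)
      (C := 1 / 2 ^ q) (a := 0) (b := s) fun x _ ↦ S.abs_wave_le q x
    rw [sub_zero, abs_of_pos hs.1, one_div_mul_eq_div] at hle
    exact hle.trans (by gcongr; exact hs.2.le)

lemma block_add_mul {s₀ τ σ : ℝ}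
    (hwave : ∀ u ∈ Icc 0 (S.len q), S.wave q (s₀ + τ * u) = σ * S.staircase u) {u : ℝ}
    (hu : u ∈ Icc 0 (S.len q)) :
    S.block q (s₀ + τ * u) = S.block q s₀ + τ * σ * S.staircasePrim u := by
  have hi (x y : ℝ) := (S.continuous_wave q).intervalIntegrable (μ := volume) x y
  have hsubst := intervalIntegral.smul_integral_comp_add_mul (a := 0) (b := u) (S.wave q) τ s₀
  have hcongr : ∫ x in (0 : ℝ)..u, S.wave q (s₀ + τ * x) = ∫ x in (0 : ℝ)..u, σ * S.staircase x :=
    intervalIntegral.integral_congr fun x hx ↦ by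
      rw [uIcc_of_le hu.1] at hx
      exact hwave x ⟨hx.1, hx.2.trans hu.2⟩
  rw [mul_zero, add_zero, hcongr, intervalIntegral.integral_const_mul, smul_eq_mul,
    ← mul_assoc] at hsubst
  exact (intervalIntegral.integral_add_adjacent_intervals (hi 0 s₀) (hi s₀ _)).symm.trans
    (congrArg (S.block q s₀ + ·) hsubst.symm)

/-- The phase of the oscillation of a block. -/
noncomputable def blockPhase (q : ℕ) (lam ξ s : ℝ) : ℝ := lam * S.block q s - ξ * s

/-- The Fourier transform of `exp (i lam block) - 1` at the frequency `ξ`. -/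
noncomputable def blockOsc (q : ℕ) (lam ξ : ℝ) : ℂ :=
  ∫ s in (0 : ℝ)..4 * S.len q, (Complex.exp (Complex.I * ((lam * S.block q s : ℝ) : ℂ)) - 1) *
    Complex.exp (Complex.I * ((-(ξ * s) : ℝ) : ℂ))

/-- The oscillatory integral over a quarter of the support of `wave q`, on which
`wave q (s₀ + τ * u) = σ * staircase u` for signs `τ` and `σ`. -/
noncomputable def quarterOsc (q : ℕ) (F : ℝ → ℂ) (lam ξ τ σ : ℝ) : ℂ :=
  ∫ u in (0 : ℝ)..S.len q,
    F (σ * S.staircase u) * Complex.exp (Complex.I * (S.phase (lam * (τ * σ)) (ξ * τ) u : ℂ))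

lemma norm_integral_quarter {s₀ τ σ : ℝ} (hτ : |τ| = 1)
    (hwave : ∀ u ∈ Icc 0 (S.len q), S.wave q (s₀ + τ * u) = σ * S.staircase u)
    (F : ℝ → ℂ) (lam ξ : ℝ) :
    ‖∫ s in s₀..s₀ + τ * S.len q,
        F (S.wave q s) * Complex.exp (Complex.I * (S.blockPhase q lam ξ s : ℂ))‖ =
      ‖S.quarterOsc q F lam ξ τ σ‖ := by
  set G : ℝ → ℂ := fun s ↦
    F (S.wave q s) * Complex.exp (Complex.I * (S.blockPhase q lam ξ s : ℂ)) with hG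
  have hsubst := intervalIntegral.smul_integral_comp_add_mul (a := 0) (b := S.len q) G τ s₀
  have hcongr : ∫ u in (0 : ℝ)..S.len q, G (s₀ + τ * u) =
      ∫ u in (0 : ℝ)..S.len q, Complex.exp (Complex.I * (S.blockPhase q lam ξ s₀ : ℂ)) *
        (F (σ * S.staircase u) *
          Complex.exp (Complex.I * (S.phase (lam * (τ * σ)) (ξ * τ) u : ℂ))) := by
    refine intervalIntegral.integral_congr fun u hu ↦ ?_
    rw [uIcc_of_le (S.len_pos q).le] at hu
    simp only [hG, blockPhase, phase]
    rw [S.block_add_mul hwave hu, hwave u hu, mul_left_comm, ← Complex.exp_add]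
    congr 2
    push_cast
    ring
  rw [mul_zero, add_zero] at hsubst
  rw [← hsubst, hcongr, intervalIntegral.integral_const_mul, norm_smul, norm_mul,
    Complex.norm_exp_I_mul_ofReal, Real.norm_eq_abs, hτ, one_mul, one_mul]
  rfl

lemma continuous_blockPhase (q : ℕ) (lam ξ : ℝ) : Continuous (S.blockPhase q lam ξ) := by
  have := S.continuous_block q
  unfold blockPhase
  fun_prop

lemma norm_integral_wave_mul_exp_le {F : ℝ → ℂ} (hF : Continuous F) (q : ℕ) (lam ξ : ℝ) :
    ‖∫ s in (0 : ℝ)..4 * S.len q,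
        F (S.wave q s) * Complex.exp (Complex.I * (S.blockPhase q lam ξ s : ℂ))‖ ≤
      ‖S.quarterOsc q F lam ξ 1 1‖ + ‖S.quarterOsc q F lam ξ (-1) 1‖ +
        ‖S.quarterOsc q F lam ξ 1 (-1)‖ + ‖S.quarterOsc q F lam ξ (-1) (-1)‖ := by
  set G : ℝ → ℂ := fun s ↦
    F (S.wave q s) * Complex.exp (Complex.I * (S.blockPhase q lam ξ s : ℂ))
  set L := S.len q with hL
  have hGi (x y : ℝ) : IntervalIntegrable G volume x y := by
    have hwave := S.continuous_wave q
    have hphase := S.continuous_blockPhase q lam ξ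
    exact Continuous.intervalIntegrable (by fun_prop) x y
  have h₁ : ‖∫ s in (0 : ℝ)..L, G s‖ = ‖S.quarterOsc q F lam ξ 1 1‖ := by
    have h := S.norm_integral_quarter (q := q) (s₀ := 0) (τ := 1) (σ := 1) (by norm_num)
      (fun u hu ↦ by rw [zero_add, one_mul, one_mul, S.wave_of_mem hu]) F lam ξ
    rwa [zero_add, one_mul] at h
  have h₂ : ‖∫ s in L..2 * L, G s‖ = ‖S.quarterOsc q F lam ξ (-1) 1‖ := by
    have h := S.norm_integral_quarter (q := q) (s₀ := 2 * L) (τ := -1) (σ := 1) (by norm_num)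
      (fun u hu ↦ by rw [neg_one_mul, ← sub_eq_add_neg, one_mul, S.wave_two_mul_len_sub hu])
      F lam ξ
    rwa [show 2 * L + -1 * S.len q = L by rw [hL]; ring, intervalIntegral.integral_symm,
      norm_neg] at h
  have h₃ : ‖∫ s in (2 * L)..3 * L, G s‖ = ‖S.quarterOsc q F lam ξ 1 (-1)‖ := by
    have h := S.norm_integral_quarter (q := q) (s₀ := 2 * L) (τ := 1) (σ := -1) (by norm_num)
      (fun u hu ↦ by rw [neg_one_mul, one_mul, S.wave_two_mul_len_add hu]) F lam ξ
    rwa [show 2 * L + 1 * S.len q = 3 * L by rw [hL]; ring] at h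
  have h₄ : ‖∫ s in (3 * L)..4 * L, G s‖ = ‖S.quarterOsc q F lam ξ (-1) (-1)‖ := by
    have h := S.norm_integral_quarter (q := q) (s₀ := 4 * L) (τ := -1) (σ := -1) (by norm_num)
      (fun u hu ↦ by
        rw [neg_one_mul, neg_one_mul, ← sub_eq_add_neg, S.wave_four_mul_len_sub, S.wave_of_mem hu])
      F lam ξ
    rwa [show 4 * L + -1 * S.len q = 3 * L by rw [hL]; ring, intervalIntegral.integral_symm,
      norm_neg] at h
  rw [← h₁, ← h₂, ← h₃, ← h₄, ← intervalIntegral.integral_add_adjacent_intervals (hGi 0 (3 * L))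
    (hGi _ _), ← intervalIntegral.integral_add_adjacent_intervals (hGi 0 (2 * L)) (hGi _ _),
    ← intervalIntegral.integral_add_adjacent_intervals (hGi 0 L) (hGi _ _)]
  exact norm_add₄_le

variable (q) {lam ξ : ℝ}

lemma norm_blockOsc_le_sq_len (hlam : 0 ≤ lam) (ξ : ℝ) :
    ‖S.blockOsc q lam ξ‖ ≤ 16 * (lam / 2 ^ q) * S.len q ^ 2 := by
  have hlen := (S.len_pos q).le
  refine (intervalIntegral.norm_integral_le_of_norm_le_const
    (C := lam * (4 * S.len q / 2 ^ q)) fun s _ ↦ ?_).trans_eq ?_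
  · rw [norm_mul, Complex.norm_exp_I_mul_ofReal, mul_one]
    refine Real.norm_exp_I_mul_ofReal_sub_one_le.trans ?_
    rw [Real.norm_eq_abs, abs_mul, abs_of_nonneg hlam]
    exact mul_le_mul_of_nonneg_left (S.abs_block_le q s) hlam
  · rw [sub_zero, abs_of_nonneg (by positivity)]
    ring

lemma norm_osc_neg (lam ξ : ℝ) : ‖S.osc q (-lam) ξ‖ = ‖S.osc q lam (-ξ)‖ := by
  rw [← RCLike.norm_conj (S.osc q lam (-ξ)), osc, osc, ← intervalIntegral.intervalIntegral_conj]
  congr 1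
  refine intervalIntegral.integral_congr fun s _ ↦ ?_
  simp only [← Complex.exp_conj, map_mul, Complex.conj_I, Complex.conj_ofReal, phase]
  congr 1
  push_cast
  ring

lemma norm_integral_exp_mul_le (ξ : ℝ) {L : ℝ} (hL : 0 ≤ L) :
    ‖∫ s in (0 : ℝ)..L, Complex.exp (Complex.I * ((-(ξ * s) : ℝ) : ℂ))‖ ≤ 5 * oscWeight L ξ := by
  refine le_oscWeight hL ((norm_integral_exp_I_le _ hL).trans_eq (sub_zero L)) ?_
  rcases eq_or_ne ξ 0 with rfl | hξ
  · simp
  rw [← le_div_iff₀ (abs_pos.2 hξ)]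
  refine norm_integral_exp_I_le_div hL (θ := fun _ ↦ -ξ) (fun t ↦ ?_) continuous_const
    (fun _ _ _ _ _ ↦ le_rfl) (abs_pos.2 hξ) ?_
  · simpa using ((hasDerivAt_id' t).const_mul ξ).fun_neg
  · exact (abs_cases ξ).symm.imp (fun h t _ ↦ h.1.le) fun h t _ ↦ by rw [h.1]

lemma norm_blockOsc_le_osc (lam ξ : ℝ) :
    ‖S.blockOsc q lam ξ‖ ≤
      2 * ‖S.osc q lam ξ‖ + 2 * ‖S.osc q lam (-ξ)‖ + 20 * oscWeight (S.len q) ξ := by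
  have hlen := S.len_pos q
  have hsub : S.blockOsc q lam ξ =
      (∫ s in (0 : ℝ)..4 * S.len q, Complex.exp (Complex.I * (S.blockPhase q lam ξ s : ℂ))) -
        ∫ s in (0 : ℝ)..4 * S.len q, Complex.exp (Complex.I * ((-(ξ * s) : ℝ) : ℂ)) := by
    have hphase := S.continuous_blockPhase q lam ξ
    rw [← intervalIntegral.integral_sub (Continuous.intervalIntegrable (by fun_prop) _ _)
      (Continuous.intervalIntegrable (by fun_prop) _ _)]
    refine intervalIntegral.integral_congr fun s _ ↦ ?_
    simp only [blockPhase]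
    rw [sub_one_mul, ← Complex.exp_add]
    congr 2
    push_cast
    ring
  have hmain := S.norm_integral_wave_mul_exp_le (F := fun _ ↦ 1) continuous_const q lam ξ
  have hosc (τ σ : ℝ) : S.quarterOsc q (fun _ ↦ 1) lam ξ τ σ = S.osc q (lam * (τ * σ)) (ξ * τ) := by
    simp only [quarterOsc, osc, one_mul]
  simp only [hosc, one_mul, mul_one, mul_neg, neg_neg, norm_osc_neg] at hmain
  have hfree := norm_integral_exp_mul_le ξ (L := 4 * S.len q) (by positivity)
  have hweight : oscWeight (4 * S.len q) ξ ≤ 4 * oscWeight (S.len q) ξ := by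
    unfold oscWeight
    rw [← mul_div_assoc]
    gcongr
    linarith
  rw [hsub]
  exact (norm_sub_le _ _).trans (by linarith)

lemma monotoneOn_div_mul_sub (lam : ℝ) (hξ : ξ < 0) :
    MonotoneOn (fun x ↦ x / (lam * x - ξ)) {x | |lam * x| < |ξ|} := fun x hx y hy hxy ↦ by
  rw [mem_ofPred_eq, abs_of_neg hξ, abs_lt] at hx hy
  change x / (lam * x - ξ) ≤ y / (lam * y - ξ)
  rw [div_le_div_iff₀ (by linarith) (by linarith)]
  linarith [mul_le_mul_of_nonpos_left hxy hξ.le]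

lemma antitoneOn_div_mul_sub (lam : ℝ) (hξ : 0 < ξ) :
    AntitoneOn (fun x ↦ x / (lam * x - ξ)) {x | |lam * x| < |ξ|} := fun x hx y hy hxy ↦ by
  have hneg (z : ℝ) : z / (lam * z - ξ) = -(z / (-lam * z - -ξ)) := by
    rw [← div_neg]
    ring_nf
  have hmono := monotoneOn_div_mul_sub (-lam) (neg_neg_iff_pos.2 hξ)
  simp only [neg_mul, abs_neg] at hmono
  simp only [hneg, neg_mul]
  exact neg_le_neg (hmono hx hy hxy)

lemma norm_integral_staircase_mul_exp_le (hξ : ξ ≠ 0) (hlam : 2 * (|lam| / 2 ^ q) ≤ |ξ|) :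
    ‖∫ u in (0 : ℝ)..S.len q,
        (S.staircase u : ℂ) * Complex.exp (Complex.I * (S.phase lam ξ u : ℂ))‖ ≤
      8 / 2 ^ q / |ξ| := by
  have hξ0 := abs_pos.2 hξ
  have hstair_le {u : ℝ} (hu : u ∈ Icc 0 (S.len q)) : S.staircase u ≤ 1 / 2 ^ q :=
    (S.staircase_monotone hu.2).trans_eq (S.staircase_len q)
  have hsmall {u : ℝ} (hu : u ∈ Icc 0 (S.len q)) : |lam * S.staircase u| ≤ |ξ| / 2 := by
    rw [abs_mul, abs_of_nonneg (S.staircase_nonneg hu.1)]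
    linarith [mul_le_mul_of_nonneg_left (hstair_le hu) (abs_nonneg lam),
      mul_one_div |lam| (2 ^ q)]
  have hmaps : MapsTo S.staircase (Icc 0 (S.len q)) {x | |lam * x| < |ξ|} := fun u hu ↦
    (hsmall hu).trans_lt (by linarith)
  have hderiv {u : ℝ} (hu : u ∈ Icc 0 (S.len q)) : |ξ| / 2 ≤ |lam * S.staircase u - ξ| := by
    rw [abs_sub_comm]
    linarith [hsmall hu, abs_sub_abs_le_abs_sub ξ (lam * S.staircase u)]
  set w : ℝ → ℝ := (fun x ↦ x / (lam * x - ξ)) ∘ S.staircase with hw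
  have hcongr : ∫ u in (0 : ℝ)..S.len q,
        (S.staircase u : ℂ) * Complex.exp (Complex.I * (S.phase lam ξ u : ℂ)) =
      ∫ u in (0 : ℝ)..S.len q, (w u : ℂ) * (((lam * S.staircase u - ξ : ℝ) : ℂ) *
        Complex.exp (Complex.I * (S.phase lam ξ u : ℂ))) := by
    refine intervalIntegral.integral_congr fun u hu ↦ ?_
    rw [uIcc_of_le (S.len_pos q).le] at hu
    have hne : lam * S.staircase u - ξ ≠ 0 := abs_pos.1 ((half_pos hξ0).trans_le (hderiv hu))
    simp only [← mul_assoc, ← Complex.ofReal_mul, hw, Function.comp_apply, div_mul_cancel₀ _ hne]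
  have hstair_mono := S.staircase_monotone.monotoneOn (Icc 0 (S.len q))
  rw [hcongr, show 8 / 2 ^ q / |ξ| = 4 * (1 / 2 ^ q / (|ξ| / 2)) by ring]
  refine norm_integral_mul_deriv_mul_exp_I_le (S.len_pos q).le (S.hasDerivAt_phase lam ξ)
    (S.continuous_phase_deriv lam ξ) ?_ fun u hu ↦ ?_
  · rcases hξ.lt_or_gt with hξ | hξ
    · exact .inl ((monotoneOn_div_mul_sub lam hξ).comp hstair_mono hmaps)
    · exact .inr ((antitoneOn_div_mul_sub lam hξ).comp_MonotoneOn hstair_mono hmaps)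
  · rw [hw, Function.comp_apply, abs_div, abs_of_nonneg (S.staircase_nonneg hu.1)]
    exact div_le_div₀ (by positivity) (hstair_le hu) (half_pos hξ0) (hderiv hu)

lemma norm_integral_wave_mul_exp_tail_le (hξ : ξ ≠ 0) (hlam : 2 * (|lam| / 2 ^ q) ≤ |ξ|) :
    ‖∫ s in (0 : ℝ)..4 * S.len q,
        (S.wave q s : ℂ) * Complex.exp (Complex.I * (S.blockPhase q lam ξ s : ℂ))‖ ≤
      32 / 2 ^ q / |ξ| := by
  have hquarter {τ σ : ℝ} (hτ : |τ| = 1) (hσ : |σ| = 1) :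
      ‖S.quarterOsc q Complex.ofReal lam ξ τ σ‖ ≤ 8 / 2 ^ q / |ξ| := by
    have hτ0 : τ ≠ 0 := fun h ↦ by simp [h] at hτ
    have hle := S.norm_integral_staircase_mul_exp_le q (lam := lam * (τ * σ)) (ξ := ξ * τ)
      (mul_ne_zero hξ hτ0) (by simpa only [abs_mul, hτ, hσ, mul_one] using hlam)
    simp only [quarterOsc, Complex.ofReal_mul, mul_assoc, intervalIntegral.integral_const_mul,
      norm_mul, Complex.norm_real, Real.norm_eq_abs, hσ, one_mul] at hle ⊢
    rwa [abs_mul, hτ, mul_one] at hle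
  have hone : |(1 : ℝ)| = 1 := abs_one
  have hneg_one : |(-1 : ℝ)| = 1 := by norm_num
  refine (S.norm_integral_wave_mul_exp_le Complex.continuous_ofReal q lam ξ).trans ?_
  linarith [hquarter hone hone, hquarter hneg_one hone, hquarter hone hneg_one,
    hquarter hneg_one hneg_one, show 32 / 2 ^ q / |ξ| = 4 * (8 / 2 ^ q / |ξ|) by ring]

lemma blockOsc_eq (lam : ℝ) (hξ : ξ ≠ 0) :
    S.blockOsc q lam ξ = ((lam / ξ : ℝ) : ℂ) * ∫ s in (0 : ℝ)..4 * S.len q,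
      (S.wave q s : ℂ) * Complex.exp (Complex.I * (S.blockPhase q lam ξ s : ℂ)) := by
  have hξC : (ξ : ℂ) ≠ 0 := Complex.ofReal_ne_zero.2 hξ
  have hwave := S.continuous_wave q
  have hblock := S.continuous_block q
  set u : ℝ → ℂ := fun s ↦ Complex.exp (Complex.I * ((lam * S.block q s : ℝ) : ℂ)) - 1 with hu
  set v : ℝ → ℂ := fun s ↦
    Complex.I / ξ * Complex.exp (Complex.I * ((-(ξ * s) : ℝ) : ℂ)) with hv
  have hu_deriv (s : ℝ) : HasDerivAt u (Complex.exp (Complex.I * ((lam * S.block q s : ℝ) : ℂ)) *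
      (Complex.I * ((lam * S.wave q s : ℝ) : ℂ))) s :=
    (((S.hasDerivAt_block q s).const_mul lam).ofReal_comp.const_mul Complex.I).cexp.sub_const 1
  have hv_deriv (s : ℝ) : HasDerivAt v (Complex.exp (Complex.I * ((-(ξ * s) : ℝ) : ℂ))) s := by
    have hlin : HasDerivAt (fun s : ℝ ↦ -(ξ * s)) (-(ξ * 1)) s :=
      ((hasDerivAt_id' s).const_mul ξ).fun_neg
    refine ((hlin.ofReal_comp.const_mul Complex.I).cexp.const_mul (Complex.I / ξ)).congr_deriv ?_
    push_cast
    field_simp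
    rw [Complex.I_sq]
    ring
  have hparts := intervalIntegral.integral_mul_deriv_eq_deriv_mul (a := 0) (b := 4 * S.len q)
    (fun s _ ↦ hu_deriv s) (fun s _ ↦ hv_deriv s)
    (Continuous.intervalIntegrable (by fun_prop) _ _)
    (Continuous.intervalIntegrable (by fun_prop) _ _)
  have hu_zero : u 0 = 0 := by simp [hu, S.block_zero]
  have hu_end : u (4 * S.len q) = 0 := by simp [hu, S.block_four_mul_len]
  rw [hu_zero, hu_end, zero_mul, zero_mul, sub_zero, zero_sub] at hparts
  rw [blockOsc, hparts, ← intervalIntegral.integral_const_mul, ← intervalIntegral.integral_neg]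
  refine intervalIntegral.integral_congr fun s _ ↦ ?_
  have hexp : Complex.exp (Complex.I * (S.blockPhase q lam ξ s : ℂ)) =
      Complex.exp (Complex.I * ((lam * S.block q s : ℝ) : ℂ)) *
        Complex.exp (Complex.I * ((-(ξ * s) : ℝ) : ℂ)) := by
    rw [← Complex.exp_add, blockPhase]
    congr 1
    push_cast
    ring
  simp only [hv, hexp]
  push_cast
  field_simp
  rw [Complex.I_sq]
  ring

lemma norm_blockOsc_le_div_sq (hξ : ξ ≠ 0) (hlam : 2 * (|lam| / 2 ^ q) ≤ |ξ|) :
    ‖S.blockOsc q lam ξ‖ ≤ 32 * (|lam| / 2 ^ q) / ξ ^ 2 := by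
  rw [S.blockOsc_eq q lam hξ, norm_mul, Complex.norm_real, Real.norm_eq_abs, abs_div]
  calc |lam| / |ξ| * ‖_‖ ≤ |lam| / |ξ| * (32 / 2 ^ q / |ξ|) := by
        gcongr
        exact S.norm_integral_wave_mul_exp_tail_le q hξ hlam
    _ = 32 * (|lam| / 2 ^ q) / ξ ^ 2 := by
        rw [← sq_abs ξ]
        field_simp

end CantorScale

section PowerInequalities

variable {p : ℝ}

lemma ofReal_mul_rpow_le (hp0 : 0 ≤ p) (hp2 : p ≤ 2) {c : ℝ} (hc : 1 ≤ c) (x : ℝ) :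
    ENNReal.ofReal (c * x) ^ p ≤ ENNReal.ofReal (c ^ 2) * ENNReal.ofReal x ^ p := by
  rw [ENNReal.ofReal_mul (by linarith), ENNReal.mul_rpow_of_nonneg _ _ hp0]
  gcongr
  calc ENNReal.ofReal c ^ p ≤ ENNReal.ofReal c ^ (2 : ℝ) :=
        ENNReal.rpow_le_rpow_of_exponent_le (by simpa using hc) hp2
    _ = _ := by rw [ENNReal.rpow_two, ENNReal.ofReal_pow (by linarith)]

lemma add_rpow_le_two_mul (hp1 : 1 ≤ p) (hp2 : p ≤ 2) (x y : ℝ≥0∞) :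
    (x + y) ^ p ≤ 2 * (x ^ p + y ^ p) := by
  refine (ENNReal.rpow_add_le_mul_rpow_add_rpow x y hp1).trans ?_
  gcongr
  calc (2 : ℝ≥0∞) ^ (p - 1) ≤ 2 ^ (1 : ℝ) :=
        ENNReal.rpow_le_rpow_of_exponent_le (by norm_num) (by linarith)
    _ = 2 := ENNReal.rpow_one 2

lemma ofReal_mul_add_add_rpow_le (hp1 : 1 ≤ p) (hp2 : p ≤ 2) {c : ℝ} (hc : 1 ≤ c) (x y z : ℝ) :
    ENNReal.ofReal (c * (x + y + z)) ^ p ≤ ENNReal.ofReal (4 * c ^ 2) *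
      (ENNReal.ofReal x ^ p + ENNReal.ofReal y ^ p + ENNReal.ofReal z ^ p) := by
  have hp0 : 0 ≤ p := by linarith
  have hsum : ENNReal.ofReal (x + y + z) ^ p ≤
      4 * (ENNReal.ofReal x ^ p + ENNReal.ofReal y ^ p + ENNReal.ofReal z ^ p) := by
    calc ENNReal.ofReal (x + y + z) ^ p
        ≤ (ENNReal.ofReal x + ENNReal.ofReal y + ENNReal.ofReal z) ^ p := by
          gcongr
          exact ENNReal.ofReal_add_le.trans (by gcongr; exact ENNReal.ofReal_add_le)
      _ ≤ 2 * (2 * (ENNReal.ofReal x ^ p + ENNReal.ofReal y ^ p) + 2 * ENNReal.ofReal z ^ p) := by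
          refine (add_rpow_le_two_mul hp1 hp2 _ _).trans ?_
          gcongr
          · exact add_rpow_le_two_mul hp1 hp2 _ _
          · exact le_mul_of_one_le_left bot_le (by norm_num)
      _ = _ := by ring
  calc _ ≤ ENNReal.ofReal (c ^ 2) * _ := ofReal_mul_rpow_le hp0 hp2 hc _
    _ ≤ ENNReal.ofReal (c ^ 2) * (4 * _) := by gcongr
    _ = _ := by
      rw [ENNReal.ofReal_mul (by norm_num), ENNReal.ofReal_ofNat]
      ring

end PowerInequalities

section

variable {p : ℝ}

lemma exists_tsum_oscWeight_sq_rpow_le (hp : 1 ≤ p) :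
    ∃ D : ℝ, 0 < D ∧ ∀ r g : ℝ, 0 < r → 0 < g → g ≤ 1 → ∀ ξ : ℝ,
      ∑' k : ℤ, ENNReal.ofReal (r * oscWeight g (k - ξ) ^ 2) ^ p ≤
        ENNReal.ofReal (D * (r ^ p * g ^ (2 * p - 1))) := by
  obtain ⟨D, hD0, hD⟩ := exists_tsum_oscWeight_rpow_le (s := 2 * p) (by linarith)
  refine ⟨D, hD0, fun r g hr hg hg1 ξ ↦ ?_⟩
  have hterm (k : ℤ) : ENNReal.ofReal (r * oscWeight g (k - ξ) ^ 2) ^ p =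
      ENNReal.ofReal (r ^ p) * ENNReal.ofReal (oscWeight g (k - ξ)) ^ (2 * p) := by
    rw [ENNReal.ofReal_mul hr.le, ENNReal.mul_rpow_of_nonneg _ _ (by linarith),
      ENNReal.ofReal_rpow_of_pos hr, ENNReal.ofReal_pow (oscWeight_nonneg hg.le _),
      ENNReal.rpow_mul, ENNReal.rpow_two]
  calc _ = ENNReal.ofReal (r ^ p) * ∑' k : ℤ, ENNReal.ofReal (oscWeight g (k - ξ)) ^ (2 * p) := by
        simp only [hterm, ENNReal.tsum_mul_left]
    _ ≤ ENNReal.ofReal (r ^ p) * ENNReal.ofReal (D * g ^ (2 * p - 1)) := by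
        gcongr
        exact hD g hg hg1 ξ
    _ = _ := by
        rw [← ENNReal.ofReal_mul (by positivity)]
        congr 1
        ring

/-- The supremum over real shifts `ξ` of the `ℓ^p` sum of the weights `oscWeight g` over the
integers within distance `R` of `ξ`. -/
noncomputable def oscSum (p R g : ℝ) : ℝ≥0∞ :=
  ⨆ ξ : ℝ, ∑' k : ℤ, if |k - ξ| ≤ R then ENNReal.ofReal (oscWeight g (k - ξ)) ^ p else 0

lemma tsum_le_oscSum (p R g ξ : ℝ) :
    ∑' k : ℤ, (if |k - ξ| ≤ R then ENNReal.ofReal (oscWeight g (k - ξ)) ^ p else 0) ≤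
      oscSum p R g :=
  le_iSup (fun ξ : ℝ ↦ ∑' k : ℤ,
    if |k - ξ| ≤ R then ENNReal.ofReal (oscWeight g (k - ξ)) ^ p else 0) ξ

lemma oscSum_mono (hp : 0 ≤ p) (R : ℝ) {g g' : ℝ} (hg : 0 ≤ g) (hgg' : g ≤ g') :
    oscSum p R g ≤ oscSum p R g' := by
  refine iSup_mono fun ξ ↦ ENNReal.tsum_le_tsum fun k ↦ ?_
  split_ifs
  · gcongr
    exact oscWeight_mono_left hg hgg' _
  · exact le_rfl

lemma ofReal_inv_two_pow_mul (q : ℕ) (x : ℝ≥0∞) :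
    ENNReal.ofReal (1 / 2 ^ q) * (2 ^ q * x) = x := by
  rw [← mul_assoc, ← ENNReal.ofReal_ofNat 2, ← ENNReal.ofReal_pow (by norm_num),
    ← ENNReal.ofReal_mul (by positivity), one_div_mul_cancel (by positivity), ENNReal.ofReal_one,
    one_mul]

lemma tsum_int_eq_tsum_two_mul_add (f : ℤ → ℝ≥0∞) :
    ∑' j : ℤ, f j = ∑' k : ℤ, (f (2 * k) + f (2 * k + 1)) := by
  rw [← (Int.divModEquiv 2).symm.tsum_eq, ENNReal.tsum_prod']
  refine tsum_congr fun k ↦ ?_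
  rw [tsum_fintype, Fin.sum_univ_two]
  simp [Int.divModEquiv, mul_comm]

end

namespace CantorScale

variable (S : CantorScale)

lemma gap_two_mul (N : ℕ) (k : ℤ) : S.gap (N + 1) (2 * k) = S.gap N k := by
  rw [gap, gap, leftEnd_two_mul, show 2 * k - 1 = 2 * (k - 1) + 1 by ring,
    leftEnd_two_mul_add_one]
  ring

lemma gap_two_mul_add_one (N : ℕ) (k : ℤ) :
    S.gap (N + 1) (2 * k + 1) = S.len N - 2 * S.len (N + 1) := by
  rw [gap, leftEnd_two_mul_add_one, add_sub_cancel_right, leftEnd_two_mul]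
  ring

lemma tsum_gap (f : ℝ → ℝ≥0∞) (q d : ℕ) :
    ∑' j : ℤ, (if j ∈ Ioo (0 : ℤ) (2 ^ d) then f (S.gap (q + d) j) else 0) =
      ∑ i ∈ Finset.range d, 2 ^ i * f (S.len (q + i) - 2 * S.len (q + i + 1)) := by
  induction d with
  | zero =>
    have hempty (j : ℤ) : j ∉ Ioo (0 : ℤ) (2 ^ 0) := by
      rw [mem_Ioo]
      omega
    simp only [hempty, if_false, tsum_zero, Finset.range_zero, Finset.sum_empty]
  | succ d ih =>
    have heven (k : ℤ) : 2 * k ∈ Ioo (0 : ℤ) (2 ^ (d + 1)) ↔ k ∈ Ioo (0 : ℤ) (2 ^ d) := by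
      rw [mem_Ioo, mem_Ioo, pow_succ]
      omega
    have hodd (k : ℤ) : 2 * k + 1 ∈ Ioo (0 : ℤ) (2 ^ (d + 1)) ↔ k ∈ Finset.Ico (0 : ℤ) (2 ^ d) := by
      rw [mem_Ioo, Finset.mem_Ico, pow_succ]
      omega
    rw [tsum_int_eq_tsum_two_mul_add, ENNReal.tsum_add, Finset.sum_range_succ]
    simp only [heven, hodd, ← add_assoc, gap_two_mul, gap_two_mul_add_one, ih]
    rw [tsum_eq_sum (s := Finset.Ico (0 : ℤ) (2 ^ d)) (fun k hk ↦ if_neg hk),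
      Finset.sum_congr rfl (fun k hk ↦ if_pos hk), Finset.sum_const, Int.card_Ico, nsmul_eq_mul,
      sub_zero, show ((2 : ℤ) ^ d).toNat = 2 ^ d by exact_mod_cast Int.toNat_natCast (2 ^ d)]
    push_cast
    rfl

/-- The `p`-th powers of the gap weights at those frequencies `lam * (j / 2 ^ N)` which lie within
one dyadic step `lam / 2 ^ N` of `ξ`. -/
noncomputable def gapSum (q N : ℕ) (lam p ξ : ℝ) : ℝ≥0∞ :=
  ∑' j : ℤ, if |ξ - lam * (j / 2 ^ N)| ≤ lam / 2 ^ N then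
    ENNReal.ofReal (S.gapWeight q N lam ξ j) ^ p else 0

variable {q N : ℕ} {lam p : ℝ}

lemma ofReal_gapWeight_rpow_le_gapSum {ξ : ℝ} {k : ℤ}
    (hk : |ξ - lam * (k / 2 ^ N)| ≤ lam / 2 ^ N) :
    ENNReal.ofReal (S.gapWeight q N lam ξ k) ^ p ≤ S.gapSum q N lam p ξ := by
  refine le_trans (le_of_eq ?_) (ENNReal.le_tsum k)
  rw [if_pos hk]

lemma sum_oscSum_gap_le (hp : 0 ≤ p) (R : ℝ) :
    ∑ i ∈ Finset.range (N - q), 2 ^ i * oscSum p R (S.len (q + i) - 2 * S.len (q + i + 1)) ≤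
      ENNReal.ofReal (1 / 2 ^ q) * ∑ m ∈ Finset.range N, 2 ^ m * oscSum p R (S.len m) := by
  calc _ ≤ ∑ i ∈ Finset.range (N - q), 2 ^ i * oscSum p R (S.len (q + i)) := by
        gcongr with i
        have := S.two_mul_len_succ_lt (q + i)
        have := S.len_pos (q + i + 1)
        exact oscSum_mono hp R (by linarith) (by linarith)
    _ = ENNReal.ofReal (1 / 2 ^ q) *
          ∑ i ∈ Finset.range (N - q), 2 ^ (q + i) * oscSum p R (S.len (q + i)) := by
        simp only [pow_add, mul_assoc, ← Finset.mul_sum, ofReal_inv_two_pow_mul]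
    _ = ENNReal.ofReal (1 / 2 ^ q) * ∑ m ∈ Finset.Ico q N, 2 ^ m * oscSum p R (S.len m) := by
        rw [Finset.sum_Ico_eq_sum_range]
    _ ≤ _ := by
        gcongr
        exact Finset.Ico_subset_Ico_left (Nat.zero_le q) |>.trans_eq (by simp)

lemma tsum_gapSum_le (hp : 0 < p) (hqN : q ≤ N) (ξ : ℝ) :
    ∑' k : ℤ, S.gapSum q N lam p (k - ξ) ≤ ENNReal.ofReal (1 / 2 ^ q) *
      ∑ m ∈ Finset.range N, 2 ^ m * oscSum p (lam / 2 ^ N) (S.len m) := by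
  refine le_trans ?_ (S.sum_oscSum_gap_le hp.le (lam / 2 ^ N))
  rw [← S.tsum_gap (oscSum p (lam / 2 ^ N)) q (N - q), Nat.add_sub_cancel' hqN]
  simp only [gapSum]
  rw [ENNReal.tsum_comm]
  refine ENNReal.tsum_le_tsum fun j ↦ ?_
  split_ifs with hj
  · simp only [gapWeight, if_pos hj, sub_sub]
    exact tsum_le_oscSum p _ _ _
  · simp [gapWeight, hj, hp]

lemma tsum_gapSum_neg_le (hp : 0 < p) (hqN : q ≤ N) (ξ : ℝ) :
    ∑' k : ℤ, S.gapSum q N lam p (-(k - ξ)) ≤ ENNReal.ofReal (1 / 2 ^ q) *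
      ∑ m ∈ Finset.range N, 2 ^ m * oscSum p (lam / 2 ^ N) (S.len m) := by
  rw [← (Equiv.neg ℤ).tsum_eq]
  refine le_trans (le_of_eq (tsum_congr fun k ↦ ?_)) (S.tsum_gapSum_le hp hqN (-ξ))
  rw [Equiv.neg_apply, Int.cast_neg, neg_sub, sub_neg_eq_add, sub_neg_eq_add, add_comm]

end CantorScale

section

variable {p : ℝ}

lemma rpow_mul_rpow_le_of_le_inv (hp : 1 ≤ p) {r g a A : ℝ} (hr : 0 < r) (hg : 0 ≤ g) (ha : 0 < a)
    (hA : 0 ≤ A) (hra : r ≤ 1 / a) (hga : g ≤ A * a) :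
    r ^ p * g ^ (2 * p - 1) ≤ A ^ (2 * p - 1) * (r * a ^ p) := by
  calc r ^ p * g ^ (2 * p - 1) = r * r ^ (p - 1) * g ^ (2 * p - 1) := by
        rw [← Real.rpow_one_add' hr.le (by linarith), add_sub_cancel]
    _ ≤ r * (1 / a) ^ (p - 1) * (A * a) ^ (2 * p - 1) := by
        gcongr
        all_goals linarith
    _ = A ^ (2 * p - 1) * (r * (a ^ (2 * p - 1) / a ^ (p - 1))) := by
        rw [Real.mul_rpow hA ha.le, one_div, Real.inv_rpow ha.le]
        ring
    _ = A ^ (2 * p - 1) * (r * a ^ p) := by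
        rw [← Real.rpow_sub ha]
        ring_nf

lemma rpow_mul_inv_rpow_le (hp : 0 ≤ p) {r a : ℝ} (hr : 0 < r) (hra : 1 / r ≤ a) :
    r ^ p * (1 / r) ^ (2 * p - 1) ≤ r * a ^ p := by
  calc r ^ p * (1 / r) ^ (2 * p - 1) = r ^ (p + -(2 * p - 1)) := by
        rw [one_div, Real.inv_rpow hr.le, Real.rpow_add hr, Real.rpow_neg hr.le]
    _ = r ^ (1 + -p) := by ring_nf
    _ = r * (1 / r) ^ p := by
        rw [one_div, Real.inv_rpow hr.le, Real.rpow_add hr, Real.rpow_one, Real.rpow_neg hr.le]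
    _ ≤ r * a ^ p := by gcongr

lemma inv_abs_le_oscWeight {r ξ : ℝ} (hr : 0 < r) (hξ : 2 * r ≤ |ξ|) :
    1 / |ξ| ≤ 3 / 2 * oscWeight (1 / r) ξ := by
  have hξ0 : 0 < |ξ| := by linarith
  rw [oscWeight, show 1 / r / (1 + 1 / r * |ξ|) = 1 / (r + |ξ|) by field_simp, mul_one_div,
    div_le_div_iff₀ hξ0 (by positivity)]
  linarith

end

namespace CantorScale

variable (S : CantorScale) {q N : ℕ} {lam p A : ℝ}

lemma norm_blockOsc_le_oscWeight_sq (hlam : 0 < lam) (hA : 0 ≤ A)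
    (hq : lam / 2 ^ q * S.len q ≤ A) (ξ : ℝ) :
    ‖S.blockOsc q lam ξ‖ ≤ 32 * (3 + 2 * A) ^ 2 * (lam / 2 ^ q) * oscWeight (S.len q) ξ ^ 2 := by
  have hlen := S.len_pos q
  rcases le_total (S.len q * |ξ|) (2 * (1 + A)) with hξ | hξ
  · have hweight : S.len q ≤ (3 + 2 * A) * oscWeight (S.len q) ξ := by
      rw [oscWeight, ← mul_div_assoc, le_div_iff₀ (by positivity), mul_comm]
      exact mul_le_mul_of_nonneg_right (by linarith) hlen.le
    calc ‖S.blockOsc q lam ξ‖ ≤ 16 * (lam / 2 ^ q) * S.len q ^ 2 :=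
          S.norm_blockOsc_le_sq_len q hlam.le ξ
      _ ≤ 32 * (lam / 2 ^ q) * ((3 + 2 * A) * oscWeight (S.len q) ξ) ^ 2 := by
          gcongr
          norm_num
      _ = _ := by ring
  · have hξ0 : 0 < |ξ| := pos_of_mul_pos_right (by linarith) hlen.le
    have hlarge : 2 * (lam / 2 ^ q) ≤ |ξ| := by
      refine le_of_mul_le_mul_left ?_ hlen
      linarith
    have hweight : 1 / |ξ| ≤ (3 + 2 * A) * oscWeight (S.len q) ξ := by
      rw [oscWeight, ← mul_div_assoc, div_le_div_iff₀ hξ0 (by positivity)]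
      nlinarith [mul_nonneg hA (by linarith : 0 ≤ S.len q * |ξ|)]
    calc ‖S.blockOsc q lam ξ‖ ≤ 32 * (|lam| / 2 ^ q) / ξ ^ 2 :=
          S.norm_blockOsc_le_div_sq q (abs_pos.1 hξ0) (by rwa [abs_of_pos hlam])
      _ = 32 * (lam / 2 ^ q) * (1 / |ξ|) ^ 2 := by
          rw [abs_of_pos hlam, one_div_pow, sq_abs]
          ring
      _ ≤ 32 * (lam / 2 ^ q) * ((3 + 2 * A) * oscWeight (S.len q) ξ) ^ 2 := by gcongr
      _ = _ := by ring

lemma exists_tsum_blockOsc_le_of_le (hp : 1 ≤ p) (hA : 0 < A) :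
    ∃ C : ℝ, 0 < C ∧ ∀ (S : CantorScale) (lam : ℝ) (N q : ℕ), 0 < lam →
      S.len N ≤ A * (2 ^ N / lam) → N ≤ q → ∀ ξ : ℝ,
        ∑' k : ℤ, ENNReal.ofReal ‖S.blockOsc q lam (k - ξ)‖ ^ p ≤
          ENNReal.ofReal (C * (lam / 2 ^ q * (2 ^ N / lam) ^ p)) := by
  obtain ⟨D, hD0, hD⟩ := exists_tsum_oscWeight_sq_rpow_le hp
  set κ := 32 * (3 + 2 * A) ^ 2
  have hκ0 : 0 < κ := by positivity
  refine ⟨D * κ ^ p * A ^ (2 * p - 1), by positivity, fun S lam N q hlam hN hNq ξ ↦ ?_⟩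
  have hr0 : 0 < lam / 2 ^ q := by positivity
  have ha0 : 0 < 2 ^ N / lam := by positivity
  have hra : lam / 2 ^ q ≤ 1 / (2 ^ N / lam) := by
    rw [one_div_div]
    gcongr
    norm_num
  have hlen : S.len q ≤ A * (2 ^ N / lam) := (S.len_antitone hNq).trans hN
  have hlenA : lam / 2 ^ q * S.len q ≤ A := by
    calc lam / 2 ^ q * S.len q ≤ 1 / (2 ^ N / lam) * (A * (2 ^ N / lam)) := by
          have := S.len_pos q
          gcongr
      _ = A := by field_simp
  calc ∑' k : ℤ, ENNReal.ofReal ‖S.blockOsc q lam (k - ξ)‖ ^ p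
      ≤ ∑' k : ℤ, ENNReal.ofReal (κ * (lam / 2 ^ q) * oscWeight (S.len q) (k - ξ) ^ 2) ^ p := by
        gcongr with k
        exact S.norm_blockOsc_le_oscWeight_sq hlam hA.le hlenA _
    _ ≤ ENNReal.ofReal (D * ((κ * (lam / 2 ^ q)) ^ p * S.len q ^ (2 * p - 1))) :=
        hD _ _ (by positivity) (S.len_pos q) (S.len_le_one q) ξ
    _ ≤ _ := by
        refine ENNReal.ofReal_le_ofReal ?_
        rw [Real.mul_rpow hκ0.le hr0.le, mul_assoc (κ ^ p), mul_assoc (D * κ ^ p), ← mul_assoc D]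
        refine mul_le_mul_of_nonneg_left ?_ (by positivity)
        exact rpow_mul_rpow_le_of_le_inv hp hr0 (S.len_pos q).le ha0 hA.le hra hlen

lemma norm_osc_rpow_le (hp1 : 1 ≤ p) (hp2 : p ≤ 2) (hA : 0 ≤ A) (hlam : 0 < lam) (hqN : q ≤ N)
    (hN : S.len N ≤ A * (2 ^ N / lam)) (ξ : ℝ) :
    ENNReal.ofReal ‖S.osc q lam ξ‖ ^ p ≤ ENNReal.ofReal (8 * (8 + 3 * A) ^ 2) *
      (ENNReal.ofReal (2 ^ N / lam) ^ p + S.gapSum q N lam p ξ) := by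
  obtain ⟨k, hk, hk', hosc⟩ := S.exists_norm_osc_le hqN hlam ξ
  have hW := S.gapWeight_nonneg q N lam ξ k
  have hW' := S.gapWeight_nonneg q N lam ξ (k + 1)
  have hbound : ‖S.osc q lam ξ‖ ≤ (8 + 3 * A) *
      (2 ^ N / lam + S.gapWeight q N lam ξ k + S.gapWeight q N lam ξ (k + 1)) := by
    nlinarith [mul_nonneg hA hW, mul_nonneg hA hW']
  have hsum := ofReal_mul_add_add_rpow_le hp1 hp2 (by linarith : 1 ≤ 8 + 3 * A) (2 ^ N / lam)
    (S.gapWeight q N lam ξ k) (S.gapWeight q N lam ξ (k + 1))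
  calc _ ≤ ENNReal.ofReal _ ^ p := by gcongr
    _ ≤ _ := hsum
    _ ≤ ENNReal.ofReal (4 * (8 + 3 * A) ^ 2) * (ENNReal.ofReal (2 ^ N / lam) ^ p +
          S.gapSum q N lam p ξ + S.gapSum q N lam p ξ) := by
        gcongr
        · exact S.ofReal_gapWeight_rpow_le_gapSum hk
        · exact S.ofReal_gapWeight_rpow_le_gapSum hk'
    _ ≤ ENNReal.ofReal (4 * (8 + 3 * A) ^ 2) *
          (2 * (ENNReal.ofReal (2 ^ N / lam) ^ p + S.gapSum q N lam p ξ)) := by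
        gcongr
        rw [two_mul]
        gcongr
        exact le_add_self
    _ = _ := by
        rw [← mul_assoc, ← ENNReal.ofReal_ofNat 2, ← ENNReal.ofReal_mul (by positivity)]
        ring_nf

/-- The contribution of the low frequency `ξ` to the `p`-th power of `blockOsc q lam`. -/
noncomputable def nearSum (q N : ℕ) (lam p ξ : ℝ) : ℝ≥0∞ :=
  (if |ξ| ≤ 2 * (lam / 2 ^ q) then 1 else 0) * (3 * ENNReal.ofReal (2 ^ N / lam) ^ p) +
    S.gapSum q N lam p ξ + S.gapSum q N lam p (-ξ) +
    (if |ξ| ≤ lam / 2 ^ N then ENNReal.ofReal (oscWeight (S.len q) ξ) ^ p else 0)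

lemma oscWeight_rpow_le (hp : 0 ≤ p) (hlam : 0 < lam) (ξ : ℝ) :
    ENNReal.ofReal (oscWeight (S.len q) ξ) ^ p ≤ ENNReal.ofReal (2 ^ N / lam) ^ p +
      (if |ξ| ≤ lam / 2 ^ N then ENNReal.ofReal (oscWeight (S.len q) ξ) ^ p else 0) := by
  split_ifs with hξ
  · exact le_add_self
  · push Not at hξ
    have hR : 0 < lam / 2 ^ N := by positivity
    have hξ0 : 0 < |ξ| := hR.trans hξ
    have hlen := S.len_pos q
    rw [add_zero]
    gcongr
    calc oscWeight (S.len q) ξ ≤ 1 / |ξ| := by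
          rw [oscWeight, div_le_div_iff₀ (by positivity) hξ0]
          linarith
      _ ≤ 1 / (lam / 2 ^ N) := by gcongr
      _ = 2 ^ N / lam := one_div_div _ _

lemma norm_blockOsc_rpow_le_nearSum (hp1 : 1 ≤ p) (hp2 : p ≤ 2) (hA : 0 ≤ A) (hlam : 0 < lam)
    (hqN : q ≤ N) (hN : S.len N ≤ A * (2 ^ N / lam)) {ξ : ℝ} (hξ : |ξ| ≤ 2 * (lam / 2 ^ q)) :
    ENNReal.ofReal ‖S.blockOsc q lam ξ‖ ^ p ≤
      ENNReal.ofReal (12800 * (8 + 3 * A) ^ 2) * S.nearSum q N lam p ξ := by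
  set c := ENNReal.ofReal (8 * (8 + 3 * A) ^ 2) with hc
  have hc1 : 1 ≤ c := by
    rw [hc, ENNReal.one_le_ofReal]
    nlinarith
  set a := ENNReal.ofReal (2 ^ N / lam) ^ p
  set W : ℝ≥0∞ := if |ξ| ≤ lam / 2 ^ N then ENNReal.ofReal (oscWeight (S.len q) ξ) ^ p else 0
  have hbound : ‖S.blockOsc q lam ξ‖ ≤
      20 * (‖S.osc q lam ξ‖ + ‖S.osc q lam (-ξ)‖ + oscWeight (S.len q) ξ) := by
    linarith [S.norm_blockOsc_le_osc q lam ξ, norm_nonneg (S.osc q lam ξ),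
      norm_nonneg (S.osc q lam (-ξ))]
  calc _ ≤ ENNReal.ofReal _ ^ p := by gcongr
    _ ≤ _ := ofReal_mul_add_add_rpow_le hp1 hp2 (by norm_num) _ _ _
    _ ≤ ENNReal.ofReal (4 * 20 ^ 2) * (c * (a + S.gapSum q N lam p ξ) +
          c * (a + S.gapSum q N lam p (-ξ)) + c * (a + W)) := by
        gcongr
        · exact S.norm_osc_rpow_le hp1 hp2 hA hlam hqN hN ξ
        · exact S.norm_osc_rpow_le hp1 hp2 hA hlam hqN hN (-ξ)
        · exact (S.oscWeight_rpow_le (by linarith) hlam ξ).trans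
            (le_mul_of_one_le_left bot_le hc1)
    _ = ENNReal.ofReal (4 * 20 ^ 2) * c * S.nearSum q N lam p ξ := by
        rw [nearSum, if_pos hξ]
        ring
    _ = _ := by
        rw [hc, ← ENNReal.ofReal_mul (by norm_num)]
        ring_nf

lemma norm_blockOsc_le_tail (hlam : 0 < lam) {ξ : ℝ} (hξ : 2 * (lam / 2 ^ q) ≤ |ξ|) :
    ‖S.blockOsc q lam ξ‖ ≤ 72 * (lam / 2 ^ q) * oscWeight (1 / (lam / 2 ^ q)) ξ ^ 2 := by
  have hr0 : 0 < lam / 2 ^ q := by positivity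
  have hξ0 : 0 < |ξ| := by linarith
  calc ‖S.blockOsc q lam ξ‖ ≤ 32 * (|lam| / 2 ^ q) / ξ ^ 2 :=
        S.norm_blockOsc_le_div_sq q (abs_pos.1 hξ0) (by rwa [abs_of_pos hlam])
    _ = 32 * (lam / 2 ^ q) * (1 / |ξ|) ^ 2 := by
        rw [abs_of_pos hlam, one_div_pow, sq_abs]
        ring
    _ ≤ 32 * (lam / 2 ^ q) * (3 / 2 * oscWeight (1 / (lam / 2 ^ q)) ξ) ^ 2 := by
        gcongr
        exact inv_abs_le_oscWeight hr0 hξ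
    _ = _ := by ring

lemma norm_blockOsc_rpow_le (hp1 : 1 ≤ p) (hp2 : p ≤ 2) (hA : 0 ≤ A) (hlam : 0 < lam)
    (hqN : q ≤ N) (hN : S.len N ≤ A * (2 ^ N / lam)) (ξ : ℝ) :
    ENNReal.ofReal ‖S.blockOsc q lam ξ‖ ^ p ≤
      ENNReal.ofReal (12800 * (8 + 3 * A) ^ 2) * S.nearSum q N lam p ξ +
        ENNReal.ofReal (72 * (lam / 2 ^ q) * oscWeight (1 / (lam / 2 ^ q)) ξ ^ 2) ^ p := by
  rcases le_total |ξ| (2 * (lam / 2 ^ q)) with hξ | hξ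
  · exact (S.norm_blockOsc_rpow_le_nearSum hp1 hp2 hA hlam hqN hN hξ).trans le_self_add
  · refine le_trans ?_ le_add_self
    gcongr
    exact S.norm_blockOsc_le_tail hlam hξ

lemma tsum_nearSum_le (hp : 0 < p) (hlam : 0 < lam) (hqN : q < N) (hq : 1 ≤ lam / 2 ^ q) (ξ : ℝ) :
    ∑' k : ℤ, S.nearSum q N lam p (k - ξ) ≤
      18 * ENNReal.ofReal (lam / 2 ^ q * (2 ^ N / lam) ^ p) + 3 * (ENNReal.ofReal (1 / 2 ^ q) *
        ∑ m ∈ Finset.range N, 2 ^ m * oscSum p (lam / 2 ^ N) (S.len m)) := by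
  set r := lam / 2 ^ q
  set a := 2 ^ N / lam
  have ha0 : 0 < a := by positivity
  set T := ENNReal.ofReal (1 / 2 ^ q) *
    ∑ m ∈ Finset.range N, 2 ^ m * oscSum p (lam / 2 ^ N) (S.len m) with hT
  have hcount : ∑' k : ℤ, (if |(k : ℝ) - ξ| ≤ 2 * r then 1 else 0) * (3 * ENNReal.ofReal a ^ p) ≤
      18 * ENNReal.ofReal (r * a ^ p) := by
    rw [ENNReal.tsum_mul_right, ENNReal.ofReal_mul (by positivity : 0 ≤ r),
      ← ENNReal.ofReal_rpow_of_pos ha0]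
    calc _ ≤ ENNReal.ofReal (2 * (2 * r) + 2) * (3 * ENNReal.ofReal a ^ p) := by
          gcongr
          exact tsum_ite_abs_sub_le_one_le (2 * r) ξ
      _ ≤ ENNReal.ofReal (6 * r) * (3 * ENNReal.ofReal a ^ p) := by
          gcongr
          linarith
      _ = _ := by
          rw [ENNReal.ofReal_mul (by norm_num), ENNReal.ofReal_ofNat]
          ring
  have hweight : ∑' k : ℤ, (if |(k : ℝ) - ξ| ≤ lam / 2 ^ N then
      ENNReal.ofReal (oscWeight (S.len q) (k - ξ)) ^ p else 0) ≤ T := by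
    refine (tsum_le_oscSum p (lam / 2 ^ N) (S.len q) ξ).trans ?_
    rw [← ofReal_inv_two_pow_mul q (oscSum p (lam / 2 ^ N) (S.len q)), hT]
    gcongr
    exact Finset.single_le_sum (f := fun m ↦ 2 ^ m * oscSum p (lam / 2 ^ N) (S.len m))
      (fun _ _ ↦ bot_le) (Finset.mem_range.2 hqN)
  simp only [nearSum]
  rw [ENNReal.tsum_add, ENNReal.tsum_add, ENNReal.tsum_add]
  calc _ ≤ 18 * ENNReal.ofReal (r * a ^ p) + T + T + T := by
        gcongr
        · exact S.tsum_gapSum_le hp hqN.le ξ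
        · exact S.tsum_gapSum_neg_le hp hqN.le ξ
    _ = _ := by ring

lemma exists_tsum_mul_oscWeight_sq_rpow_le (hp : 1 ≤ p) :
    ∃ C : ℝ, 0 < C ∧ ∀ r a ξ : ℝ, 1 ≤ r → 1 / r ≤ a →
      ∑' k : ℤ, ENNReal.ofReal (72 * r * oscWeight (1 / r) (k - ξ) ^ 2) ^ p ≤
        ENNReal.ofReal C * ENNReal.ofReal (r * a ^ p) := by
  obtain ⟨D, hD0, hD⟩ := exists_tsum_oscWeight_sq_rpow_le hp
  refine ⟨D * 72 ^ p, by positivity, fun r a ξ hr ha ↦ ?_⟩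
  have hr0 : 0 < r := by positivity
  refine (hD _ _ (by positivity) (by positivity) ((div_le_one hr0).2 hr) ξ).trans ?_
  rw [← ENNReal.ofReal_mul (by positivity)]
  refine ENNReal.ofReal_le_ofReal ?_
  rw [Real.mul_rpow (by norm_num) hr0.le, mul_assoc (72 ^ p), ← mul_assoc D]
  exact mul_le_mul_of_nonneg_left (rpow_mul_inv_rpow_le (by linarith) hr0 ha) (by positivity)

lemma exists_tsum_blockOsc_le_of_lt (hp1 : 1 ≤ p) (hp2 : p ≤ 2) (hA : 0 < A) :
    ∃ C : ℝ, 0 < C ∧ ∀ (S : CantorScale) (lam : ℝ) (N q : ℕ), 0 < lam →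
      S.len N ≤ A * (2 ^ N / lam) → q < N → 1 ≤ lam / 2 ^ q → ∀ ξ : ℝ,
        ∑' k : ℤ, ENNReal.ofReal ‖S.blockOsc q lam (k - ξ)‖ ^ p ≤
          ENNReal.ofReal C * (ENNReal.ofReal (lam / 2 ^ q * (2 ^ N / lam) ^ p) +
            ENNReal.ofReal (1 / 2 ^ q) *
              ∑ m ∈ Finset.range N, 2 ^ m * oscSum p (lam / 2 ^ N) (S.len m)) := by
  obtain ⟨D, hD0, hD⟩ := exists_tsum_mul_oscWeight_sq_rpow_le hp1
  set c := 12800 * (8 + 3 * A) ^ 2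
  refine ⟨18 * c + D, by positivity, fun S lam N q hlam hN hqN hq ξ ↦ ?_⟩
  set r := lam / 2 ^ q with hr
  set X := ENNReal.ofReal (r * (2 ^ N / lam) ^ p)
  set T := ENNReal.ofReal (1 / 2 ^ q) *
    ∑ m ∈ Finset.range N, 2 ^ m * oscSum p (lam / 2 ^ N) (S.len m)
  have htail : ∑' k : ℤ, ENNReal.ofReal (72 * r * oscWeight (1 / r) (k - ξ) ^ 2) ^ p ≤
      ENNReal.ofReal D * X := by
    refine hD r _ ξ hq ?_
    rw [hr, one_div_div]
    gcongr
    norm_num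
  have hC : ENNReal.ofReal (18 * c + D) = 18 * ENNReal.ofReal c + ENNReal.ofReal D := by
    rw [ENNReal.ofReal_add (by positivity) (by positivity), ENNReal.ofReal_mul (by norm_num),
      ENNReal.ofReal_ofNat]
  calc _ ≤ ∑' k : ℤ, (ENNReal.ofReal c * S.nearSum q N lam p (k - ξ) +
          ENNReal.ofReal (72 * r * oscWeight (1 / r) (k - ξ) ^ 2) ^ p) := by
        gcongr with k
        exact S.norm_blockOsc_rpow_le hp1 hp2 hA.le hlam hqN.le hN _
    _ ≤ ENNReal.ofReal c * (18 * X + 3 * T) + ENNReal.ofReal D * X := by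
        rw [ENNReal.tsum_add, ENNReal.tsum_mul_left]
        gcongr
        exact S.tsum_nearSum_le (by linarith) hlam hqN hq ξ
    _ = (18 * ENNReal.ofReal c + ENNReal.ofReal D) * X + 3 * ENNReal.ofReal c * T := by ring
    _ ≤ _ := by
        rw [hC, mul_add]
        gcongr
        refine le_trans ?_ le_self_add
        gcongr
        norm_num

theorem exists_tsum_blockOsc_le (hp1 : 1 ≤ p) (hp2 : p ≤ 2) (hA : 0 < A) :
    ∃ C : ℝ, 0 < C ∧ ∀ (S : CantorScale) (lam : ℝ) (N : ℕ), 0 < lam →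
      S.len N ≤ A * (2 ^ N / lam) → (∀ q < N, 1 ≤ lam / 2 ^ q) → ∀ (q : ℕ) (ξ : ℝ),
        ∑' k : ℤ, ENNReal.ofReal ‖S.blockOsc q lam (k - ξ)‖ ^ p ≤
          ENNReal.ofReal C * ENNReal.ofReal (1 / 2 ^ q) *
            (ENNReal.ofReal (lam * (2 ^ N / lam) ^ p) +
              ∑ m ∈ Finset.range N, 2 ^ m * oscSum p (lam / 2 ^ N) (S.len m)) := by
  obtain ⟨C₁, hC₁, hlt⟩ := exists_tsum_blockOsc_le_of_lt hp1 hp2 hA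
  obtain ⟨C₂, hC₂, hle⟩ := exists_tsum_blockOsc_le_of_le hp1 hA
  refine ⟨C₁ + C₂, by positivity, fun S lam N hlam hN hN1 q ξ ↦ ?_⟩
  have hscale : ENNReal.ofReal (lam / 2 ^ q * (2 ^ N / lam) ^ p) =
      ENNReal.ofReal (1 / 2 ^ q) * ENNReal.ofReal (lam * (2 ^ N / lam) ^ p) := by
    rw [← ENNReal.ofReal_mul (by positivity)]
    ring_nf
  rcases lt_or_ge q N with hq | hq
  · refine (hlt S lam N q hlam hN hq (hN1 q hq) ξ).trans ?_
    rw [hscale, ← mul_add, mul_assoc]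
    gcongr
    linarith
  · refine (hle S lam N q hlam hN hq ξ).trans ?_
    rw [ENNReal.ofReal_mul hC₂.le, hscale, mul_assoc]
    gcongr
    · linarith
    · exact le_self_add

end CantorScale

/-! ### Moduli of continuity -/

/-- A modulus of continuity `ω` for which `χ δ = δ * ω δ` is strictly increasing and has the inverse
`χinv` on `[0, ∞)`. -/
structure IsModulus (ω χinv : ℝ → ℝ) : Prop where
  continuousOn : ContinuousOn ω (Ici 0)
  monotoneOn : MonotoneOn ω (Ici 0)
  zero : ω 0 = 0
  pos : ∀ δ, 0 < δ → 0 < ω δ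
  strictMonoOn : StrictMonoOn (fun δ ↦ δ * ω δ) (Ici 0)
  left_inv : ∀ δ, 0 ≤ δ → χinv (δ * ω δ) = δ
  right_inv : ∀ y, 0 ≤ y → 0 ≤ χinv y ∧ χinv y * ω (χinv y) = y

namespace IsModulus

variable {ω χinv : ℝ → ℝ} {d e y z : ℝ}

lemma le (h : IsModulus ω χinv) (hd : 0 ≤ d) (hde : d ≤ e) : ω d ≤ ω e :=
  h.monotoneOn hd (hd.trans hde) hde

lemma nonneg (h : IsModulus ω χinv) (hd : 0 ≤ d) : 0 ≤ ω d :=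
  h.zero.ge.trans (h.le le_rfl hd)

lemma lt_of_lt (h : IsModulus ω χinv) (he : 0 ≤ e) (hde : ω d < ω e) : d < e :=
  lt_of_not_ge fun hed ↦ hde.not_ge (h.le he hed)

lemma inv_nonneg (h : IsModulus ω χinv) (hy : 0 ≤ y) : 0 ≤ χinv y := (h.right_inv y hy).1

lemma inv_mul_inv (h : IsModulus ω χinv) (hy : 0 ≤ y) : χinv y * ω (χinv y) = y :=
  (h.right_inv y hy).2

lemma inv_pos (h : IsModulus ω χinv) (hy : 0 < y) : 0 < χinv y := by
  refine (h.inv_nonneg hy.le).lt_of_ne fun h0 ↦ hy.ne ?_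
  rw [← h.inv_mul_inv hy.le, ← h0, zero_mul]

lemma inv_mono (h : IsModulus ω χinv) (hy : 0 ≤ y) (hyz : y ≤ z) : χinv y ≤ χinv z := by
  have hz := hy.trans hyz
  refine (h.strictMonoOn.le_iff_le (h.inv_nonneg hy) (h.inv_nonneg hz)).1 ?_
  simpa only [h.inv_mul_inv hy, h.inv_mul_inv hz] using hyz

lemma inv_le (h : IsModulus ω χinv) (hy : 0 ≤ y) (hd : 0 ≤ d) (hyd : y ≤ d * ω d) :
    χinv y ≤ d :=
  (h.inv_mono hy hyd).trans_eq (h.left_inv d hd)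

lemma antitoneOn_inv_rpow (h : IsModulus ω χinv) {p : ℝ} (hp : 0 ≤ p) :
    AntitoneOn (fun τ ↦ χinv (1 / τ) ^ p) (Ioi 0) := by
  intro x hx y hy hxy
  have hy' : 0 ≤ 1 / y := one_div_nonneg.2 (le_of_lt hy)
  exact rpow_le_rpow (h.inv_nonneg hy') (h.inv_mono hy' (one_div_le_one_div_of_le hx hxy)) hp

lemma inv_rpow_nonneg (h : IsModulus ω χinv) (p : ℝ) {τ : ℝ} (hτ : 0 < τ) :
    0 ≤ χinv (1 / τ) ^ p :=
  rpow_nonneg (h.inv_nonneg (one_div_nonneg.2 hτ.le)) p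

lemma two_pow_mul_le_max (h : IsModulus ω χinv) {θ : ℝ} (hd : 0 ≤ d) (hde : d ≤ e) {n : ℕ}
    (hn : ∀ m < n, ω d ≤ θ / 2 ^ m) : 2 ^ n * ω d ≤ max (2 * θ) (ω e) := by
  cases n with
  | zero =>
    rw [pow_zero, one_mul]
    exact (h.le hd hde).trans (le_max_right _ _)
  | succ n =>
    refine le_trans ?_ (le_max_left _ _)
    calc (2:ℝ) ^ (n + 1) * ω d ≤ 2 ^ (n + 1) * (θ / 2 ^ n) := by gcongr; exact hn n n.lt_succ_self
      _ = 2 * θ := by rw [pow_succ]; field_simp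

end IsModulus

namespace CantorScale

/-- The lengths of the scale are those at which `ω` takes the values `θ / 2 ^ m`, so that the
staircase function has modulus of continuity `O(ω)`. -/
structure IsAdapted (S : CantorScale) (ω : ℝ → ℝ) (θ : ℝ) : Prop where
  pos : 0 < θ
  apply_len : ∀ m, ω (S.len m) = θ / 2 ^ m
  len_zero_mul_le : S.len 0 * θ ≤ 1 / 2

/-- `N` is the first generation with `S.len N ≤ χ⁻¹(1 / lam)`, where `χ δ = δ * ω δ`. -/
structure IsCutoff (S : CantorScale) (ω : ℝ → ℝ) (lam : ℝ) (N : ℕ) : Prop where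
  mul_le_one : lam * (S.len N * ω (S.len N)) ≤ 1
  one_lt_mul : ∀ m < N, 1 < lam * (S.len m * ω (S.len m))

variable {S : CantorScale} {ω χinv : ℝ → ℝ} {θ lam : ℝ} {N : ℕ}

lemma exists_isAdapted (h : IsModulus ω χinv)
    (hω : ∃ δ₀ : ℝ, 0 < δ₀ ∧ ∀ δ : ℝ, 0 < δ → δ < δ₀ → ω (2 * δ) < 2 * ω δ) :
    ∃ (S : CantorScale) (θ : ℝ), S.IsAdapted ω θ := by
  obtain ⟨δ₀, hδ₀, hω⟩ := hω
  have hχ := h.inv_pos (y := 1 / 2) (by norm_num)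
  obtain ⟨L, hL, hL1, hLδ, hLχ⟩ : ∃ L, 0 < L ∧ L ≤ 1 ∧ L ≤ δ₀ / 2 ∧ L ≤ χinv (1 / 2) :=
    ⟨min 1 (min (δ₀ / 2) (χinv (1 / 2))), by positivity, min_le_left _ _,
      (min_le_right _ _).trans (min_le_left _ _), (min_le_right _ _).trans (min_le_right _ _)⟩
  have hωL := h.pos L hL
  have exists_len (m : ℕ) : ∃ x ∈ Icc 0 L, ω x = ω L / 2 ^ m := by
    refine intermediate_value_Icc hL.le (h.continuousOn.mono fun x hx ↦ hx.1) ⟨?_, ?_⟩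
    · rw [h.zero]; positivity
    · exact div_le_self hωL.le (one_le_pow₀ one_le_two)
  choose len hlen ω_len using exists_len
  have len_pos (m : ℕ) : 0 < len m := by
    refine (hlen m).1.lt_of_ne fun h0 ↦ ?_
    have := ω_len m
    rw [← h0, h.zero] at this
    exact this.not_lt (by positivity)
  have two_mul_len_succ_lt (m : ℕ) : 2 * len (m + 1) < len m := by
    refine h.lt_of_lt (len_pos m).le ?_
    calc ω (2 * len (m + 1)) < 2 * ω (len (m + 1)) :=
          hω _ (len_pos _) (by linarith [(hlen (m + 1)).2, len_pos (m + 1)])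
      _ = ω (len m) := by rw [ω_len, ω_len, pow_succ]; field_simp
  refine ⟨⟨len, len_pos, two_mul_len_succ_lt, (hlen 0).2.trans hL1⟩, ω L, hωL, ω_len, ?_⟩
  calc len 0 * ω L ≤ L * ω L := by gcongr; exact (hlen 0).2
    _ ≤ χinv (1 / 2) * ω (χinv (1 / 2)) := h.strictMonoOn.monotoneOn hL.le hχ.le hLχ
    _ = 1 / 2 := h.inv_mul_inv (by norm_num)

lemma IsAdapted.exists_isCutoff (hS : S.IsAdapted ω θ) (hlam : 0 < lam) :
    ∃ N, S.IsCutoff ω lam N := by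
  classical
  have hex : ∃ N, lam * (S.len N * ω (S.len N)) ≤ 1 := by
    have hθ := hS.pos
    have hsmall := S.tendsto_len.eventually_le_const (u := 1 / (lam * θ)) (by positivity)
    obtain ⟨n, hn⟩ := hsmall.exists
    refine ⟨n, ?_⟩
    have := S.len_pos n
    calc lam * (S.len n * ω (S.len n)) ≤ lam * (1 / (lam * θ) * θ) := by
          rw [hS.apply_len]
          gcongr
          exact div_le_self hθ.le (one_le_pow₀ one_le_two)
      _ = 1 := by field_simp
  exact ⟨Nat.find hex, Nat.find_spec hex, fun m hm ↦ not_le.1 (Nat.find_min hex hm)⟩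

namespace IsCutoff

lemma len_le (hN : S.IsCutoff ω lam N) (hS : S.IsAdapted ω θ) (hlam : 0 < lam) :
    S.len N ≤ 1 / θ * (2 ^ N / lam) := by
  have hθ := hS.pos
  have h := hN.mul_le_one
  rw [hS.apply_len, ← mul_div_assoc, ← mul_div_assoc, div_le_one (by positivity)] at h
  rw [div_mul_div_comm, one_mul, le_div_iff₀ (by positivity)]
  linarith

lemma one_le_div_two_pow (hN : S.IsCutoff ω lam N) (hS : S.IsAdapted ω θ) (hlam : 0 < lam) {q : ℕ}
    (hq : q < N) : 1 ≤ lam / 2 ^ q := by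
  have hθ := hS.pos
  have hle : S.len q * θ ≤ 1 :=
    calc S.len q * θ ≤ S.len 0 * θ := by gcongr; exact S.len_antitone q.zero_le
      _ ≤ 1 := hS.len_zero_mul_le.trans (by norm_num)
  calc 1 ≤ S.len q * θ * (lam / 2 ^ q) := by
        have := (hN.one_lt_mul q hq).le
        rw [hS.apply_len] at this
        exact this.trans_eq (by ring)
    _ ≤ 1 * (lam / 2 ^ q) := by gcongr
    _ = lam / 2 ^ q := one_mul _

end IsCutoff

end CantorScale

/-! ### Comparison with `χ⁻¹` -/

section Antitone

variable {F : ℝ → ℝ} {a x y : ℝ}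

lemma sub_mul_le_integral_of_antitoneOn (hF : AntitoneOn F (Icc x y)) (hxy : x ≤ y) :
    (y - x) * F y ≤ ∫ τ in x..y, F τ := by
  have hint : IntervalIntegrable F volume x y :=
    AntitoneOn.intervalIntegrable (by rwa [uIcc_of_le hxy])
  calc (y - x) * F y = ∫ _ in x..y, F y := by rw [intervalIntegral.integral_const, smul_eq_mul]
    _ ≤ ∫ τ in x..y, F τ := intervalIntegral.integral_mono_on hxy intervalIntegrable_const hint
        fun t ht ↦ hF ht (right_mem_Icc.2 hxy) ht.2

lemma integral_add_sub_mul_le_of_antitoneOn (hF : AntitoneOn F (Icc a y)) (hax : a ≤ x)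
    (hxy : x ≤ y) : (∫ τ in a..x, F τ) + (y - x) * F y ≤ ∫ τ in a..y, F τ := by
  have hax' : AntitoneOn F (Icc a x) := hF.mono (Icc_subset_Icc_right hxy)
  have hxy' : AntitoneOn F (Icc x y) := hF.mono (Icc_subset_Icc_left hax)
  calc (∫ τ in a..x, F τ) + (y - x) * F y ≤ (∫ τ in a..x, F τ) + ∫ τ in x..y, F τ := by
        gcongr
        exact sub_mul_le_integral_of_antitoneOn hxy' hxy
    _ = ∫ τ in a..y, F τ := intervalIntegral.integral_add_adjacent_intervals
        (AntitoneOn.intervalIntegrable (by rwa [uIcc_of_le hax]))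
        (AntitoneOn.intervalIntegrable (by rwa [uIcc_of_le hxy]))

lemma integral_mono_right_of_antitoneOn (hF : AntitoneOn F (Icc a y)) (hFy : 0 ≤ F y)
    (hax : a ≤ x) (hxy : x ≤ y) : ∫ τ in a..x, F τ ≤ ∫ τ in a..y, F τ :=
  (le_add_of_nonneg_right (mul_nonneg (sub_nonneg.2 hxy) hFy)).trans
    (integral_add_sub_mul_le_of_antitoneOn hF hax hxy)

lemma sum_half_mul_le_integral_of_antitoneOn (hF : AntitoneOn F (Ioi 0))
    (hF0 : ∀ x, 0 < x → 0 ≤ F x) {τ : ℕ → ℝ} (hτ0 : 2 ≤ τ 0) (hτ : ∀ m, 2 * τ m ≤ τ (m + 1))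
    {n : ℕ} (hy : 1 ≤ y) (hn : ∀ m < n, τ m ≤ y) :
    ∑ m ∈ Finset.range n, τ m / 2 * F (τ m) ≤ ∫ t in (1:ℝ)..y, F t := by
  have hF1 (b : ℝ) : AntitoneOn F (Icc 1 b) := hF.mono fun t ht ↦ one_pos.trans_le ht.1
  have two_le (m : ℕ) : 2 ≤ τ m := by
    induction m with
    | zero => exact hτ0
    | succ m ih => linarith [hτ m]
  have hτmono : Monotone τ := monotone_nat_of_le_succ fun m ↦ by linarith [hτ m, two_le m]
  induction n generalizing y with
  | zero =>
    rw [Finset.range_zero, Finset.sum_empty]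
    exact intervalIntegral.integral_nonneg hy fun t ht ↦ hF0 t (one_pos.trans_le ht.1)
  | succ n ih =>
    have h2 := two_le n
    rw [Finset.sum_range_succ]
    calc (∑ m ∈ Finset.range n, τ m / 2 * F (τ m)) + τ n / 2 * F (τ n)
        ≤ (∫ t in (1:ℝ)..τ n / 2, F t) + (τ n - τ n / 2) * F (τ n) := by
          rw [sub_half]
          gcongr
          refine ih (by linarith) fun m hm ↦ ?_
          linarith [hτ m, hτmono (Nat.succ_le_of_lt hm)]
      _ ≤ ∫ t in (1:ℝ)..τ n, F t :=
          integral_add_sub_mul_le_of_antitoneOn (hF1 _) (by linarith) (by linarith)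
      _ ≤ ∫ t in (1:ℝ)..y, F t := integral_mono_right_of_antitoneOn (hF1 _)
          (hF0 y (by linarith)) (by linarith) (hn n n.lt_succ_self)

end Antitone

namespace IsModulus

variable {ω χinv : ℝ → ℝ} {p lam : ℝ}

lemma one_le_mul_integral_inv_rpow (h : IsModulus ω χinv) (hp : 0 ≤ p) (hlam : 2 ≤ lam) :
    1 ≤ 1 / χinv (1 / 2) ^ p * ∫ τ in (1:ℝ)..lam, χinv (1 / τ) ^ p := by
  have hF (b : ℝ) : AntitoneOn (fun τ ↦ χinv (1 / τ) ^ p) (Icc 1 b) :=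
    (h.antitoneOn_inv_rpow hp).mono fun t ht ↦ one_pos.trans_le ht.1
  have hχ : 0 < χinv (1 / 2) := h.inv_pos (by norm_num)
  rw [one_div_mul_eq_div, one_le_div (by positivity)]
  calc χinv (1 / 2) ^ p = (2 - 1) * χinv (1 / 2) ^ p := by ring
    _ ≤ ∫ τ in (1:ℝ)..2, χinv (1 / τ) ^ p :=
        sub_mul_le_integral_of_antitoneOn (hF 2) one_le_two
    _ ≤ ∫ τ in (1:ℝ)..lam, χinv (1 / τ) ^ p :=
        integral_mono_right_of_antitoneOn (hF lam) (h.inv_rpow_nonneg p (by linarith)) one_le_two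
          hlam

lemma half_mul_inv_rpow_le_integral (h : IsModulus ω χinv) (hp : 0 ≤ p) (hlam : 2 ≤ lam) :
    lam / 2 * χinv (1 / lam) ^ p ≤ ∫ τ in (1:ℝ)..lam, χinv (1 / τ) ^ p := by
  have hF : AntitoneOn (fun τ ↦ χinv (1 / τ) ^ p) (Icc 1 lam) :=
    (h.antitoneOn_inv_rpow hp).mono fun t ht ↦ one_pos.trans_le ht.1
  have := h.inv_rpow_nonneg p (τ := lam) (by linarith)
  calc lam / 2 * χinv (1 / lam) ^ p ≤ (lam - 1) * χinv (1 / lam) ^ p := by gcongr; linarith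
    _ ≤ ∫ τ in (1:ℝ)..lam, χinv (1 / τ) ^ p :=
        sub_mul_le_integral_of_antitoneOn hF (by linarith)

end IsModulus

namespace CantorScale

variable {S : CantorScale} {ω χinv : ℝ → ℝ} {θ lam p : ℝ} {N : ℕ}

namespace IsCutoff

lemma two_pow_div_le (hN : S.IsCutoff ω lam N) (h : IsModulus ω χinv) (hS : S.IsAdapted ω θ)
    (hlam : 2 ≤ lam) :
    2 ^ N / lam ≤ max (2 * θ) (ω (χinv (1 / 2))) * χinv (1 / lam) := by
  have hlam0 : 0 < lam := by linarith
  have hd : 0 < χinv (1 / lam) := h.inv_pos (by positivity)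
  have hdω := h.inv_mul_inv (y := 1 / lam) (by positivity)
  have hle : χinv (1 / lam) ≤ χinv (1 / 2) :=
    h.inv_mono (by positivity) (one_div_le_one_div_of_le two_pos hlam)
  have hmax : 2 ^ N * ω (χinv (1 / lam)) ≤ max (2 * θ) (ω (χinv (1 / 2))) := by
    refine h.two_pow_mul_le_max hd.le hle fun m hm ↦ ?_
    rw [← hS.apply_len m]
    refine h.le hd.le (h.inv_le (by positivity) (S.len_pos m).le ?_)
    rw [div_le_iff₀' hlam0]
    exact (hN.one_lt_mul m hm).le
  calc 2 ^ N / lam = 2 ^ N * ω (χinv (1 / lam)) * χinv (1 / lam) := by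
        rw [mul_assoc, mul_comm (ω _), hdω, mul_one_div]
    _ ≤ max (2 * θ) (ω (χinv (1 / 2))) * χinv (1 / lam) := by gcongr

lemma mul_two_pow_div_rpow_le (hN : S.IsCutoff ω lam N) (h : IsModulus ω χinv)
    (hS : S.IsAdapted ω θ) (hp : 0 ≤ p) (hlam : 2 ≤ lam) :
    lam * (2 ^ N / lam) ^ p ≤
      2 * max (2 * θ) (ω (χinv (1 / 2))) ^ p * ∫ τ in (1:ℝ)..lam, χinv (1 / τ) ^ p := by
  have hd : 0 < χinv (1 / lam) := h.inv_pos (by positivity)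
  have hθ := hS.pos
  set K := max (2 * θ) (ω (χinv (1 / 2)))
  have hK : 0 < K := lt_max_of_lt_left (by positivity)
  calc lam * (2 ^ N / lam) ^ p ≤ lam * (K * χinv (1 / lam)) ^ p := by
        gcongr
        exact hN.two_pow_div_le h hS hlam
    _ = 2 * K ^ p * (lam / 2 * χinv (1 / lam) ^ p) := by rw [mul_rpow hK.le hd.le]; ring
    _ ≤ 2 * K ^ p * ∫ τ in (1:ℝ)..lam, χinv (1 / τ) ^ p := by
        gcongr
        exact h.half_mul_inv_rpow_le_integral hp hlam

lemma sum_two_pow_mul_len_rpow_le (hN : S.IsCutoff ω lam N) (h : IsModulus ω χinv)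
    (hS : S.IsAdapted ω θ) (hp : 0 ≤ p) (hlam : 1 ≤ lam) :
    ∑ m ∈ Finset.range N, 2 ^ m * S.len m ^ (p - 1) ≤
      2 * θ * ∫ τ in (1:ℝ)..lam, χinv (1 / τ) ^ p := by
  have hθ := hS.pos
  set τ : ℕ → ℝ := fun m ↦ 2 ^ m / (θ * S.len m)
  have hχτ (m : ℕ) : χinv (1 / τ m) = S.len m := by
    have hτ : 1 / τ m = S.len m * ω (S.len m) := by rw [one_div_div, hS.apply_len]; ring
    rw [hτ, h.left_inv _ (S.len_pos m).le]
  have hterm (m : ℕ) : 2 ^ m * S.len m ^ (p - 1) = 2 * θ * (τ m / 2 * χinv (1 / τ m) ^ p) := by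
    have := S.len_pos m
    rw [hχτ, rpow_sub_one this.ne']
    simp only [τ]
    field_simp
  rw [Finset.sum_congr rfl fun m _ ↦ hterm m, ← Finset.mul_sum]
  gcongr
  refine sum_half_mul_le_integral_of_antitoneOn (h.antitoneOn_inv_rpow hp)
    (fun x hx ↦ h.inv_rpow_nonneg p hx) ?_ (fun m ↦ ?_) hlam fun m hm ↦ ?_
  · rw [le_div_iff₀ (mul_pos hθ (S.len_pos 0)), pow_zero]
    linarith [hS.len_zero_mul_le]
  · have := S.len_pos (m + 1)
    simp only [τ]
    rw [pow_succ, ← mul_div_assoc, mul_comm 2]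
    gcongr
    exact S.len_antitone m.le_succ
  · have := (hN.one_lt_mul m hm).le
    rw [hS.apply_len, ← mul_div_assoc, ← mul_div_assoc, one_le_div (by positivity)] at this
    rw [div_le_iff₀ (mul_pos hθ (S.len_pos m))]
    linarith

end IsCutoff

lemma IsAdapted.exists_le_integral_inv_rpow (hS : S.IsAdapted ω θ) (h : IsModulus ω χinv)
    {D : ℝ} (hp : 0 ≤ p) (hD : 0 < D) :
    ∃ C, 0 < C ∧ ∀ lam N, 2 ≤ lam → S.IsCutoff ω lam N →
      1 + lam * (2 ^ N / lam) ^ p + ∑ m ∈ Finset.range N, 2 ^ m * (D * S.len m ^ (p - 1)) ≤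
        C * ∫ τ in (1:ℝ)..lam, χinv (1 / τ) ^ p := by
  have hθ := hS.pos
  have hχ : 0 < χinv (1 / 2) := h.inv_pos (by norm_num)
  set K := max (2 * θ) (ω (χinv (1 / 2)))
  refine ⟨1 / χinv (1 / 2) ^ p + 2 * K ^ p + D * (2 * θ), by positivity, fun lam N hlam hN ↦ ?_⟩
  simp only [mul_left_comm _ D]
  rw [← Finset.mul_sum, add_mul, add_mul, mul_assoc D]
  exact add_le_add (add_le_add (h.one_le_mul_integral_inv_rpow hp hlam)
    (hN.mul_two_pow_div_rpow_le h hS hp hlam)) (mul_le_mul_of_nonneg_left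
      (hN.sum_two_pow_mul_len_rpow_le h hS hp (by linarith)) hD.le)

end CantorScale

section Elementary

lemma half_le_log {x : ℝ} (hx : 2 ≤ x) : 1 / 2 ≤ log x :=
  calc (1 / 2 : ℝ) ≤ log 2 := by linarith [log_two_gt_d9]
    _ ≤ log x := log_le_log two_pos hx

lemma log_sq_div_le_four {x : ℝ} (hx : 1 ≤ x) : log x ^ 2 / x ≤ 4 := by
  have hx0 : 0 < x := by linarith
  have hlog : log x ≤ 2 * √x := by
    have := log_le_self (sqrt_nonneg x)
    rw [log_sqrt hx0.le] at this
    linarith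
  rw [div_le_iff₀ hx0]
  calc log x ^ 2 ≤ (2 * √x) ^ 2 := by gcongr; exact log_nonneg hx
    _ = 4 * x := by rw [mul_pow, sq_sqrt hx0.le]; norm_num

lemma log_one_add_le_sqrt {x : ℝ} (hx : 0 ≤ x) : log (1 + x) ≤ √x := by
  rw [log_le_iff_le_exp (by positivity)]
  have ht := sqrt_nonneg x
  calc 1 + x = 1 + √x ^ 2 := by rw [sq_sqrt hx]
    _ ≤ 1 + √x + √x ^ 2 / 2 + √x ^ 3 / 6 := by
        nlinarith [mul_nonneg ht (sq_nonneg (√x - 3 / 2))]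
    _ ≤ exp √x := by
        have := sum_le_exp_of_nonneg ht 4
        norm_num [Finset.sum_range_succ, Nat.factorial] at this
        linarith

lemma sqrt_two_pow (n : ℕ) : √(2 ^ n) = √2 ^ n :=
  (sqrt_eq_iff_mul_self_eq (by positivity) (by positivity)).2
    (by rw [← mul_pow, mul_self_sqrt two_pos.le])

lemma sum_sqrt_two_pow_le (n : ℕ) : ∑ m ∈ Finset.range n, √2 ^ m ≤ 4 * √2 ^ n := by
  have h : (5:ℝ) / 4 ≤ √2 := le_sqrt_of_sq_le (by norm_num)
  rw [geom_sum_eq (by linarith), div_le_iff₀ (by linarith)]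
  nlinarith [show 0 < √2 ^ n by positivity]

lemma sum_range_ite_two_pow_le (n N : ℕ) :
    ∑ m ∈ Finset.range N, (if m < n then (2:ℝ) ^ m else 0) ≤ 2 ^ n :=
  calc ∑ m ∈ Finset.range N, (if m < n then (2:ℝ) ^ m else 0)
      = ∑ m ∈ Finset.range N with m < n, (2:ℝ) ^ m := (Finset.sum_filter _ _).symm
    _ ≤ ∑ m ∈ Finset.range n, (2:ℝ) ^ m :=
        Finset.sum_le_sum_of_subset_of_nonneg (fun m hm ↦ by simpa using (Finset.mem_filter.1 hm).2)
          fun m _ _ ↦ by positivity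
    _ ≤ 2 ^ n := by rw [geom_sum_eq (by norm_num)]; norm_num

end Elementary

namespace CantorScale

variable {S : CantorScale} {ω χinv : ℝ → ℝ} {θ lam d e K A : ℝ} {n N : ℕ}

lemma IsAdapted.exists_two_pow_mul_le (hS : S.IsAdapted ω θ) (h : IsModulus ω χinv) (hd : 0 < d)
    (hde : d ≤ e) :
    ∃ n, 2 ^ n * ω d ≤ max (2 * θ) (ω e) ∧ ∀ m, n ≤ m → S.len m ≤ d * 2 ^ n / 2 ^ m := by
  classical
  have hω := h.pos d hd
  have hex : ∃ n : ℕ, θ / 2 ^ n < ω d := by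
    obtain ⟨n, hn⟩ := pow_unbounded_of_one_lt (θ / ω d) one_lt_two
    exact ⟨n, by rw [div_lt_iff₀ (by positivity)]; rwa [div_lt_iff₀' hω] at hn⟩
  obtain ⟨n, hn, hmin⟩ : ∃ n : ℕ, θ / 2 ^ n < ω d ∧ ∀ m < n, ω d ≤ θ / 2 ^ m :=
    ⟨Nat.find hex, Nat.find_spec hex, fun m hm ↦ not_lt.1 (Nat.find_min hex hm)⟩
  refine ⟨n, h.two_pow_mul_le_max hd.le hde hmin, fun m hm ↦ ?_⟩
  obtain ⟨i, rfl⟩ := Nat.exists_eq_add_of_le hm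
  calc S.len (n + i) ≤ S.len n / 2 ^ i := S.len_add_le n i
    _ ≤ d / 2 ^ i := by
        gcongr
        exact (h.lt_of_lt hd.le (by rwa [hS.apply_len])).le
    _ = d * 2 ^ n / 2 ^ (n + i) := by rw [pow_add]; field_simp

namespace IsCutoff

lemma two_pow_mul_le (hN : S.IsCutoff ω lam N) (hS : S.IsAdapted ω θ) (hlam : 0 < lam)
    (hω : 0 < ω d) (hA : 1 / 2 ≤ A) (hdA : lam * (d * ω d) = A ^ 2) (hθK : θ ≤ K)
    (hn : 2 ^ n * ω d ≤ K) (hlen : ∀ m, n ≤ m → S.len m ≤ d * 2 ^ n / 2 ^ m) :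
    2 ^ N * ω d ≤ 2 * K * A := by
  have hθ := hS.pos
  have hK : 0 < K := hθ.trans_le hθK
  rcases le_or_gt N n with hNn | hNn
  · calc 2 ^ N * ω d ≤ 2 ^ n * ω d := by gcongr; exact one_le_two
      _ ≤ K := hn
      _ ≤ 2 * K * A := by nlinarith
  obtain ⟨m, rfl⟩ := Nat.exists_eq_succ_of_ne_zero (Nat.ne_zero_of_lt hNn)
  have hpow : (2 ^ m) ^ 2 ≤ lam * θ * d * 2 ^ n := by
    have h : 1 ≤ lam * θ * d * 2 ^ n / (2 ^ m) ^ 2 :=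
      calc 1 ≤ lam * (S.len m * ω (S.len m)) := (hN.one_lt_mul m m.lt_succ_self).le
        _ ≤ lam * (d * 2 ^ n / 2 ^ m * (θ / 2 ^ m)) := by
            rw [hS.apply_len]
            gcongr
            exact hlen m (Nat.lt_succ_iff.1 hNn)
        _ = lam * θ * d * 2 ^ n / (2 ^ m) ^ 2 := by ring
    rwa [one_le_div (by positivity)] at h
  have hsq : (2 ^ m * ω d) ^ 2 ≤ (K * A) ^ 2 :=
    calc (2 ^ m * ω d) ^ 2 = (2 ^ m) ^ 2 * ω d ^ 2 := mul_pow _ _ _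
      _ ≤ lam * θ * d * 2 ^ n * ω d ^ 2 := by gcongr
      _ = θ * (2 ^ n * ω d) * (lam * (d * ω d)) := by ring
      _ ≤ K * K * A ^ 2 := by rw [hdA]; gcongr
      _ = (K * A) ^ 2 := by ring
  rw [sq_le_sq₀ (by positivity) (by positivity)] at hsq
  rw [pow_succ]
  linarith

lemma two_pow_le (hN : S.IsCutoff ω lam N) (hS : S.IsAdapted ω θ) (hlam : 1 ≤ lam) :
    2 ^ N ≤ 2 * lam := by
  cases N with
  | zero => linarith
  | succ M =>
    have := hN.one_le_div_two_pow hS (by linarith) M.lt_succ_self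
    rw [one_le_div (by positivity)] at this
    rw [pow_succ]
    linarith

lemma two_pow_mul_log_le (hN : S.IsCutoff ω lam N) (hS : S.IsAdapted ω θ) (hlam : 2 ≤ lam)
    (hd : 0 ≤ d) (hlen : ∀ m, n ≤ m → S.len m ≤ d * 2 ^ n / 2 ^ m) (m : ℕ) :
    2 ^ m * log (1 + S.len m * (lam / 2 ^ N + 1)) ≤
      2 * log lam * (if m < n then 2 ^ m else 0) + √(3 * d * lam * 2 ^ n / 2 ^ N) * √2 ^ m := by
  have hpos := S.len_pos m
  have hlam0 : 0 < lam := by linarith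
  split_ifs with hmn
  · calc 2 ^ m * log (1 + S.len m * (lam / 2 ^ N + 1)) ≤ 2 ^ m * log (lam ^ 2) := by
          gcongr
          calc 1 + S.len m * (lam / 2 ^ N + 1) ≤ 1 + 1 * (lam + 1) := by
                gcongr
                · exact S.len_le_one m
                · exact div_le_self hlam0.le (one_le_pow₀ one_le_two)
            _ ≤ lam ^ 2 := by nlinarith
      _ = 2 * log lam * 2 ^ m := by rw [log_pow]; push_cast; ring
      _ ≤ _ := le_add_of_nonneg_right (by positivity)
  set B := 3 * d * lam * 2 ^ n / 2 ^ N
  have hone : 1 ≤ 2 * (lam / 2 ^ N) := by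
    rw [← mul_div_assoc, one_le_div (by positivity)]
    exact hN.two_pow_le hS (by linarith)
  have hx : S.len m * (lam / 2 ^ N + 1) ≤ B / 2 ^ m :=
    calc S.len m * (lam / 2 ^ N + 1)
        ≤ d * 2 ^ n / 2 ^ m * (lam / 2 ^ N + 2 * (lam / 2 ^ N)) := by
          gcongr
          exact hlen m (not_lt.1 hmn)
      _ = B / 2 ^ m := by simp only [B]; ring
  rw [mul_zero, zero_add]
  calc 2 ^ m * log (1 + S.len m * (lam / 2 ^ N + 1)) ≤ 2 ^ m * √(B / 2 ^ m) := by
        gcongr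
        exact (log_one_add_le_sqrt (by positivity)).trans (sqrt_le_sqrt hx)
    _ = √B * √2 ^ m := by
        rw [sqrt_div' _ (by positivity), mul_div_assoc', mul_comm, mul_div_assoc, div_sqrt,
          sqrt_two_pow]

lemma sum_two_pow_mul_log_le (hN : S.IsCutoff ω lam N) (hS : S.IsAdapted ω θ) (hlam : 2 ≤ lam)
    (hd : 0 ≤ d) (hω : 0 < ω d) (hdA : lam * (d * ω d) = log lam ^ 2) (hn : 2 ^ n * ω d ≤ K)
    (hlen : ∀ m, n ≤ m → S.len m ≤ d * 2 ^ n / 2 ^ m) :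
    ∑ m ∈ Finset.range N, 2 ^ m * log (1 + S.len m * (lam / 2 ^ N + 1)) ≤
      (2 * K + 4 * √(3 * K)) * (log lam / ω d) := by
  have hlog : 0 < log lam := log_pos (by linarith)
  set B := 3 * d * lam * 2 ^ n / 2 ^ N
  have hlow : log lam * 2 ^ n ≤ K * (log lam / ω d) := by
    rw [← mul_div_assoc, le_div_iff₀ hω]
    nlinarith
  have hhigh : √B * √2 ^ N ≤ √(3 * K) * (log lam / ω d) := by
    have hB : B * 2 ^ N = 3 * (2 ^ n * ω d) * (log lam / ω d) ^ 2 := by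
      rw [div_pow, ← hdA]
      simp only [B]
      field_simp
    rw [← sqrt_two_pow, ← sqrt_mul (by positivity), hB, sqrt_mul (by positivity),
      sqrt_sq (by positivity)]
    gcongr
  calc ∑ m ∈ Finset.range N, 2 ^ m * log (1 + S.len m * (lam / 2 ^ N + 1))
      ≤ ∑ m ∈ Finset.range N, (2 * log lam * (if m < n then 2 ^ m else 0) + √B * √2 ^ m) :=
        Finset.sum_le_sum fun m _ ↦ hN.two_pow_mul_log_le hS hlam hd hlen m
    _ = 2 * log lam * ∑ m ∈ Finset.range N, (if m < n then 2 ^ m else 0) +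
          √B * ∑ m ∈ Finset.range N, √2 ^ m := by
        rw [Finset.sum_add_distrib, ← Finset.mul_sum, ← Finset.mul_sum]
    _ ≤ 2 * log lam * 2 ^ n + √B * (4 * √2 ^ N) := by
        gcongr
        · exact sum_range_ite_two_pow_le n N
        · exact sum_sqrt_two_pow_le N
    _ = 2 * (log lam * 2 ^ n) + 4 * (√B * √2 ^ N) := by ring
    _ ≤ 2 * (K * (log lam / ω d)) + 4 * (√(3 * K) * (log lam / ω d)) := by gcongr
    _ = (2 * K + 4 * √(3 * K)) * (log lam / ω d) := by ring

end IsCutoff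

lemma IsAdapted.exists_le_div_log_mul_inv (hS : S.IsAdapted ω θ) (h : IsModulus ω χinv) {D : ℝ}
    (hD : 0 < D) :
    ∃ C, 0 < C ∧ ∀ lam N, 2 ≤ lam → S.IsCutoff ω lam N →
      1 + lam * (2 ^ N / lam) +
        ∑ m ∈ Finset.range N, 2 ^ m * (D * log (1 + S.len m * (lam / 2 ^ N + 1))) ≤
        C * (lam / log lam * χinv (log lam ^ 2 / lam)) := by
  have hθ := hS.pos
  set K := max (2 * θ) (ω (χinv 4))
  have hK : 2 * θ ≤ K := le_max_left _ _
  refine ⟨2 * K + 2 * K + D * (2 * K + 4 * √(3 * K)), by positivity, fun lam N hlam hN ↦ ?_⟩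
  have hlam0 : 0 < lam := by linarith
  have hlog := half_le_log hlam
  set d := χinv (log lam ^ 2 / lam)
  have hd : 0 < d := h.inv_pos (by positivity)
  have hω := h.pos d hd
  have hdω : d * ω d = log lam ^ 2 / lam := h.inv_mul_inv (by positivity)
  have hdA : lam * (d * ω d) = log lam ^ 2 := by rw [hdω, mul_div_cancel₀ _ hlam0.ne']
  have hd4 : d ≤ χinv 4 :=
    h.inv_mono (by positivity) (log_sq_div_le_four (by linarith))
  obtain ⟨n, hn, hlen⟩ := hS.exists_two_pow_mul_le h hd hd4
  have hE : lam / log lam * d = log lam / ω d := by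
    rw [eq_div_iff hω.ne', mul_assoc, hdω]
    field_simp
  have hone : 1 ≤ 2 * K * (log lam / ω d) := by
    rw [← mul_div_assoc, le_div_iff₀ hω]
    nlinarith [(h.le hd.le hd4).trans (le_max_right (2 * θ) _)]
  have htwo : lam * (2 ^ N / lam) ≤ 2 * K * (log lam / ω d) := by
    rw [mul_div_cancel₀ _ hlam0.ne', ← mul_div_assoc, le_div_iff₀ hω]
    exact hN.two_pow_mul_le hS hlam0 hω hlog hdA (by linarith) hn hlen
  simp only [mul_left_comm _ D]
  rw [hE, ← Finset.mul_sum, add_mul, add_mul, mul_assoc D]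
  exact add_le_add (add_le_add hone htwo) (mul_le_mul_of_nonneg_left
    (hN.sum_two_pow_mul_log_le hS hlam hd.le hω hdA hn hlen) hD.le)

end CantorScale

/-! ### The modulus of continuity of the waves -/

namespace CantorScale

variable {S : CantorScale} {ω χinv : ℝ → ℝ} {θ : ℝ}

lemma exists_len_succ_le_lt {x : ℝ} (hx : 0 < x) (hx0 : x < S.len 0) :
    ∃ n, S.len (n + 1) ≤ x ∧ x < S.len n := by
  classical
  have hex : ∃ n, S.len n ≤ x := (S.tendsto_len.eventually_le_const hx).exists
  obtain ⟨n, hn⟩ := Nat.exists_eq_succ_of_ne_zero (n := Nat.find hex) fun h0 ↦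
    (Nat.find_spec hex).not_gt (h0 ▸ hx0)
  have hle := Nat.find_spec hex
  rw [hn] at hle
  exact ⟨n, hle, not_le.1 (Nat.find_min hex (by omega))⟩

lemma IsAdapted.max_staircase_le (hS : S.IsAdapted ω θ) (h : IsModulus ω χinv) {s t : ℝ}
    (hst : s ≤ t) (ht : t ≤ S.len 0) :
    max 0 (S.staircase t) ≤ max 0 (S.staircase s) + 4 / θ * ω (t - s) := by
  have hθ := hS.pos
  have hω := h.nonneg (sub_nonneg.2 hst)
  have hs : 0 ≤ max 0 (S.staircase s) := le_max_left _ _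
  rcases hst.eq_or_lt with rfl | hlt
  · exact le_add_of_nonneg_right (by positivity)
  refine max_le (by positivity) ?_
  rcases le_or_gt (S.len 0) (t - s) with hfar | hnear
  · have hle := h.le (S.len_pos 0).le hfar
    rw [hS.apply_len, pow_zero, div_one] at hle
    calc S.staircase t ≤ S.staircase (S.len 0) := S.staircase_monotone ht
      _ = 1 := by rw [S.staircase_len, pow_zero, div_one]
      _ ≤ 4 / θ * θ := by rw [div_mul_cancel₀ _ hθ.ne']; norm_num
      _ ≤ 4 / θ * ω (t - s) := by gcongr
      _ ≤ _ := le_add_of_nonneg_left hs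
  · obtain ⟨n, hn, hn'⟩ := exists_len_succ_le_lt (sub_pos.2 hlt) hnear
    have hle := h.le (S.len_pos (n + 1)).le hn
    rw [hS.apply_len] at hle
    calc S.staircase t ≤ S.staircase s + 2 / 2 ^ n := S.staircase_le_add (by linarith)
      _ = S.staircase s + 4 / θ * (θ / 2 ^ (n + 1)) := by rw [pow_succ]; field_simp; ring
      _ ≤ max 0 (S.staircase s) + 4 / θ * ω (t - s) := by gcongr; exact le_max_right _ _

lemma IsAdapted.abs_max_staircase_sub_le (hS : S.IsAdapted ω θ) (h : IsModulus ω χinv) {s t : ℝ}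
    (hs : s ≤ S.len 0) (ht : t ≤ S.len 0) :
    |max 0 (S.staircase s) - max 0 (S.staircase t)| ≤ 4 / θ * ω |s - t| := by
  wlog hst : s ≤ t generalizing s t
  · rw [abs_sub_comm, abs_sub_comm s]
    exact this ht hs (le_of_not_ge hst)
  have hmono := max_le_max (le_refl 0) (S.staircase_monotone hst)
  rw [abs_sub_comm, abs_sub_comm s, abs_of_nonneg (sub_nonneg.2 hmono),
    abs_of_nonneg (sub_nonneg.2 hst), sub_le_iff_le_add']
  exact hS.max_staircase_le h hst ht

lemma IsAdapted.abs_tent_sub_le (hS : S.IsAdapted ω θ) (h : IsModulus ω χinv) (q : ℕ) (s t : ℝ) :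
    |S.tent q s - S.tent q t| ≤ 4 / θ * ω |s - t| := by
  have hθ := hS.pos
  have hq : S.len q ≤ S.len 0 := S.len_antitone q.zero_le
  refine (hS.abs_max_staircase_sub_le h ((sub_le_self _ (abs_nonneg _)).trans hq)
    ((sub_le_self _ (abs_nonneg _)).trans hq)).trans ?_
  gcongr
  refine h.le (abs_nonneg _) ?_
  rw [sub_sub_sub_cancel_left, abs_sub_comm s t]
  simpa using abs_abs_sub_abs_le_abs_sub (t - S.len q) (s - S.len q)

lemma IsAdapted.abs_wave_sub_le (hS : S.IsAdapted ω θ) (h : IsModulus ω χinv) (q : ℕ) (s t : ℝ) :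
    |S.wave q s - S.wave q t| ≤ 8 / θ * ω |s - t| := by
  have hleft := hS.abs_tent_sub_le h q s t
  have hright := hS.abs_tent_sub_le h q (s - 2 * S.len q) (t - 2 * S.len q)
  rw [sub_sub_sub_cancel_right] at hright
  calc |S.wave q s - S.wave q t|
      = |S.tent q s - S.tent q t -
          (S.tent q (s - 2 * S.len q) - S.tent q (t - 2 * S.len q))| := by
        rw [wave, wave, sub_sub_sub_comm]
    _ ≤ 4 / θ * ω |s - t| + 4 / θ * ω |s - t| := (abs_sub _ _).trans (add_le_add hleft hright)
    _ = 8 / θ * ω |s - t| := by ring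

variable (S)

lemma tent_denselyConst (q : ℕ) : DenselyConst (S.tent q) := by
  have hmax : DenselyConst fun s ↦ max 0 (S.staircase s) := S.staircase_denselyConst.comp (max 0)
  refine hmax.of_eqOn_Iic_Ici (hmax.comp_homeomorph (Homeomorph.subLeft (2 * S.len q)))
    (x := S.len q) (fun s hs ↦ ?_) (fun s hs ↦ ?_)
  · rw [tent, abs_of_nonpos (sub_nonpos.2 hs), neg_sub, sub_sub_cancel]
  · rw [tent, abs_of_nonneg (sub_nonneg.2 hs), Homeomorph.subLeft_apply]
    ring_nf

lemma wave_denselyConst (q : ℕ) : DenselyConst (S.wave q) :=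
  (S.tent_denselyConst q).comp₂ (· - ·)
    ((S.tent_denselyConst q).comp_homeomorph (Homeomorph.subRight (2 * S.len q)))

/-! ### Placing the waves -/

/-- The sum of the first `J` waves, where the `i`-th one has generation `q i` and starts at
`t i`. -/
noncomputable def waveSum (t : ℕ → ℝ) (q : ℕ → ℕ) (J : ℕ) (s : ℝ) : ℝ :=
  ∑ i ∈ Finset.range J, S.wave (q i) (s - t i)

/-- A wave of generation `q` starting at `t` fits into `[u, v]`, at distance at least `ρ` from the
boundary of an interval on which `g` is constant, and oscillates by at most `ε * ω ρ`. Adding it to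
`g` then costs at most `ε` in the modulus of continuity. -/
structure IsPlaced (S : CantorScale) (ω : ℝ → ℝ) (u v ε : ℝ) (g : ℝ → ℝ) (t : ℝ) (q : ℕ)
    (ρ : ℝ) : Prop where
  pos : 0 < ρ
  le_sub : u ≤ t - ρ
  add_le : t + 2 * ρ ≤ v
  exists_const : ∃ c, ∀ s ∈ Ioo (t - ρ) (t + 2 * ρ), g s = c
  four_mul_len_lt : 4 * S.len q < ρ
  two_div_le : 2 / 2 ^ q ≤ ε * ω ρ

/-- The `j`-th wave is placed in `[U j, V j] ⊆ [0, 2 * π]`, relative to the sum of the previous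
ones. -/
structure IsPlacement (S : CantorScale) (ω : ℝ → ℝ) (U V t : ℕ → ℝ) (q : ℕ → ℕ)
    (ρ : ℕ → ℝ) : Prop where
  isPlaced : ∀ j, S.IsPlaced ω (U j) (V j) (1 / 2 ^ j) (S.waveSum t q j) (t j) (q j) (ρ j)
  add_three_le : ∀ j, q j + 3 ≤ q (j + 1)
  nonneg : ∀ j, 0 ≤ U j
  le_two_pi : ∀ j, V j ≤ 2 * π

lemma exists_isPlaced (h : IsModulus ω χinv) {u v ε : ℝ} (huv : u < v) (hε : 0 < ε) {g : ℝ → ℝ}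
    (hg : DenselyConst g) (Q : ℕ) : ∃ t q ρ, Q ≤ q ∧ S.IsPlaced ω u v ε g t q ρ := by
  obtain ⟨x, -, r, hr, hsub, c, hc⟩ := hg.exists_eqOn_Ioo huv
  obtain ⟨hu, hv⟩ := (Ioo_subset_Ioo_iff (by linarith)).1 hsub
  have hω := h.pos (2 * r / 3) (by positivity)
  have hpow := tendsto_pow_atTop_nhds_zero_of_lt_one one_half_pos.le (one_half_lt_one (α := ℝ))
  obtain ⟨q, hQ, hlen, hq⟩ := ((eventually_ge_atTop Q).and
    ((S.tendsto_len.eventually_lt_const (u := r / 6) (by positivity)).and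
      (hpow.eventually_le_const (u := ε * ω (2 * r / 3) / 2) (by positivity)))).exists
  refine ⟨x - r / 3, q, 2 * r / 3, hQ, by positivity, by linarith, by linarith,
    ⟨c, fun s hs ↦ hc s ⟨by linarith [hs.1], by linarith [hs.2]⟩⟩, by linarith, ?_⟩
  calc (2 : ℝ) / 2 ^ q = 2 * (1 / 2) ^ q := by rw [one_div_pow]; ring
    _ ≤ ε * ω (2 * r / 3) := by linarith

lemma waveSum_succ (t : ℕ → ℝ) (q : ℕ → ℕ) (J : ℕ) (s : ℝ) :
    S.waveSum t q (J + 1) s = S.waveSum t q J s + S.wave (q J) (s - t J) :=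
  Finset.sum_range_succ _ _

lemma exists_isPlacement (h : IsModulus ω χinv) {U V : ℕ → ℝ} (hUV : ∀ j, U j < V j)
    (hU : ∀ j, 0 ≤ U j) (hV : ∀ j, V j ≤ 2 * π) : ∃ t q ρ, S.IsPlacement ω U V t q ρ := by
  have exists_step (j : ℕ) (G : {g : ℝ → ℝ // DenselyConst g} × ℕ) : ∃ t q ρ,
      G.2 ≤ q ∧ S.IsPlaced ω (U j) (V j) (1 / 2 ^ j) G.1 t q ρ :=
    S.exists_isPlaced h (hUV j) (by positivity) G.1.2 G.2
  choose t q ρ hq hplaced using exists_step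
  let G (n : ℕ) : {g : ℝ → ℝ // DenselyConst g} × ℕ := Nat.rec (⟨_, .const 0⟩, 0)
    (fun j G ↦ (⟨_, G.1.2.comp₂ (· + ·)
      ((S.wave_denselyConst (q j G)).comp_homeomorph (Homeomorph.subRight (t j G)))⟩, q j G + 3)) n
  have hG (j : ℕ) : (G j).1.1 = S.waveSum (fun j ↦ t j (G j)) (fun j ↦ q j (G j)) j := by
    induction j with
    | zero => funext s; simp [G, waveSum]
    | succ j ih => funext s; rw [waveSum_succ, ← ih]; rfl
  exact ⟨fun j ↦ t j (G j), fun j ↦ q j (G j), fun j ↦ ρ j (G j),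
    fun j ↦ hG j ▸ hplaced j (G j), fun j ↦ hq (j + 1) (G (j + 1)), hU, hV⟩

variable {S} {u v ε ρ₀ t₀ : ℝ} {g : ℝ → ℝ} {q₀ : ℕ}

lemma IsPlaced.eq_or_wave_eq_zero (hP : S.IsPlaced ω u v ε g t₀ q₀ ρ₀) {x y : ℝ}
    (hxy : |x - y| < ρ₀) :
    g x = g y ∨ S.wave q₀ (x - t₀) = 0 ∧ S.wave q₀ (y - t₀) = 0 := by
  have hfit := hP.four_mul_len_lt
  have hxy := abs_lt.1 hxy
  obtain ⟨c, hc⟩ := hP.exists_const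
  by_contra! hne
  have hcases : S.wave q₀ (x - t₀) ≠ 0 ∨ S.wave q₀ (y - t₀) ≠ 0 :=
    (em (S.wave q₀ (x - t₀) = 0)).symm.imp_right hne.2
  have hsupp (z : ℝ) (hz : S.wave q₀ (z - t₀) ≠ 0) : 0 < z - t₀ ∧ z - t₀ < 4 * S.len q₀ := by
    have := mt S.wave_eq_zero hz
    push Not at this
    exact this
  refine hne.1 ?_
  rcases hcases with hz | hz <;> obtain ⟨h0, h4⟩ := hsupp _ hz <;>
    rw [hc x ⟨by linarith, by linarith⟩, hc y ⟨by linarith, by linarith⟩]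

lemma IsPlaced.abs_add_wave_sub_le (hP : S.IsPlaced ω u v ε g t₀ q₀ ρ₀) (hS : S.IsAdapted ω θ)
    (h : IsModulus ω χinv) (hε : 0 ≤ ε) {C : ℝ} (hC : 8 / θ ≤ C) {x y : ℝ}
    (hg : |g x - g y| ≤ C * ω |x - y|) :
    |g x + S.wave q₀ (x - t₀) - (g y + S.wave q₀ (y - t₀))| ≤ (C + ε) * ω |x - y| := by
  have hω := h.nonneg (abs_nonneg (x - y))
  have hεω : 0 ≤ ε * ω |x - y| := by positivity
  rw [add_sub_add_comm, add_mul]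
  rcases le_or_gt ρ₀ |x - y| with hfar | hnear
  · refine (abs_add_le _ _).trans (add_le_add hg ?_)
    calc |S.wave q₀ (x - t₀) - S.wave q₀ (y - t₀)|
        ≤ 1 / 2 ^ q₀ + 1 / 2 ^ q₀ :=
          (abs_sub _ _).trans (add_le_add (S.abs_wave_le _ _) (S.abs_wave_le _ _))
      _ = 2 / 2 ^ q₀ := by ring
      _ ≤ ε * ω ρ₀ := hP.two_div_le
      _ ≤ ε * ω |x - y| := mul_le_mul_of_nonneg_left (h.le hP.pos.le hfar) hε
  · rcases hP.eq_or_wave_eq_zero hnear with heq | ⟨hx, hy⟩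
    · have hwave := hS.abs_wave_sub_le h q₀ (x - t₀) (y - t₀)
      rw [sub_sub_sub_cancel_right] at hwave
      rw [heq, sub_self, zero_add]
      exact (hwave.trans (mul_le_mul_of_nonneg_right hC hω)).trans (le_add_of_nonneg_right hεω)
    · rw [hx, hy, sub_self, add_zero]
      exact hg.trans (le_add_of_nonneg_right hεω)

namespace IsPlacement

variable {U V t ρ : ℕ → ℝ} {q : ℕ → ℕ}

lemma add_three_mul_le (hB : S.IsPlacement ω U V t q ρ) (j i : ℕ) : q j + 3 * i ≤ q (j + i) := by
  induction i with
  | zero => simp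
  | succ i ih => have := hB.add_three_le (j + i); rw [← add_assoc]; omega

lemma three_mul_le (hB : S.IsPlacement ω U V t q ρ) (j : ℕ) : 3 * j ≤ q j := by
  have := hB.add_three_mul_le 0 j
  rw [zero_add] at this
  omega

lemma abs_waveSum_sub_le (hB : S.IsPlacement ω U V t q ρ) (hS : S.IsAdapted ω θ)
    (h : IsModulus ω χinv) (J : ℕ) (x y : ℝ) :
    |S.waveSum t q J x - S.waveSum t q J y| ≤
      (8 / θ + ∑ j ∈ Finset.range J, 1 / 2 ^ j) * ω |x - y| := by
  induction J with
  | zero =>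
    have hω := h.nonneg (abs_nonneg (x - y))
    have hθ := hS.pos
    simp only [waveSum, Finset.range_zero, Finset.sum_empty, sub_self, abs_zero]
    positivity
  | succ J ih =>
    rw [waveSum_succ, waveSum_succ, Finset.sum_range_succ, ← add_assoc]
    exact (hB.isPlaced J).abs_add_wave_sub_le hS h (by positivity)
      (le_add_of_nonneg_right (Finset.sum_nonneg fun _ _ ↦ by positivity)) ih

end IsPlacement

end CantorScale

lemma abs_comp_toIcoMod_sub_le {F ω : ℝ → ℝ} {T C : ℝ} (hT : 0 < T)
    (hω : MonotoneOn ω (Ici 0)) (hC : 0 ≤ C) (hF0 : F 0 = 0) (hFT : F T = 0)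
    (hF : ∀ x ∈ Icc 0 T, ∀ y ∈ Icc 0 T, |F x - F y| ≤ C * ω |x - y|) (x y : ℝ) :
    |F (toIcoMod hT 0 x) - F (toIcoMod hT 0 y)| ≤ 2 * C * ω |x - y| := by
  wlog hxy : x ≤ y generalizing x y
  · rw [abs_sub_comm, abs_sub_comm x]
    exact this y x (le_of_not_ge hxy)
  have hx := toIcoMod_add_toIcoDiv_zsmul hT 0 x
  have hy := toIcoMod_add_toIcoDiv_zsmul hT 0 y
  have hx' := Ico_subset_Icc_self (toIcoMod_mem_Ico hT 0 x)
  have hy' := Ico_subset_Icc_self (toIcoMod_mem_Ico hT 0 y)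
  have hyT := (toIcoMod_mem_Ico hT 0 y).2
  generalize toIcoMod hT 0 x = a at *
  generalize toIcoMod hT 0 y = b at *
  generalize toIcoDiv hT 0 x = n at *
  generalize toIcoDiv hT 0 y = m at *
  rw [zero_add] at hx' hy' hyT
  rw [zsmul_eq_mul] at hx hy
  have hle (c d : ℝ) (hc : c ∈ Icc 0 T) (hd : d ∈ Icc 0 T) (hcd : |c - d| ≤ y - x) :
      |F c - F d| ≤ C * ω |x - y| := by
    rw [abs_sub_comm x, abs_of_nonneg (sub_nonneg.2 hxy)]
    exact (hF c hc d hd).trans (mul_le_mul_of_nonneg_left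
      (hω (mem_Ici.2 (abs_nonneg _)) (mem_Ici.2 (sub_nonneg.2 hxy)) hcd) hC)
  have hnm : n ≤ m := by
    have : (n : ℝ) * T < (m + 1) * T := by linarith [hx'.1]
    have hlt := lt_of_mul_lt_mul_right this hT.le
    exact Int.lt_add_one_iff.1 (mod_cast hlt)
  rcases hnm.eq_or_lt with rfl | hlt
  · have h := hle a b hx' hy' (abs_le.2 ⟨by linarith, by linarith⟩)
    linarith [(abs_nonneg _).trans h]
  · have hmul : ((n : ℝ) + 1) * T ≤ m * T := by gcongr; exact_mod_cast hlt
    have ha := hle a T hx' (right_mem_Icc.2 hT.le)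
      (by rw [abs_of_nonpos (by linarith [hx'.2])]; linarith [hy'.1])
    have hb := hle b 0 hy' (left_mem_Icc.2 hT.le)
      (by rw [abs_of_nonneg (by linarith [hy'.1])]; linarith [hx'.2])
    rw [hFT, sub_zero] at ha
    rw [hF0, sub_zero] at hb
    linarith [abs_sub (F a) (F b)]

namespace CantorScale

variable (S : CantorScale) (t : ℕ → ℝ) (q : ℕ → ℕ)

/-- The sum of all the waves. -/
noncomputable def waveSeries (s : ℝ) : ℝ := ∑' i, S.wave (q i) (s - t i)

/-- The primitive of `waveSum`. -/
noncomputable def blockSum (J : ℕ) (s : ℝ) : ℝ := ∑ i ∈ Finset.range J, S.block (q i) (s - t i)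

/-- The primitive of `waveSeries`. -/
noncomputable def blockSeries (s : ℝ) : ℝ := ∑' i, S.block (q i) (s - t i)

lemma blockSum_succ (J : ℕ) (s : ℝ) :
    S.blockSum t q (J + 1) s = S.blockSum t q J s + S.block (q J) (s - t J) :=
  Finset.sum_range_succ _ _

lemma hasDerivAt_blockSum (J : ℕ) (s : ℝ) :
    HasDerivAt (S.blockSum t q J) (S.waveSum t q J s) s :=
  HasDerivAt.fun_sum fun i _ ↦ (S.hasDerivAt_block (q i) (s - t i)).comp_sub_const s (t i)

lemma continuous_blockSum (J : ℕ) : Continuous (S.blockSum t q J) :=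
  continuous_iff_continuousAt.2 fun s ↦ (S.hasDerivAt_blockSum t q J s).continuousAt

namespace IsPlacement

variable {S t q} {ω χinv : ℝ → ℝ} {θ : ℝ} {U V ρ : ℕ → ℝ}

lemma one_div_two_pow_le (hB : S.IsPlacement ω U V t q ρ) (j : ℕ) :
    (1 : ℝ) / 2 ^ q j ≤ (1 / 8) ^ j := by
  rw [one_div_pow, show (8 : ℝ) ^ j = 2 ^ (3 * j) by rw [pow_mul]; norm_num]
  gcongr
  · exact one_le_two
  · exact hB.three_mul_le j

lemma summable_one_div_eight_pow : Summable fun j : ℕ ↦ (1 / 8 : ℝ) ^ j :=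
  summable_geometric_of_lt_one (by norm_num) (by norm_num)

lemma norm_wave_le (hB : S.IsPlacement ω U V t q ρ) (j : ℕ) (s : ℝ) :
    ‖S.wave (q j) s‖ ≤ (1 / 8) ^ j :=
  (S.abs_wave_le (q j) s).trans (hB.one_div_two_pow_le j)

lemma norm_block_le (hB : S.IsPlacement ω U V t q ρ) (j : ℕ) (s : ℝ) :
    ‖S.block (q j) s‖ ≤ 4 * (1 / 8) ^ j :=
  calc ‖S.block (q j) s‖ ≤ 4 * S.len (q j) / 2 ^ q j := S.abs_block_le (q j) s
    _ = 4 * (S.len (q j) * (1 / 2 ^ q j)) := by ring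
    _ ≤ 4 * (1 * (1 / 8) ^ j) := by
      gcongr
      · exact S.len_le_one _
      · exact hB.one_div_two_pow_le j
    _ = 4 * (1 / 8) ^ j := by rw [one_mul]

lemma summable_wave (hB : S.IsPlacement ω U V t q ρ) (s : ℝ) :
    Summable fun i ↦ S.wave (q i) (s - t i) :=
  .of_norm_bounded summable_one_div_eight_pow fun j ↦ hB.norm_wave_le j _

lemma summable_block (hB : S.IsPlacement ω U V t q ρ) (s : ℝ) :
    Summable fun i ↦ S.block (q i) (s - t i) :=
  .of_norm_bounded (summable_one_div_eight_pow.mul_left 4) fun j ↦ hB.norm_block_le j _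

lemma continuous_waveSeries (hB : S.IsPlacement ω U V t q ρ) : Continuous (S.waveSeries t q) :=
  continuous_tsum (fun i ↦ (S.continuous_wave (q i)).comp (continuous_sub_right (t i)))
    summable_one_div_eight_pow fun j _ ↦ hB.norm_wave_le j _

lemma hasDerivAt_blockSeries (hB : S.IsPlacement ω U V t q ρ) (s : ℝ) :
    HasDerivAt (S.blockSeries t q) (S.waveSeries t q s) s :=
  hasDerivAt_tsum summable_one_div_eight_pow
    (fun i y ↦ (S.hasDerivAt_block (q i) (y - t i)).comp_sub_const y (t i))
    (fun j _ ↦ hB.norm_wave_le j _) (hB.summable_block 0) s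

lemma abs_waveSeries_sub_le (hB : S.IsPlacement ω U V t q ρ) (hS : S.IsAdapted ω θ)
    (h : IsModulus ω χinv) (x y : ℝ) :
    |S.waveSeries t q x - S.waveSeries t q y| ≤ (8 / θ + 2) * ω |x - y| := by
  refine le_of_tendsto' (((hB.summable_wave x).hasSum.tendsto_sum_nat.sub
    (hB.summable_wave y).hasSum.tendsto_sum_nat).abs) fun J ↦ ?_
  refine (hB.abs_waveSum_sub_le hS h J x y).trans ?_
  have hω := h.nonneg (abs_nonneg (x - y))
  gcongr
  simpa only [one_div_pow] using sum_geometric_two_le J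

lemma sub_nonpos_or_four_mul_len_le (hB : S.IsPlacement ω U V t q ρ) {s : ℝ}
    (hs : s ≤ 0 ∨ 2 * π ≤ s) (j : ℕ) : s - t j ≤ 0 ∨ 4 * S.len (q j) ≤ s - t j := by
  have hP := hB.isPlaced j
  have hfit := hP.four_mul_len_lt
  refine hs.imp (fun hs ↦ ?_) fun hs ↦ ?_
  · linarith [hP.pos, hP.le_sub, hB.nonneg j]
  · linarith [hP.pos, hP.add_le, hB.le_two_pi j]

lemma waveSeries_eq_zero (hB : S.IsPlacement ω U V t q ρ) {s : ℝ} (hs : s ≤ 0 ∨ 2 * π ≤ s) :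
    S.waveSeries t q s = 0 :=
  (tsum_congr fun j ↦ S.wave_eq_zero (hB.sub_nonpos_or_four_mul_len_le hs j)).trans tsum_zero

lemma blockSeries_eq_zero (hB : S.IsPlacement ω U V t q ρ) {s : ℝ} (hs : s ≤ 0 ∨ 2 * π ≤ s) :
    S.blockSeries t q s = 0 :=
  (tsum_congr fun j ↦ S.block_eq_zero (hB.sub_nonpos_or_four_mul_len_le hs j)).trans tsum_zero

lemma abs_tsum_wave_tail_le (hB : S.IsPlacement ω U V t q ρ) (j : ℕ) (s : ℝ) :
    |∑' i, S.wave (q (i + (j + 1))) (s - t (i + (j + 1)))| ≤ 1 / 4 * (1 / 2 ^ q j) := by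
  have hgeom : HasSum (fun i : ℕ ↦ 1 / 8 * (1 / 2 ^ q j) * (1 / 2 : ℝ) ^ i)
      (1 / 4 * (1 / 2 ^ q j)) := by
    rw [show (1 / 4 * (1 / 2 ^ q j) : ℝ) = 1 / 8 * (1 / 2 ^ q j) * 2 by ring]
    exact hasSum_geometric_two.mul_left _
  refine tsum_of_norm_bounded (f := fun i ↦ S.wave (q (i + (j + 1))) (s - t (i + (j + 1)))) hgeom
    fun i ↦ (S.abs_wave_le _ _).trans ?_
  have hq : q j + 3 + i ≤ q (i + (j + 1)) := by
    have := hB.add_three_mul_le j (i + 1)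
    rw [show i + (j + 1) = j + (i + 1) by ring]
    omega
  calc (1 : ℝ) / 2 ^ q (i + (j + 1)) ≤ 1 / 2 ^ (q j + 3 + i) := by
        gcongr
        exact one_le_two
    _ = 1 / 8 * (1 / 2 ^ q j) * (1 / 2) ^ i := by
      rw [pow_add, pow_add, one_div_pow]
      field_simp
      norm_num

lemma waveSeries_add_len_ne (hB : S.IsPlacement ω U V t q ρ) (j : ℕ) :
    S.waveSeries t q (t j + S.len (q j)) ≠ S.waveSeries t q (t j) := by
  have hlen := S.len_pos (q j)
  have hP := hB.isPlaced j
  have hfit := hP.four_mul_len_lt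
  obtain ⟨c, hc⟩ := hP.exists_const
  have hsplit (s : ℝ) : S.waveSeries t q s = S.waveSum t q j s + S.wave (q j) (s - t j) +
      ∑' i, S.wave (q (i + (j + 1))) (s - t (i + (j + 1))) := by
    rw [waveSeries, ← (hB.summable_wave s).sum_add_tsum_nat_add (j + 1), ← waveSum_succ]
    rfl
  have hjump : S.wave (q j) (S.len (q j)) = 1 / 2 ^ q j :=
    (S.wave_of_mem (right_mem_Icc.2 hlen.le)).trans (S.staircase_len _)
  intro heq
  rw [hsplit, hsplit, hc _ ⟨by linarith, by linarith⟩, hc _ ⟨by linarith, by linarith⟩, sub_self,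
    add_sub_cancel_left, S.wave_eq_zero (.inl le_rfl), hjump] at heq
  have htail := abs_le.1 (hB.abs_tsum_wave_tail_le j (t j + S.len (q j)))
  have htail' := abs_le.1 (hB.abs_tsum_wave_tail_le j (t j))
  have hpos : (0 : ℝ) < 1 / 2 ^ q j := by positivity
  linarith [htail.1, htail'.2]

end IsPlacement

/-! ### The phase function -/

/-- The `2 * π`-periodic extension of `waveSeries`. -/
noncomputable def periodicWave (s : ℝ) : ℝ := S.waveSeries t q (toIcoMod two_pi_pos 0 s)

/-- The primitive of `periodicWave`, which is the function `φ` of the theorem. -/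
noncomputable def periodicPhase (s : ℝ) : ℝ := ∫ x in (0 : ℝ)..s, S.periodicWave t q x

lemma periodicWave_periodic : Function.Periodic (S.periodicWave t q) (2 * π) :=
  (toIcoMod_periodic two_pi_pos 0).comp (S.waveSeries t q)

namespace IsPlacement

variable {S t q} {ω χinv : ℝ → ℝ} {θ : ℝ} {U V ρ : ℕ → ℝ}

lemma abs_periodicWave_sub_le (hB : S.IsPlacement ω U V t q ρ) (hS : S.IsAdapted ω θ)
    (h : IsModulus ω χinv) (x y : ℝ) :
    |S.periodicWave t q x - S.periodicWave t q y| ≤ 2 * (8 / θ + 2) * ω |x - y| := by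
  have hθ := hS.pos
  exact abs_comp_toIcoMod_sub_le two_pi_pos h.monotoneOn (by positivity)
    (hB.waveSeries_eq_zero (.inl le_rfl)) (hB.waveSeries_eq_zero (.inr le_rfl))
    (fun x _ y _ ↦ hB.abs_waveSeries_sub_le hS h x y) x y

lemma continuous_periodicWave (hB : S.IsPlacement ω U V t q ρ) :
    Continuous (S.periodicWave t q) := by
  have : Fact (0 < 2 * π) := ⟨two_pi_pos⟩
  have hends : S.waveSeries t q 0 = S.waveSeries t q (2 * π) := by
    rw [hB.waveSeries_eq_zero (.inl le_rfl), hB.waveSeries_eq_zero (.inr le_rfl)]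
  have hlift := (AddCircle.liftIco_zero_continuous hends
    hB.continuous_waveSeries.continuousOn).comp (AddCircle.continuous_mk' (2 * π))
  exact hlift

lemma hasDerivAt_periodicPhase (hB : S.IsPlacement ω U V t q ρ) (s : ℝ) :
    HasDerivAt (S.periodicPhase t q) (S.periodicWave t q s) s :=
  intervalIntegral.integral_hasDerivAt_right (hB.continuous_periodicWave.intervalIntegrable _ _)
    (hB.continuous_periodicWave.stronglyMeasurableAtFilter _ _)
    hB.continuous_periodicWave.continuousAt

lemma contDiff_periodicPhase (hB : S.IsPlacement ω U V t q ρ) :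
    ContDiff ℝ 1 (S.periodicPhase t q) :=
  contDiff_one_iff_deriv.2 ⟨fun s ↦ (hB.hasDerivAt_periodicPhase s).differentiableAt,
    (funext fun s ↦ (hB.hasDerivAt_periodicPhase s).deriv :
      deriv (S.periodicPhase t q) = _) ▸ hB.continuous_periodicWave⟩

lemma periodicWave_eq_waveSeries (hB : S.IsPlacement ω U V t q ρ) {s : ℝ}
    (hs : s ∈ Icc 0 (2 * π)) : S.periodicWave t q s = S.waveSeries t q s := by
  rcases hs.2.eq_or_lt with rfl | hlt
  · rw [← zero_add (2 * π), S.periodicWave_periodic, zero_add, hB.waveSeries_eq_zero (.inr le_rfl),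
      periodicWave, hB.waveSeries_eq_zero (.inl (toIcoMod_apply_left two_pi_pos 0).le)]
  · rw [periodicWave, (toIcoMod_eq_self two_pi_pos).2 ⟨hs.1, by rwa [zero_add]⟩]

lemma periodicPhase_eq_blockSeries (hB : S.IsPlacement ω U V t q ρ) {s : ℝ}
    (hs : s ∈ Icc 0 (2 * π)) : S.periodicPhase t q s = S.blockSeries t q s := by
  have hcongr : EqOn (S.periodicWave t q) (S.waveSeries t q) (uIcc 0 s) := fun x hx ↦ by
    rw [uIcc_of_le hs.1] at hx
    exact hB.periodicWave_eq_waveSeries ⟨hx.1, hx.2.trans hs.2⟩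
  rw [periodicPhase, intervalIntegral.integral_congr hcongr,
    intervalIntegral.integral_eq_sub_of_hasDerivAt (fun x _ ↦ hB.hasDerivAt_blockSeries x)
      (hB.continuous_waveSeries.intervalIntegrable _ _),
    hB.blockSeries_eq_zero (.inl le_rfl), sub_zero]

lemma periodicPhase_periodic (hB : S.IsPlacement ω U V t q ρ) :
    Function.Periodic (S.periodicPhase t q) (2 * π) := by
  intro s
  have hint (a b : ℝ) : IntervalIntegrable (S.periodicWave t q) volume a b :=
    hB.continuous_periodicWave.intervalIntegrable a b
  have hperiod : ∫ x in s..s + 2 * π, S.periodicWave t q x = 0 := by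
    rw [(S.periodicWave_periodic t q).intervalIntegral_add_eq s 0, zero_add]
    exact (hB.periodicPhase_eq_blockSeries (right_mem_Icc.2 two_pi_pos.le)).trans
      (hB.blockSeries_eq_zero (.inr le_rfl))
  rw [periodicPhase, ← intervalIntegral.integral_add_adjacent_intervals (hint 0 s) (hint _ _),
    hperiod, add_zero, periodicPhase]

end IsPlacement

end CantorScale

/-! ### Fourier coefficients -/

lemma continuous_mul_fourierKernel {f : ℝ → ℂ} (hf : Continuous f) (k : ℤ) :
    Continuous fun x : ℝ ↦ f x * Complex.exp (-Complex.I * (k : ℂ) * (x : ℂ)) := by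
  fun_prop

lemma fourierCoef_sub {f g : ℝ → ℂ} (hf : Continuous f) (hg : Continuous g) (k : ℤ) :
    fourierCoef f k - fourierCoef g k = fourierCoef (f - g) k := by
  rw [fourierCoef, fourierCoef, ← mul_sub, ← intervalIntegral.integral_sub
    ((continuous_mul_fourierKernel hf k).intervalIntegrable _ _)
    ((continuous_mul_fourierKernel hg k).intervalIntegrable _ _)]
  simp only [← sub_mul]
  rfl

lemma fourierCoef_congr {f g : ℝ → ℂ} (hfg : EqOn f g (Icc 0 (2 * π))) (k : ℤ) :
    fourierCoef f k = fourierCoef g k := by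
  refine congrArg _ (intervalIntegral.integral_congr fun x hx ↦ ?_)
  rw [uIcc_of_le two_pi_pos.le] at hx
  exact congrArg (· * _) (hfg hx)

lemma norm_fourierCoef_le (f : ℝ → ℂ) (k : ℤ) : ‖fourierCoef f k‖ ≤
    ‖∫ x in (0 : ℝ)..2 * π, f x * Complex.exp (-Complex.I * (k : ℂ) * (x : ℂ))‖ := by
  rw [fourierCoef, norm_mul]
  refine mul_le_of_le_one_left (norm_nonneg _) ?_
  rw [norm_div, norm_mul, norm_one, Complex.norm_two, Complex.norm_real, Real.norm_eq_abs,
    abs_of_pos pi_pos, div_le_one two_pi_pos]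
  linarith [pi_gt_three]

lemma fourierCoef_one (k : ℤ) : fourierCoef 1 k = if k = 0 then 1 else 0 := by
  simp only [fourierCoef, Pi.one_apply, one_mul]
  split_ifs with hk
  · have hpi : (π : ℂ) ≠ 0 := Complex.ofReal_ne_zero.2 pi_pos.ne'
    simp only [hk, Int.cast_zero, mul_zero, zero_mul, Complex.exp_zero,
      intervalIntegral.integral_const, sub_zero, Complex.real_smul, mul_one]
    push_cast
    field_simp
  · have hperiod : Complex.exp (-Complex.I * (k : ℂ) * ((2 * π : ℝ) : ℂ)) = 1 :=
      Complex.exp_eq_one_iff.2 ⟨-k, by push_cast; ring⟩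
    rw [integral_exp_mul_complex (mul_ne_zero (neg_ne_zero.2 Complex.I_ne_zero)
      (Int.cast_ne_zero.2 hk)), hperiod]
    simp

lemma fourierCoef_conj (f : ℝ → ℂ) (k : ℤ) :
    fourierCoef (fun x ↦ (starRingEnd ℂ) (f x)) k = (starRingEnd ℂ) (fourierCoef f (-k)) := by
  rw [fourierCoef, fourierCoef, map_mul, intervalIntegral.integral_of_le two_pi_pos.le,
    intervalIntegral.integral_of_le two_pi_pos.le, ← integral_conj]
  simp only [map_div₀, map_mul, map_one, Complex.conj_ofReal, map_ofNat, ← Complex.exp_conj,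
    Complex.conj_I, map_intCast, Int.cast_neg, mul_neg, neg_mul, neg_neg]

lemma tendsto_fourierCoef {f : ℕ → ℝ → ℂ} {g : ℝ → ℂ} (hf : ∀ J, Continuous (f J))
    (hbound : ∀ J x, ‖f J x‖ ≤ 1) (hlim : ∀ x, Tendsto (fun J ↦ f J x) atTop (𝓝 (g x))) (k : ℤ) :
    Tendsto (fun J ↦ fourierCoef (f J) k) atTop (𝓝 (fourierCoef g k)) := by
  refine Tendsto.const_mul _ <| intervalIntegral.tendsto_integral_filter_of_dominated_convergence
    (fun _ ↦ 1)
    (.of_forall fun J ↦ (continuous_mul_fourierKernel (hf J) k).aestronglyMeasurable)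
    (.of_forall fun J ↦ .of_forall fun x _ ↦ ?_) (continuous_const.intervalIntegrable _ _)
    (.of_forall fun x _ ↦ (hlim x).mul_const _)
  rw [norm_mul, show -Complex.I * (k : ℂ) * (x : ℂ) = ((-(k * x) : ℝ) : ℂ) * Complex.I by
    push_cast; ring, Complex.norm_exp_ofReal_mul_I, mul_one]
  exact hbound J x

/-- The exponential `e^{i λ F}` of a real phase `F`. -/
noncomputable def phaseExp (lam : ℝ) (F : ℝ → ℝ) (s : ℝ) : ℂ :=
  Complex.exp (Complex.I * (lam : ℂ) * (F s : ℂ))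

lemma norm_phaseExp (lam : ℝ) (F : ℝ → ℝ) (s : ℝ) : ‖phaseExp lam F s‖ = 1 := by
  rw [phaseExp, mul_assoc, ← Complex.ofReal_mul, Complex.norm_exp_I_mul_ofReal]

lemma continuous_phaseExp (lam : ℝ) {F : ℝ → ℝ} (hF : Continuous F) :
    Continuous (phaseExp lam F) := by
  unfold phaseExp
  fun_prop

lemma phaseExp_neg (lam : ℝ) (F : ℝ → ℝ) :
    phaseExp (-lam) F = fun s ↦ (starRingEnd ℂ) (phaseExp lam F s) := by
  funext s
  simp only [phaseExp, ← Complex.exp_conj, map_mul, Complex.conj_I, Complex.conj_ofReal,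
    Complex.ofReal_neg, mul_neg, neg_mul]

lemma apNorm_eq (p : ℝ) (f : ℝ → ℂ) :
    ApNorm p f = (∑' k : ℤ, ENNReal.ofReal ‖fourierCoef f k‖ ^ p) ^ (1 / p) := by
  simp only [ApNorm, ofReal_norm, enorm_eq_nnnorm]

lemma apNorm_phaseExp_abs (p lam : ℝ) (F : ℝ → ℝ) :
    ApNorm p (phaseExp |lam| F) = ApNorm p (phaseExp lam F) := by
  rcases abs_choice lam with h | h
  · rw [h]
  · rw [h, apNorm_eq, apNorm_eq, phaseExp_neg]
    simp only [fourierCoef_conj, RCLike.norm_conj]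
    exact congrArg (· ^ (1 / p)) ((Equiv.neg ℤ).tsum_eq fun k ↦
      ENNReal.ofReal ‖fourierCoef (phaseExp lam F) k‖ ^ p)

/-! ### Summing over the blocks -/

lemma sum_range_rpow_le {p : ℝ} (hp1 : 1 ≤ p) (hp2 : p ≤ 2) (J : ℕ) (d : ℕ → ℝ≥0∞) :
    (∑ j ∈ Finset.range J, d j) ^ p ≤ ∑ j ∈ Finset.range J, 2 ^ (j + 1) * d j ^ p := by
  induction J generalizing d with
  | zero => simp [ENNReal.zero_rpow_of_pos (one_pos.trans_le hp1)]
  | succ J ih =>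
    rw [Finset.sum_range_succ', Finset.sum_range_succ']
    calc (∑ j ∈ Finset.range J, d (j + 1) + d 0) ^ p
        ≤ 2 * ((∑ j ∈ Finset.range J, d (j + 1)) ^ p + d 0 ^ p) := add_rpow_le_two_mul hp1 hp2 _ _
      _ ≤ 2 * (∑ j ∈ Finset.range J, 2 ^ (j + 1) * d (j + 1) ^ p + d 0 ^ p) := by
        gcongr
        exact ih _
      _ = _ := by
        rw [mul_add, Finset.mul_sum, zero_add, pow_one]
        refine congrArg (· + _) (Finset.sum_congr rfl fun j _ ↦ ?_)
        rw [← mul_assoc, ← pow_succ']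

lemma eqOn_affine_of_hasDerivAt {f f' : ℝ → ℝ} {a b c : ℝ} (hf : ∀ x, HasDerivAt f (f' x) x)
    (hc : ∀ x ∈ Ico a b, f' x = c) {x : ℝ} (hx : x ∈ Icc a b) : f x = f a + c * (x - a) := by
  have hderiv (y : ℝ) : HasDerivAt (fun y ↦ f y - c * y) (f' y - c) y := by
    have h := (hf y).fun_sub ((hasDerivAt_id y).const_mul c)
    rwa [mul_one] at h
  have hconst := constant_of_has_deriv_right_zero (f := fun y ↦ f y - c * y) (a := a) (b := b)
    (fun y _ ↦ (hderiv y).continuousAt.continuousWithinAt)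
    (fun y hy ↦ by simpa only [hc y hy, sub_self] using (hderiv y).hasDerivWithinAt) x hx
  linarith

namespace CantorScale

namespace IsPlacement

variable {S : CantorScale} {ω : ℝ → ℝ} {U V t ρ : ℕ → ℝ} {q : ℕ → ℕ} {p : ℝ}

lemma exists_blockSum_add_eq (hB : S.IsPlacement ω U V t q ρ) (J : ℕ) :
    ∃ c, ∀ s ∈ Icc 0 (4 * S.len (q J)),
      S.blockSum t q J (s + t J) = S.blockSum t q J (t J) + c * s := by
  have hP := hB.isPlaced J
  have hfit := hP.four_mul_len_lt
  have hpos := hP.pos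
  obtain ⟨c, hc⟩ := hP.exists_const
  refine ⟨c, fun s hs ↦ ?_⟩
  have h := eqOn_affine_of_hasDerivAt (S.hasDerivAt_blockSum t q J) (a := t J)
    (b := t J + 4 * S.len (q J)) (c := c) (x := s + t J)
    (fun x hx ↦ hc x ⟨by linarith [hx.1], by linarith [hx.2]⟩)
    ⟨by linarith [hs.1], by linarith [hs.2]⟩
  rwa [add_sub_cancel_right] at h

lemma intervalIntegral_eq_of_support (hB : S.IsPlacement ω U V t q ρ) (J : ℕ) {f : ℝ → ℂ}
    (hf : ∀ x, x - t J ≤ 0 ∨ 4 * S.len (q J) ≤ x - t J → f x = 0) :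
    ∫ x in (0 : ℝ)..2 * π, f x = ∫ s in (0 : ℝ)..4 * S.len (q J), f (s + t J) := by
  have hP := hB.isPlaced J
  have hfit := hP.four_mul_len_lt
  have hsupp : Function.support f ⊆ Ioc (0 + t J) (4 * S.len (q J) + t J) := fun x hx ↦ by
    have := mt (hf x) hx
    push Not at this
    exact ⟨by linarith [this.1], by linarith [this.2]⟩
  rw [intervalIntegral.integral_comp_add_right,
    intervalIntegral.integral_eq_integral_of_support_subset hsupp,
    intervalIntegral.integral_eq_integral_of_support_subset
      (hsupp.trans (Ioc_subset_Ioc _ _))]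
  · linarith [hP.pos, hP.le_sub, hB.nonneg J]
  · linarith [hP.pos, hP.add_le, hB.le_two_pi J]

/-- On the support of the `J`-th block the previous ones add up to an affine function, so that the
`J`-th block only shifts and rotates its own Fourier transform. -/
lemma exists_norm_fourierCoef_sub_le (hB : S.IsPlacement ω U V t q ρ) (lam : ℝ) (J : ℕ) :
    ∃ ξ : ℝ, ∀ k : ℤ, ‖fourierCoef (phaseExp lam (S.blockSum t q (J + 1))) k -
      fourierCoef (phaseExp lam (S.blockSum t q J)) k‖ ≤ ‖S.blockOsc (q J) lam (k - ξ)‖ := by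
  obtain ⟨c, hc⟩ := hB.exists_blockSum_add_eq J
  refine ⟨lam * c, fun k ↦ ?_⟩
  rw [fourierCoef_sub (continuous_phaseExp lam (S.continuous_blockSum t q _))
    (continuous_phaseExp lam (S.continuous_blockSum t q _))]
  refine (norm_fourierCoef_le _ k).trans_eq ?_
  rw [hB.intervalIntegral_eq_of_support J fun x hx ↦ by
    rw [Pi.sub_apply, phaseExp, phaseExp, blockSum_succ, S.block_eq_zero hx, add_zero, sub_self,
      zero_mul]]
  have hrot : ∀ s ∈ uIcc 0 (4 * S.len (q J)),
      (phaseExp lam (S.blockSum t q (J + 1)) - phaseExp lam (S.blockSum t q J)) (s + t J) *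
        Complex.exp (-Complex.I * (k : ℂ) * ((s + t J : ℝ) : ℂ)) =
      Complex.exp (((lam * S.blockSum t q J (t J) - k * t J : ℝ) : ℂ) * Complex.I) *
        ((Complex.exp (Complex.I * ((lam * S.block (q J) s : ℝ) : ℂ)) - 1) *
          Complex.exp (Complex.I * ((-((k - lam * c) * s) : ℝ) : ℂ))) := fun s hs ↦ by
    rw [uIcc_of_le (by linarith [S.len_pos (q J)])] at hs
    rw [Pi.sub_apply, phaseExp, phaseExp, blockSum_succ, hc s hs, add_sub_cancel_right, sub_mul,
      sub_mul, mul_sub, ← Complex.exp_add, ← Complex.exp_add, one_mul, ← Complex.exp_add,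
      ← Complex.exp_add, ← Complex.exp_add]
    congr 2 <;> push_cast <;> ring
  rw [intervalIntegral.integral_congr hrot, intervalIntegral.integral_const_mul, norm_mul,
    Complex.norm_exp_ofReal_mul_I, one_mul, blockOsc]

lemma ofReal_norm_fourierCoef_le {lam : ℝ} {ξ : ℕ → ℝ} {k : ℤ}
    (hξ : ∀ J, ‖fourierCoef (phaseExp lam (S.blockSum t q (J + 1))) k -
      fourierCoef (phaseExp lam (S.blockSum t q J)) k‖ ≤ ‖S.blockOsc (q J) lam (k - ξ J)‖)
    (J : ℕ) : ENNReal.ofReal ‖fourierCoef (phaseExp lam (S.blockSum t q J)) k‖ ≤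
      ∑ j ∈ Finset.range J, ENNReal.ofReal ‖S.blockOsc (q j) lam (k - ξ j)‖ +
        (if k = 0 then 1 else 0) := by
  induction J with
  | zero =>
    have hone : phaseExp lam (S.blockSum t q 0) = 1 := by
      funext s
      simp [phaseExp, blockSum]
    rw [hone, fourierCoef_one, Finset.sum_range_zero, zero_add]
    split_ifs <;> simp
  | succ J ih =>
    rw [Finset.sum_range_succ, add_right_comm]
    refine le_trans ?_ (add_le_add ih (ENNReal.ofReal_le_ofReal (hξ J)))
    rw [← ENNReal.ofReal_add (norm_nonneg _) (norm_nonneg _)]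
    exact ENNReal.ofReal_le_ofReal (norm_le_insert' _ _)

lemma tsum_ite_eq_zero_rpow (hp : 0 < p) : ∑' k : ℤ, (if k = 0 then (1 : ℝ≥0∞) else 0) ^ p = 1 := by
  rw [tsum_eq_single 0 fun k hk ↦ by rw [if_neg hk, ENNReal.zero_rpow_of_pos hp], if_pos rfl,
    ENNReal.one_rpow]

lemma sum_two_pow_mul_le (hB : S.IsPlacement ω U V t q ρ) (J : ℕ) :
    ∑ j ∈ Finset.range J, 2 ^ (j + 1) * ENNReal.ofReal (1 / 2 ^ q j) ≤ 4 := by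
  have hterm (j : ℕ) :
      2 ^ (j + 1) * ENNReal.ofReal (1 / 2 ^ q j) ≤ ENNReal.ofReal (2 * (1 / 2) ^ j) := by
    rw [← ENNReal.ofReal_ofNat 2, ← ENNReal.ofReal_pow zero_le_two,
      ← ENNReal.ofReal_mul (by positivity)]
    refine ENNReal.ofReal_le_ofReal ?_
    calc (2 : ℝ) ^ (j + 1) * (1 / 2 ^ q j) ≤ 2 ^ (j + 1) * (1 / 8) ^ j := by
          gcongr
          exact hB.one_div_two_pow_le j
      _ = 2 * (1 / 4) ^ j := by rw [pow_succ', mul_assoc, ← mul_pow]; norm_num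
      _ ≤ 2 * (1 / 2) ^ j := by gcongr; norm_num
  calc _ ≤ ∑ j ∈ Finset.range J, ENNReal.ofReal (2 * (1 / 2) ^ j) :=
        Finset.sum_le_sum fun j _ ↦ hterm j
    _ ≤ ENNReal.ofReal 4 := by
      rw [← ENNReal.ofReal_sum_of_nonneg fun _ _ ↦ by positivity, ← Finset.mul_sum]
      exact ENNReal.ofReal_le_ofReal (by linarith [sum_geometric_two_le J])
    _ = 4 := ENNReal.ofReal_ofNat 4

lemma tsum_fourierCoef_blockSum_le (hB : S.IsPlacement ω U V t q ρ) (hp1 : 1 ≤ p) (hp2 : p ≤ 2)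
    {lam : ℝ} {M : ℝ≥0∞} (hM : ∀ j ξ, ∑' k : ℤ, ENNReal.ofReal ‖S.blockOsc (q j) lam (k - ξ)‖ ^ p ≤
      M * ENNReal.ofReal (1 / 2 ^ q j)) (J : ℕ) :
    ∑' k : ℤ, ENNReal.ofReal ‖fourierCoef (phaseExp lam (S.blockSum t q J)) k‖ ^ p ≤
      8 * M + 2 := by
  choose ξ hξ using hB.exists_norm_fourierCoef_sub_le lam
  have hcoef (k : ℤ) : ENNReal.ofReal ‖fourierCoef (phaseExp lam (S.blockSum t q J)) k‖ ^ p ≤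
      2 * (∑ j ∈ Finset.range J,
        2 ^ (j + 1) * ENNReal.ofReal ‖S.blockOsc (q j) lam (k - ξ j)‖ ^ p +
          (if k = 0 then 1 else 0) ^ p) :=
    (ENNReal.rpow_le_rpow (ofReal_norm_fourierCoef_le (fun j ↦ hξ j k) J) (by linarith)).trans <|
      (add_rpow_le_two_mul hp1 hp2 _ _).trans <|
        mul_le_mul_right (add_le_add_left (sum_range_rpow_le hp1 hp2 J _) _) _
  calc _ ≤ 2 * (∑ j ∈ Finset.range J,
          2 ^ (j + 1) * ∑' k : ℤ, ENNReal.ofReal ‖S.blockOsc (q j) lam (k - ξ j)‖ ^ p + 1) := by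
        refine (ENNReal.tsum_le_tsum hcoef).trans_eq ?_
        rw [ENNReal.tsum_mul_left, ENNReal.tsum_add, tsum_ite_eq_zero_rpow (by linarith),
          Summable.tsum_finsetSum fun _ _ ↦ ENNReal.summable]
        simp only [ENNReal.tsum_mul_left]
    _ ≤ 2 * (∑ j ∈ Finset.range J, 2 ^ (j + 1) * (M * ENNReal.ofReal (1 / 2 ^ q j)) + 1) := by
        gcongr with j
        exact hM j _
    _ = 2 * (M * ∑ j ∈ Finset.range J, 2 ^ (j + 1) * ENNReal.ofReal (1 / 2 ^ q j) + 1) := by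
        rw [Finset.mul_sum]
        simp only [mul_left_comm M]
    _ ≤ 2 * (M * 4 + 1) := by
        gcongr
        exact hB.sum_two_pow_mul_le J
    _ = 8 * M + 2 := by ring

lemma tsum_fourierCoef_blockSeries_le (hB : S.IsPlacement ω U V t q ρ) (hp1 : 1 ≤ p) (hp2 : p ≤ 2)
    {lam : ℝ} {M : ℝ≥0∞} (hM : ∀ j ξ, ∑' k : ℤ, ENNReal.ofReal ‖S.blockOsc (q j) lam (k - ξ)‖ ^ p ≤
      M * ENNReal.ofReal (1 / 2 ^ q j)) :
    ∑' k : ℤ, ENNReal.ofReal ‖fourierCoef (phaseExp lam (S.blockSeries t q)) k‖ ^ p ≤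
      8 * M + 2 := by
  have hexp (s : ℝ) : Tendsto (fun J ↦ phaseExp lam (S.blockSum t q J) s) atTop
      (𝓝 (phaseExp lam (S.blockSeries t q) s)) := by
    have hcont : Continuous fun y : ℝ ↦ Complex.exp (Complex.I * (lam : ℂ) * (y : ℂ)) := by fun_prop
    exact (hcont.tendsto _).comp (hB.summable_block s).hasSum.tendsto_sum_nat
  have hcoef := tendsto_fourierCoef
    (fun J ↦ continuous_phaseExp lam (S.continuous_blockSum t q J))
    (fun J x ↦ (norm_phaseExp _ _ x).le) hexp
  refine ENNReal.tsum_eq_iSup_sum.trans_le (iSup_le fun K ↦ ?_)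
  have hK := tendsto_finsetSum K fun k _ ↦
    (ENNReal.continuous_rpow_const (y := p)).tendsto _ |>.comp
      ((ENNReal.continuous_ofReal.tendsto _).comp (hcoef k).norm)
  exact le_of_tendsto' hK fun J ↦
    (ENNReal.sum_le_tsum K).trans (hB.tsum_fourierCoef_blockSum_le hp1 hp2 hM J)

end IsPlacement

end CantorScale

/-! ### The norm estimates -/

lemma oscSum_one_le {R g : ℝ} (hg : 0 < g) (hg1 : g ≤ 1) (hR : 0 ≤ R) :
    oscSum 1 R g ≤ ENNReal.ofReal (4 * log (1 + g * (R + 1))) :=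
  iSup_le fun ξ ↦ by simpa only [ENNReal.rpow_one] using tsum_ite_oscWeight_le hg hg1 hR ξ

lemma exists_oscSum_le {p : ℝ} (hp : 1 < p) : ∃ D : ℝ, 0 < D ∧ ∀ R g : ℝ, 0 < g → g ≤ 1 →
    oscSum p R g ≤ ENNReal.ofReal (D * g ^ (p - 1)) := by
  obtain ⟨D, hD, hle⟩ := exists_tsum_oscWeight_rpow_le hp
  refine ⟨D, hD, fun R g hg hg1 ↦ iSup_le fun ξ ↦ le_trans ?_ (hle g hg hg1 ξ)⟩
  refine ENNReal.tsum_le_tsum fun k ↦ ?_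
  split_ifs
  exacts [le_rfl, zero_le]

namespace CantorScale.IsPlacement

variable {S : CantorScale} {ω χinv : ℝ → ℝ} {θ : ℝ} {U V t ρ : ℕ → ℝ} {q : ℕ → ℕ} {p : ℝ}

lemma apNorm_periodicPhase (hB : S.IsPlacement ω U V t q ρ) (p lam : ℝ) :
    ApNorm p (phaseExp lam (S.periodicPhase t q)) =
      (∑' k : ℤ, ENNReal.ofReal ‖fourierCoef (phaseExp lam (S.blockSeries t q)) k‖ ^ p) ^
        (1 / p) := by
  have hcongr : EqOn (phaseExp lam (S.periodicPhase t q)) (phaseExp lam (S.blockSeries t q))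
      (Icc 0 (2 * π)) := fun s hs ↦ by
    rw [phaseExp, phaseExp, hB.periodicPhase_eq_blockSeries hs]
  simp only [apNorm_eq, fourierCoef_congr hcongr]

lemma exists_apNorm_le (hB : S.IsPlacement ω U V t q ρ) (hS : S.IsAdapted ω θ) (hp1 : 1 ≤ p)
    (hp2 : p ≤ 2) : ∃ C : ℝ, 0 < C ∧ ∀ (lam : ℝ) (N : ℕ) (L : ℕ → ℝ), 0 < lam →
      S.IsCutoff ω lam N → (∀ m, 0 ≤ L m) →
      (∀ m, oscSum p (lam / 2 ^ N) (S.len m) ≤ ENNReal.ofReal (L m)) →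
      ApNorm p (phaseExp lam (S.periodicPhase t q)) ≤
        ENNReal.ofReal (C * (1 + lam * (2 ^ N / lam) ^ p + ∑ m ∈ Finset.range N, 2 ^ m * L m)) ^
          (1 / p) := by
  obtain ⟨C, hC, hblock⟩ := exists_tsum_blockOsc_le hp1 hp2 (one_div_pos.2 hS.pos)
  refine ⟨8 * C + 2, by positivity, fun lam N L hlam hN hL hosc ↦ ?_⟩
  rw [hB.apNorm_periodicPhase]
  refine ENNReal.rpow_le_rpow ?_ (by positivity)
  set X := lam * (2 ^ N / lam) ^ p
  set Y := ∑ m ∈ Finset.range N, 2 ^ m * L m with hY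
  have hX0 : 0 ≤ X := by positivity
  have hY0 : 0 ≤ Y := Finset.sum_nonneg fun m _ ↦ mul_nonneg (by positivity) (hL m)
  have hsum : ∑ m ∈ Finset.range N, 2 ^ m * oscSum p (lam / 2 ^ N) (S.len m) ≤
      ENNReal.ofReal Y := by
    rw [hY, ENNReal.ofReal_sum_of_nonneg fun m _ ↦ mul_nonneg (by positivity) (hL m)]
    refine Finset.sum_le_sum fun m _ ↦ ?_
    rw [ENNReal.ofReal_mul (by positivity), ENNReal.ofReal_pow zero_le_two, ENNReal.ofReal_ofNat]
    gcongr
    exact hosc m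
  have hM (j : ℕ) (ξ : ℝ) : ∑' k : ℤ, ENNReal.ofReal ‖S.blockOsc (q j) lam (k - ξ)‖ ^ p ≤
      ENNReal.ofReal (C * (X + Y)) * ENNReal.ofReal (1 / 2 ^ q j) := by
    refine (hblock S lam N hlam (hN.len_le hS hlam)
      (fun q hq ↦ hN.one_le_div_two_pow hS hlam hq) (q j) ξ).trans ?_
    rw [mul_right_comm, ENNReal.ofReal_mul hC.le, ENNReal.ofReal_add hX0 hY0]
    gcongr
  refine (hB.tsum_fourierCoef_blockSeries_le hp1 hp2 hM).trans ?_
  rw [← ENNReal.ofReal_ofNat 8, ← ENNReal.ofReal_ofNat 2, ← ENNReal.ofReal_mul (by norm_num),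
    ← ENNReal.ofReal_add (by positivity) zero_le_two]
  refine ENNReal.ofReal_le_ofReal ?_
  nlinarith [mul_nonneg hC.le hX0, mul_nonneg hC.le hY0]

theorem exists_apNorm_one_le (hB : S.IsPlacement ω U V t q ρ) (h : IsModulus ω χinv)
    (hS : S.IsAdapted ω θ) : ∃ c : ℝ, 0 < c ∧ ∀ lam : ℝ, 2 ≤ |lam| →
      ApNorm 1 (phaseExp lam (S.periodicPhase t q)) ≤
        ENNReal.ofReal (c * (|lam| / log |lam|) * χinv (log |lam| ^ 2 / |lam|)) := by
  obtain ⟨C, hC, hnorm⟩ := hB.exists_apNorm_le hS le_rfl one_le_two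
  obtain ⟨E, hE, hbound⟩ := hS.exists_le_div_log_mul_inv h four_pos
  refine ⟨C * E, by positivity, fun lam hlam ↦ ?_⟩
  rw [← apNorm_phaseExp_abs]
  generalize |lam| = lam at *
  have hlam0 : 0 < lam := by linarith
  obtain ⟨N, hN⟩ := hS.exists_isCutoff hlam0
  have harg (m : ℕ) : 0 ≤ S.len m * (lam / 2 ^ N + 1) :=
    mul_nonneg (S.len_pos m).le (by positivity)
  refine (hnorm lam N _ hlam0 hN
    (fun m ↦ mul_nonneg zero_le_four (log_nonneg (le_add_of_nonneg_right (harg m))))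
    fun m ↦ oscSum_one_le (S.len_pos m) (S.len_le_one m) (by positivity)).trans ?_
  rw [one_div_one, ENNReal.rpow_one, rpow_one, mul_assoc, mul_assoc]
  gcongr
  exact hbound lam N hlam hN

theorem exists_apNorm_le_integral (hB : S.IsPlacement ω U V t q ρ) (h : IsModulus ω χinv)
    (hS : S.IsAdapted ω θ) (hp1 : 1 < p) (hp2 : p ≤ 2) :
    ∃ c : ℝ, 0 < c ∧ ∀ lam : ℝ, 2 ≤ |lam| →
      ApNorm p (phaseExp lam (S.periodicPhase t q)) ≤
        ENNReal.ofReal (c * (∫ τ in (1:ℝ)..|lam|, χinv (1 / τ) ^ p) ^ (1 / p)) := by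
  obtain ⟨C, hC, hnorm⟩ := hB.exists_apNorm_le hS hp1.le hp2
  obtain ⟨D, hD, hosc⟩ := exists_oscSum_le hp1
  obtain ⟨E, hE, hbound⟩ := hS.exists_le_integral_inv_rpow h (by linarith : 0 ≤ p) hD
  refine ⟨(C * E) ^ (1 / p), by positivity, fun lam hlam ↦ ?_⟩
  rw [← apNorm_phaseExp_abs]
  generalize |lam| = lam at *
  have hlam0 : 0 < lam := by linarith
  obtain ⟨N, hN⟩ := hS.exists_isCutoff hlam0
  have hint : 0 ≤ ∫ τ in (1:ℝ)..lam, χinv (1 / τ) ^ p :=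
    intervalIntegral.integral_nonneg (by linarith) fun τ hτ ↦
      h.inv_rpow_nonneg p (one_pos.trans_le hτ.1)
  rw [← mul_rpow (by positivity) hint,
    ← ENNReal.ofReal_rpow_of_nonneg (by positivity) (by positivity)]
  refine (hnorm lam N _ hlam0 hN (fun m ↦ mul_nonneg hD.le (rpow_nonneg (S.len_pos m).le _))
    fun m ↦ hosc _ _ (S.len_pos m) (S.len_le_one m)).trans ?_
  gcongr ENNReal.ofReal ?_ ^ (1 / p)
  rw [mul_assoc]
  gcongr
  exact hbound lam N hlam hN

end CantorScale.IsPlacement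

/-! ### Nowhere linearity -/

lemma exists_seq_rat_intervals {T : ℝ} (hT : 0 < T) :
    ∃ U V : ℕ → ℝ, (∀ j, U j < V j) ∧ (∀ j, 0 ≤ U j) ∧ (∀ j, V j ≤ T) ∧
      ∀ a b : ℝ, 0 ≤ a → a < b → b ≤ T → ∃ j, a < U j ∧ V j < b := by
  let R : Set (ℝ × ℝ) := {x | 0 ≤ x.1 ∧ x.1 < x.2 ∧ x.2 ≤ T} ∩
    range fun x : ℚ × ℚ ↦ ((x.1 : ℝ), (x.2 : ℝ))
  have hdense (a b : ℝ) (ha : 0 ≤ a) (hab : a < b) (hb : b ≤ T) :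
      ∃ x ∈ R, a < x.1 ∧ x.2 < b := by
    obtain ⟨y, hay, hyb⟩ := exists_rat_btwn hab
    obtain ⟨z, hyz, hzb⟩ := exists_rat_btwn hyb
    exact ⟨(y, z), ⟨⟨ha.trans hay.le, hyz, hzb.le.trans hb⟩, (y, z), rfl⟩, hay, hzb⟩
  obtain ⟨x, hx, -⟩ := hdense 0 T le_rfl hT le_rfl
  obtain ⟨f, hf⟩ := ((countable_range _).mono inter_subset_right).exists_eq_range (s := R) ⟨x, hx⟩
  have hmem (j : ℕ) : f j ∈ R := hf ▸ mem_range_self j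
  refine ⟨fun j ↦ (f j).1, fun j ↦ (f j).2, fun j ↦ (hmem j).1.2.1, fun j ↦ (hmem j).1.1,
    fun j ↦ (hmem j).1.2.2, fun a b ha hab hb ↦ ?_⟩
  obtain ⟨x, hx, hax, hxb⟩ := hdense a b ha hab hb
  obtain ⟨j, rfl⟩ := hf ▸ hx
  exact ⟨j, hax, hxb⟩

lemma exists_Ioo_add_zsmul_mem {T : ℝ} (hT : 0 < T) {u v : ℝ} (huv : u < v) :
    ∃ a b : ℝ, 0 ≤ a ∧ a < b ∧ b ≤ T ∧ ∃ n : ℤ, ∀ s ∈ Ioo a b, s + n • T ∈ Ioo u v := by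
  obtain ⟨h0, hlt⟩ := toIcoMod_mem_Ico hT 0 u
  rw [zero_add] at hlt
  refine ⟨toIcoMod hT 0 u, min (toIcoMod hT 0 u + (v - u)) T, h0,
    lt_min (lt_add_of_pos_right _ (sub_pos.2 huv)) hlt, min_le_right _ _, toIcoDiv hT 0 u,
    fun s hs ↦ ?_⟩
  have hu := toIcoMod_add_toIcoDiv_zsmul hT 0 u
  constructor <;> linarith [hs.1, hs.2.trans_le (min_le_left _ _)]

namespace CantorScale.IsPlacement

variable {S : CantorScale} {ω : ℝ → ℝ} {U V t ρ : ℕ → ℝ} {q : ℕ → ℕ}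

lemma not_const_periodicWave (hB : S.IsPlacement ω U V t q ρ)
    (hUV : ∀ a b : ℝ, 0 ≤ a → a < b → b ≤ 2 * π → ∃ j, a < U j ∧ V j < b) {u v : ℝ}
    (huv : u < v) : ¬ ∃ c, ∀ s ∈ Ioo u v, S.periodicWave t q s = c := by
  rintro ⟨c, hc⟩
  obtain ⟨a, b, ha, hab, hb, n, hn⟩ := exists_Ioo_add_zsmul_mem two_pi_pos huv
  obtain ⟨j, haj, hjb⟩ := hUV a b ha hab hb
  have hconst (s : ℝ) (hs : s ∈ Ioo a b) : S.waveSeries t q s = c := by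
    rw [← hB.periodicWave_eq_waveSeries ⟨by linarith [hs.1], by linarith [hs.2]⟩,
      ← (S.periodicWave_periodic t q).zsmul n s]
    exact hc _ (hn s hs)
  have hP := hB.isPlaced j
  have hle := hP.le_sub
  have hadd := hP.add_le
  have hfit := hP.four_mul_len_lt
  have hlen := S.len_pos (q j)
  refine hB.waveSeries_add_len_ne j ?_
  rw [hconst _ ⟨by linarith, by linarith⟩, hconst _ ⟨by linarith, by linarith⟩]

theorem periodicPhase_not_affine (hB : S.IsPlacement ω U V t q ρ)
    (hUV : ∀ a b : ℝ, 0 ≤ a → a < b → b ≤ 2 * π → ∃ j, a < U j ∧ V j < b) {u v : ℝ}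
    (huv : u < v) : ¬ ∃ a b : ℝ, ∀ s ∈ Ioo u v, S.periodicPhase t q s = a * s + b := by
  rintro ⟨a, b, hab⟩
  refine hB.not_const_periodicWave hUV huv ⟨a, fun s hs ↦ (hB.hasDerivAt_periodicPhase s).unique ?_⟩
  have haffine : HasDerivAt (fun s ↦ a * s + b) a s := by
    have h := ((hasDerivAt_id s).const_mul a).add_const b
    rwa [mul_one] at h
  exact haffine.congr_of_eventuallyEq (eventually_of_mem (Ioo_mem_nhds hs.1 hs.2) hab)

end CantorScale.IsPlacement

/-- Theorem 2: if ω(2δ) < 2ω(δ) for small δ, there exists a nowhere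
linear real φ ∈ C^{1,ω}(𝕋) with slowly growing norms ‖e^{iλφ}‖_{A_p}. -/
theorem statement3
    -- ω is a modulus of continuity: continuous non-decreasing on [0,∞), ω(0)=0, ω(δ)>0 for δ>0,
    -- with χ(δ) = δ·ω(δ) strictly increasing and unbounded, and χinv its inverse.
    (ω : ℝ → ℝ)
    (hω_cont : ContinuousOn ω (Ici 0)) (hω_mono : MonotoneOn ω (Ici 0))
    (hω_zero : ω 0 = 0) (hω_pos : ∀ δ : ℝ, 0 < δ → 0 < ω δ)
    (hχ_mono : StrictMonoOn (fun δ => δ * ω δ) (Ici 0))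
    (hχ_unbdd : ∀ y : ℝ, ∃ δ : ℝ, 0 ≤ δ ∧ y < δ * ω δ)
    (χinv : ℝ → ℝ)
    (hχinv_left : ∀ δ : ℝ, 0 ≤ δ → χinv (δ * ω δ) = δ)
    (hχinv_right : ∀ y : ℝ, 0 ≤ y → 0 ≤ χinv y ∧ χinv y * ω (χinv y) = y)
    (hω_doubling : ∃ δ₀ : ℝ, 0 < δ₀ ∧ ∀ δ : ℝ, 0 < δ → δ < δ₀ → ω (2 * δ) < 2 * ω δ) :
    ∃ φ : ℝ → ℝ,
      (∀ t : ℝ, φ (t + 2 * Real.pi) = φ t) ∧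
      ContDiff ℝ 1 φ ∧
      (∃ C : ℝ, 0 < C ∧ ∀ s t : ℝ, |deriv φ s - deriv φ t| ≤ C * ω |s - t|) ∧
      -- φ is nowhere linear
      (∀ u v : ℝ, u < v → ¬ ∃ a b : ℝ, ∀ t ∈ Ioo u v, φ t = a * t + b) ∧
      -- (i) the A₁ = A estimate
      (∃ c : ℝ, 0 < c ∧ ∀ lam : ℝ, 2 ≤ |lam| →
        ApNorm 1 (fun t => Complex.exp (Complex.I * (lam : ℂ) * (φ t : ℂ))) ≤
          ENNReal.ofReal (c * (|lam| / Real.log |lam|) *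
            χinv ((Real.log |lam|) ^ 2 / |lam|))) ∧
      -- (ii) the A_p estimates, 1 < p < 2
      (∀ p : ℝ, 1 < p → p < 2 →
        ∃ c : ℝ, 0 < c ∧ ∀ lam : ℝ, 2 ≤ |lam| →
          ApNorm p (fun t => Complex.exp (Complex.I * (lam : ℂ) * (φ t : ℂ))) ≤
            ENNReal.ofReal (c * (∫ τ in (1:ℝ)..|lam|, (χinv (1 / τ)) ^ p) ^ (1 / p))) := by
  have h : IsModulus ω χinv :=
    ⟨hω_cont, hω_mono, hω_zero, hω_pos, hχ_mono, hχinv_left, hχinv_right⟩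
  obtain ⟨S, θ, hS⟩ := CantorScale.exists_isAdapted h hω_doubling
  obtain ⟨U, V, hlt, hU, hV, hUV⟩ := exists_seq_rat_intervals two_pi_pos
  obtain ⟨t, q, ρ, hB⟩ := S.exists_isPlacement h hlt hU hV
  have hderiv : deriv (S.periodicPhase t q) = S.periodicWave t q :=
    funext fun s ↦ (hB.hasDerivAt_periodicPhase s).deriv
  have hθ := hS.pos
  refine ⟨S.periodicPhase t q, hB.periodicPhase_periodic, hB.contDiff_periodicPhase,
    ⟨2 * (8 / θ + 2), by positivity, fun s t' ↦ ?_⟩,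
    fun u v huv ↦ hB.periodicPhase_not_affine hUV huv,
    hB.exists_apNorm_one_le h hS,
    fun p hp1 hp2 ↦ hB.exists_apNorm_le_integral h hS hp1 hp2.le⟩
  rw [hderiv]
  exact hB.abs_periodicWave_sub_le hS h s t'
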